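/- arXiv:2411.15088 — 3 statements merged into one kernel-verified Lean document; each statement's English description precedes it below -/
import Mathlib

section
/- The absolute values of the coefficients of the chromatic polynomial of a finite simple graph form a unimodal sequence: if G has n vertices, P_G(λ) = Σ_{i=0}^{n} c_{n−i} λ^{n−i}, and h_i = |c_{n−i}|, then there exists an index j with 0 ≤ j ≤ n such that h_0 ≤ h_1 ≤ … ≤ h_j and h_j ≥ h_{j+1} ≥ … ≥ h_n. -/
open Polynomial

/-- The number of proper colorings of the finite simple graph `G` with `k` colors. -/
def SimpleGraph.numColorings {V : Type*} [Fintype V] [DecidableEq V]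
    (G : SimpleGraph V) [DecidableRel G.Adj] (k : ℕ) : ℕ :=
  Fintype.card {f : V → Fin k // ∀ a b, G.Adj a b → f a ≠ f b}

namespace ChromUni

/-- reverse Cauchy-Schwarz from negativity on the orthogonal complement -/
lemma lg_core {ι : Type*} [Fintype ι] [DecidableEq ι] (B : Matrix ι ι ℝ) (hB : B.IsHermitian)
    (u : ι → ℝ) (hu : ∀ i, 0 < u i) (hBu : ∀ i, ∑ j, B i j * u j = u i)
    (hoff : ∀ i j, i ≠ j → 0 ≤ B i j)
    (conn : ∀ y : ι → ℝ, (∀ i j, 0 < B i j → y i = y j) → ∀ i j, y i = y j)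
    (hyp : ∀ z : ι → ℝ, ∑ i, z i * ∑ j, B i j * z j ≤ ∑ i, (∑ j, B i j * z j) ^ 2)
    (z : ι → ℝ) (hz : ∑ i, z i * u i = 0) : ∑ i, z i * ∑ j, B i j * z j ≤ 0 := by
  classical
  have hsym : ∀ i j, B i j = B j i := fun i j => by
    have := hB.apply i j
    simpa using this.symm
  -- the Dirichlet form identity
  have hdir : ∀ y : ι → ℝ, ∑ i, (u i * y i) * (u i * y i) - ∑ i, (u i * y i) * ∑ j, B i j * (u j * y j)
      = (1/2) * ∑ i, ∑ j, B i j * u i * u j * (y i - y j) ^ 2 := by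
    intro y
    have h1 : ∑ i, ∑ j, B i j * u i * u j * (y i) ^ 2 = ∑ i, (u i * y i) * (u i * y i) := by
      refine Finset.sum_congr rfl fun i _ => ?_
      calc _ = (u i * y i ^ 2) * ∑ j, B i j * u j := by
            rw [Finset.mul_sum]; exact Finset.sum_congr rfl fun j _ => by ring
        _ = _ := by rw [hBu]; ring
    have h2 : ∑ i, ∑ j, B i j * u i * u j * (y j) ^ 2 = ∑ i, (u i * y i) * (u i * y i) := by
      rw [← h1, Finset.sum_comm]
      refine Finset.sum_congr rfl fun i _ => Finset.sum_congr rfl fun j _ => ?_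
      rw [hsym j i]; ring
    have h3 : ∑ i, ∑ j, B i j * u i * u j * (y i * y j) = ∑ i, (u i * y i) * ∑ j, B i j * (u j * y j) := by
      refine Finset.sum_congr rfl fun i _ => ?_
      rw [Finset.mul_sum]; exact Finset.sum_congr rfl fun j _ => by ring
    have : ∑ i, ∑ j, B i j * u i * u j * (y i - y j) ^ 2 =
      ∑ i, ∑ j, B i j * u i * u j * (y i) ^ 2 + ∑ i, ∑ j, B i j * u i * u j * (y j) ^ 2
       - 2 * ∑ i, ∑ j, B i j * u i * u j * (y i * y j) := by
      simp only [Finset.mul_sum, ← Finset.sum_add_distrib, ← Finset.sum_sub_distrib]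
      exact Finset.sum_congr rfl fun i _ => Finset.sum_congr rfl fun j _ => by ring
    rw [this, h1, h2, h3]; ring
  have hnn : ∀ y : ι → ℝ, ∀ i j, 0 ≤ B i j * u i * u j * (y i - y j) ^ 2 := by
    intro y i j
    by_cases h : i = j
    · subst h; simp
    · have := hoff i j h
      have := hu i; have := hu j
      positivity
  -- eigenvectors
  have key : ∀ (lam : ℝ) (e : ι → ℝ), (∀ i, ∑ j, B i j * e j = lam * e i) → 0 < lam →
      (∑ i, e i * e i = 1) → ∑ i, e i * z i = 0 := by
    intro lam e he hl hn
    have a1 : ∑ i, e i * ∑ j, B i j * e j = lam := by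
      simp only [he]
      calc _ = lam * ∑ i, e i * e i := by
            rw [Finset.mul_sum]; exact Finset.sum_congr rfl fun j _ => by ring
        _ = _ := by rw [hn, mul_one]
    have a2 : ∑ i, (∑ j, B i j * e j)^2 = lam ^ 2 := by
      simp only [he]
      calc _ = lam ^ 2 * ∑ i, e i * e i := by
            rw [Finset.mul_sum]; exact Finset.sum_congr rfl fun j _ => by ring
        _ = _ := by rw [hn, mul_one]
    have a3 := hyp e
    rw [a1, a2] at a3
    have a4 : 1 ≤ lam := by nlinarith
    set y : ι → ℝ := fun i => e i / u i with hy
    have huy : ∀ i, u i * y i = e i := fun i => by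
      have := (hu i).ne'
      simp only [hy]; field_simp
    have a5 := hdir y
    simp only [huy] at a5
    rw [hn, a1] at a5
    have a6 : ∑ i, ∑ j, B i j * u i * u j * (y i - y j) ^ 2 = 0 :=
      le_antisymm (by linarith) (Finset.sum_nonneg fun i _ => Finset.sum_nonneg fun j _ => hnn y i j)
    have a7 : ∀ i j, y i = y j := by
      apply conn
      intro i j hij
      have b1 := (Finset.sum_eq_zero_iff_of_nonneg
        (fun i _ => Finset.sum_nonneg fun j _ => hnn y i j)).1 a6 i (Finset.mem_univ _)
      have b2 := (Finset.sum_eq_zero_iff_of_nonneg (fun j _ => hnn y i j)).1 b1 j (Finset.mem_univ _)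
      have := hu i; have := hu j
      have b3 : B i j * u i * u j ≠ 0 := by positivity
      have b4 := (mul_eq_zero.1 b2).resolve_left b3
      have b5 : y i - y j = 0 := by simpa using b4
      linarith
    rcases isEmpty_or_nonempty ι with h | ⟨⟨i0⟩⟩
    · simp
    · calc ∑ i, e i * z i = ∑ i, y i0 * (z i * u i) := by
            refine Finset.sum_congr rfl fun i _ => ?_
            rw [← huy i, a7 i i0]; ring
        _ = 0 := by rw [← Finset.mul_sum, hz, mul_zero]
  -- spectral decomposition
  set b := hB.eigenvectorBasis with hb
  let zz : EuclideanSpace ℝ ι := WithLp.toLp 2 z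
  have hexp : ∀ i, z i = ∑ k, inner ℝ (b k) zz * b k i := by
    intro i
    have := congrArg (fun v : EuclideanSpace ℝ ι => v i) (b.sum_repr' zz)
    simp only [WithLp.ofLp_sum, Finset.sum_apply, PiLp.smul_apply, smul_eq_mul] at this
    exact this.symm
  have hinner : ∀ k, inner ℝ (b k) zz = ∑ i, b k i * z i := by
    intro k
    simp [PiLp.inner_apply, zz, mul_comm]
  have heig : ∀ k i, ∑ j, B i j * b k j = hB.eigenvalues k * b k i := by
    intro k i
    have := congrFun (hB.mulVec_eigenvectorBasis k) i
    simpa [Matrix.mulVec, dotProduct] using this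
  have hnorm : ∀ k, ∑ i, b k i * b k i = 1 := by
    intro k
    have := b.orthonormal.1 k
    have h2 : inner ℝ (b k) (b k) = (1:ℝ) := by rw [real_inner_self_eq_norm_sq, this]; norm_num
    simpa only [PiLp.inner_apply, RCLike.inner_apply, conj_trivial] using h2
  have hBz : ∀ i, ∑ j, B i j * z j = ∑ k, inner ℝ (b k) zz * (hB.eigenvalues k * b k i) := by
    intro i
    calc ∑ j, B i j * z j = ∑ j, ∑ k, inner ℝ (b k) zz * (B i j * b k j) := by
          refine Finset.sum_congr rfl fun j _ => ?_
          rw [hexp j, Finset.mul_sum]; exact Finset.sum_congr rfl fun k _ => by ring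
      _ = _ := by
          rw [Finset.sum_comm]
          refine Finset.sum_congr rfl fun k _ => ?_
          rw [← Finset.mul_sum, heig]
  have hfin : ∑ i, z i * ∑ j, B i j * z j = ∑ k, hB.eigenvalues k * (inner ℝ (b k) zz)^2 := by
    simp only [hBz, Finset.mul_sum]
    rw [Finset.sum_comm]
    refine Finset.sum_congr rfl fun k _ => ?_
    calc _ = (inner ℝ (b k) zz * hB.eigenvalues k) * ∑ i, b k i * z i := by
          rw [Finset.mul_sum]; exact Finset.sum_congr rfl fun k _ => by ring
      _ = _ := by rw [← hinner]; ring
  rw [hfin]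
  refine Finset.sum_nonpos fun k _ => ?_
  by_cases hl : 0 < hB.eigenvalues k
  · have := key _ _ (heig k) hl (hnorm k)
    rw [hinner, this]; simp
  · have := sq_nonneg (inner ℝ (b k) zz)
    push Not at hl
    exact mul_nonpos_of_nonpos_of_nonneg hl this

lemma lg {ι : Type*} [Fintype ι] [DecidableEq ι] (A : ι → ι → ℝ) (hA : ∀ i j, A i j = A j i)
    (w : ι → ℝ) (hw : ∀ i, 0 < w i) (hAw : ∀ i, 0 < ∑ j, A i j * w j)
    (hoff : ∀ i j, i ≠ j → 0 ≤ A i j)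
    (conn : ∀ y : ι → ℝ, (∀ i j, 0 < A i j → y i = y j) → ∀ i j, y i = y j)
    (hyp : ∀ x : ι → ℝ, ∑ i, x i * ∑ j, A i j * x j ≤
      ∑ i, w i * (∑ j, A i j * x j) ^ 2 / (∑ j, A i j * w j))
    (x : ι → ℝ) : (∑ i, x i * ∑ j, A i j * x j) * (∑ i, w i * ∑ j, A i j * w j)
      ≤ (∑ i, x i * ∑ j, A i j * w j) ^ 2 := by
  classical
  rcases isEmpty_or_nonempty ι with h | hne
  · simp
  set s : ι → ℝ := fun i => Real.sqrt ((∑ j, A i j * w j) / w i) with hs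
  have hspos : ∀ i, 0 < s i := fun i => Real.sqrt_pos.2 (div_pos (hAw i) (hw i))
  have hs2 : ∀ i, s i ^ 2 = (∑ j, A i j * w j) / w i := fun i =>
    Real.sq_sqrt (div_pos (hAw i) (hw i)).le
  have hs2w : ∀ i, (∑ j, A i j * w j) = s i ^ 2 * w i := fun i => by
    rw [hs2]; have := (hw i).ne'; field_simp
  let B : Matrix ι ι ℝ := fun i j => A i j / (s i * s j)
  have hBdef : ∀ i j, B i j = A i j / (s i * s j) := fun _ _ => rfl
  have hBx : ∀ (x : ι → ℝ) i, ∑ j, B i j * (s j * x j) = (∑ j, A i j * x j) / s i := by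
    intro x i
    rw [Finset.sum_div]
    refine Finset.sum_congr rfl fun j _ => ?_
    rw [hBdef]
    have := (hspos i).ne'; have := (hspos j).ne'
    field_simp
  have hneg : ∀ x : ι → ℝ, ∑ i, x i * ∑ j, A i j * w j = 0 →
      ∑ i, x i * ∑ j, A i j * x j ≤ 0 := by
    intro x hx
    have := lg_core B (Matrix.IsHermitian.ext fun i j => by
        simp only [hBdef, hA j i, mul_comm (s j)]; simp) (fun i => s i * w i)
      (fun i => mul_pos (hspos i) (hw i))
      (fun i => by
        rw [hBx, hs2w]; have := (hspos i).ne'; field_simp)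
      (fun i j hij => div_nonneg (hoff i j hij) (mul_pos (hspos i) (hspos j)).le)
      (fun y hy => conn y fun i j hij => hy i j (div_pos hij (mul_pos (hspos i) (hspos j))))
      (fun z => by
        have h1 : ∀ i, z i = s i * (z i / s i) := fun i => by
          have := (hspos i).ne'; field_simp
        have h2 : ∀ i, ∑ j, B i j * z j = (∑ j, A i j * (z j / s j)) / s i := fun i => by
          rw [← hBx]; exact Finset.sum_congr rfl fun j _ => by rw [← h1]
        simp only [h2]
        have h3 := hyp (fun i => z i / s i)
        refine le_trans (le_of_eq ?_) (h3.trans (le_of_eq ?_))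
        · refine Finset.sum_congr rfl fun i _ => by ring
        · refine Finset.sum_congr rfl fun i _ => ?_
          rw [hs2w]
          have := (hspos i).ne'; have := (hw i).ne'
          field_simp)
      (fun i => s i * x i)
      (by
        rw [← hx]
        refine Finset.sum_congr rfl fun i _ => ?_
        rw [hs2w]; ring)
    refine le_trans (le_of_eq ?_) this
    refine Finset.sum_congr rfl fun i _ => ?_
    rw [hBx]
    have := (hspos i).ne'
    field_simp
  set W := ∑ i, w i * ∑ j, A i j * w j with hW
  have hWpos : 0 < W := Finset.sum_pos (fun i _ => mul_pos (hw i) (hAw i)) Finset.univ_nonempty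
  set L := ∑ i, x i * ∑ j, A i j * w j with hL
  have hL' : ∑ i, w i * ∑ j, A i j * x j = L := by
    simp only [hL, Finset.mul_sum]
    rw [Finset.sum_comm]
    refine Finset.sum_congr rfl fun i _ => Finset.sum_congr rfl fun j _ => ?_
    rw [hA j i]; ring
  have h := hneg (fun i => W * x i - L * w i) (by
    calc _ = W * ∑ i, x i * ∑ j, A i j * w j - L * ∑ i, w i * ∑ j, A i j * w j := by
          rw [Finset.mul_sum, Finset.mul_sum, ← Finset.sum_sub_distrib]
          exact Finset.sum_congr rfl fun i _ => by ring
      _ = 0 := by rw [← hL, ← hW]; ring)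
  have h2 : ∀ i, ∑ j, A i j * (W * x j - L * w j) = W * (∑ j, A i j * x j) - L * ∑ j, A i j * w j := by
    intro i
    rw [Finset.mul_sum, Finset.mul_sum, ← Finset.sum_sub_distrib]
    exact Finset.sum_congr rfl fun i _ => by ring
  simp only [h2] at h
  have h3 : ∑ i, (W * x i - L * w i) * (W * (∑ j, A i j * x j) - L * ∑ j, A i j * w j)
     = W * (W * ∑ i, x i * ∑ j, A i j * x j) - W * L * L - L * W * L + L * L * W := by
    calc _ = W * W * (∑ i, x i * ∑ j, A i j * x j) - W * L * (∑ i, x i * ∑ j, A i j * w j)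
        - L * W * (∑ i, w i * ∑ j, A i j * x j) + L * L * (∑ i, w i * ∑ j, A i j * w j) := by
          simp only [Finset.mul_sum (s := Finset.univ) (a := W * W),
            Finset.mul_sum (s := Finset.univ) (a := W * L),
            Finset.mul_sum (s := Finset.univ) (a := L * W),
            Finset.mul_sum (s := Finset.univ) (a := L * L)]
          rw [← Finset.sum_sub_distrib, ← Finset.sum_sub_distrib, ← Finset.sum_add_distrib]
          exact Finset.sum_congr rfl fun i _ => by ring
      _ = _ := by rw [hL', ← hL, ← hW]; ring
  rw [h3] at h
  nlinarith
end ChromUni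

namespace ChromUni

/-- A loopless matroid given by its rank function. -/
structure RankFn (E : Type*) [Fintype E] [DecidableEq E] where
  r : Finset E → ℕ
  empty : r ∅ = 0
  mono : ∀ S T, S ⊆ T → r S ≤ r T
  unit : ∀ i S, r (insert i S) ≤ r S + 1
  submod : ∀ S T, r (S ∪ T) + r (S ∩ T) ≤ r S + r T
  loopless : ∀ i, 0 < r {i}

namespace RankFn
variable {E : Type*} [Fintype E] [DecidableEq E] (M : RankFn E)

def Flat (F : Finset E) : Prop := ∀ i, i ∉ F → M.r F < M.r (insert i F)

def cl (S : Finset E) : Finset E := Finset.univ.filter (fun i => M.r (insert i S) = M.r S)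

open Classical in
noncomputable def mid (F G : Finset E) : Finset (Finset E) :=
  Finset.univ.filter (fun H => M.Flat H ∧ F ⊂ H ∧ H ⊂ G)

lemma mem_mid {F G H : Finset E} : H ∈ M.mid F G ↔ M.Flat H ∧ F ⊂ H ∧ H ⊂ G := by
  simp [mid]

lemma mem_cl {S : Finset E} {i : E} : i ∈ M.cl S ↔ M.r (insert i S) = M.r S := by
  simp [cl]

lemma subset_cl (S : Finset E) : S ⊆ M.cl S := by
  intro i hi
  rw [mem_cl, Finset.insert_eq_of_mem hi]

lemma r_union (S T : Finset E) (h : ∀ i ∈ T, M.r (insert i S) = M.r S) : M.r (S ∪ T) = M.r S := by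
  induction T using Finset.induction_on with
  | empty => simp
  | insert i T hi ih =>
    have h1 := ih (fun j hj => h j (Finset.mem_insert_of_mem hj))
    have h2 := M.submod (S ∪ T) (insert i S)
    have h3 : (S ∪ T) ∪ insert i S = S ∪ insert i T := by
      ext x; simp; tauto
    have h4 : M.r S ≤ M.r ((S ∪ T) ∩ insert i S) := M.mono _ _ (by
      intro x hx; simp [hx])
    have h5 := h i (Finset.mem_insert_self _ _)
    have h6 : M.r S ≤ M.r (S ∪ insert i T) := M.mono _ _ Finset.subset_union_left
    rw [h3] at h2
    omega

lemma r_cl (S : Finset E) : M.r (M.cl S) = M.r S := by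
  have := M.r_union S (M.cl S) (fun i hi => M.mem_cl.1 hi)
  rwa [Finset.union_eq_right.2 (M.subset_cl S)] at this

lemma flat_cl (S : Finset E) : M.Flat (M.cl S) := by
  intro i hi
  have h1 : M.r (insert i S) ≠ M.r S := fun h => hi (M.mem_cl.2 h)
  have h2 := M.mono S (insert i S) (Finset.subset_insert _ _)
  have h3 := M.mono (insert i S) (insert i (M.cl S)) (Finset.insert_subset_insert _ (M.subset_cl S))
  rw [r_cl]; omega

lemma flat_rank_lt {F G : Finset E} (hF : M.Flat F) (h : F ⊂ G) : M.r F < M.r G := by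
  obtain ⟨i, hi, hiF⟩ := Finset.exists_of_ssubset h
  exact lt_of_lt_of_le (hF i hiF)
    (M.mono _ _ (Finset.insert_subset hi h.subset))

lemma cl_subset {S F : Finset E} (hF : M.Flat F) (h : S ⊆ F) : M.cl S ⊆ F := by
  intro i hi
  by_contra hc
  have h1 := hF i hc
  have h2 := M.submod F (insert i S)
  have h3 : F ∪ insert i S = insert i F := by
    ext x
    have := @h x
    simp only [Finset.mem_union, Finset.mem_insert]
    tauto
  have h4 : M.r S ≤ M.r (F ∩ insert i S) := M.mono _ _ (by
    intro x hx; simp [hx, h hx])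
  rw [M.mem_cl] at hi
  rw [h3] at h2
  omega

/-- a flat containing `S` of the same rank is the closure of `S` -/
lemma eq_cl {S F : Finset E} (hF : M.Flat F) (h : S ⊆ F) (hr : M.r F = M.r S) : F = M.cl S := by
  have h1 := M.cl_subset hF h
  by_contra hc
  have := M.flat_rank_lt (M.flat_cl S) (Finset.ssubset_iff_subset_ne.2 ⟨h1, fun h => hc h.symm⟩)
  rw [r_cl] at this
  omega

lemma r_insert {F : Finset E} (hF : M.Flat F) {i : E} (hi : i ∉ F) :
    M.r (insert i F) = M.r F + 1 := le_antisymm (M.unit _ _) (hF i hi)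

lemma flat_empty : M.Flat ∅ := by
  intro i _
  have := M.loopless i
  simpa [M.empty] using this

lemma flat_univ : M.Flat Finset.univ := fun i hi => absurd (Finset.mem_univ i) hi

lemma r_zero {S : Finset E} (h : M.r S = 0) : S = ∅ := by
  by_contra hc
  obtain ⟨i, hi⟩ := Finset.nonempty_iff_ne_empty.2 hc
  have := M.mono {i} S (by simpa using hi)
  have := M.loopless i
  omega

/-- the cover of `F` through `i` -/
lemma cover_mem {F G : Finset E} (hF : M.Flat F) (hG : M.Flat G) (hFG : F ⊂ G) {i : E}
    (hi : i ∈ G) (hiF : i ∉ F) (hr : M.r F + 2 ≤ M.r G) :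
    M.cl (insert i F) ∈ M.mid F G ∧ M.r (M.cl (insert i F)) = M.r F + 1 ∧ i ∈ M.cl (insert i F) := by
  have h0 : M.r (M.cl (insert i F)) = M.r F + 1 := by rw [r_cl, M.r_insert hF hiF]
  have h1 : i ∈ M.cl (insert i F) := M.subset_cl _ (Finset.mem_insert_self _ _)
  have h2 : M.cl (insert i F) ⊆ G := M.cl_subset hG (Finset.insert_subset hi hFG.subset)
  refine ⟨M.mem_mid.2 ⟨M.flat_cl _, ?_, ?_⟩, h0, h1⟩
  · refine Finset.ssubset_iff_subset_ne.2
      ⟨(Finset.subset_insert _ _).trans (M.subset_cl _), fun h => hiF ?_⟩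
    rw [h]; exact h1
  · refine Finset.ssubset_iff_subset_ne.2 ⟨h2, fun h => ?_⟩
    rw [h] at h0; omega

lemma cover_unique {F H : Finset E} (hF : M.Flat F) (hH : M.Flat H) (hFH : F ⊆ H) {i : E}
    (hi : i ∈ H) (hiF : i ∉ F) (hr : M.r H = M.r F + 1) : H = M.cl (insert i F) :=
  M.eq_cl hH (Finset.insert_subset hi hFH) (by rw [M.r_insert hF hiF, hr])

lemma mid_rank {F G H : Finset E} (hF : M.Flat F) (h : H ∈ M.mid F G) :
    M.r F < M.r H ∧ M.r H < M.r G := by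
  rw [mem_mid] at h
  exact ⟨M.flat_rank_lt hF h.2.1, M.flat_rank_lt h.1 h.2.2⟩

/-- sums over covers of `F` through `j` -/
lemma sum_cover {F G : Finset E} (hF : M.Flat F) (hG : M.Flat G) (hFG : F ⊂ G) {j : E}
    (hj : j ∈ G) (hjF : j ∉ F) (hr : M.r F + 2 ≤ M.r G) {R : Type*} [AddCommMonoid R] (f : Finset E → R)
    (hf : ∀ H ∈ M.mid F G, j ∈ H → M.r H ≠ M.r F + 1 → f H = 0) :
    ∑ H ∈ M.mid F G, (if j ∈ H then f H else 0) = f (M.cl (insert j F)) := by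
  obtain ⟨h1, h2, h3⟩ := M.cover_mem hF hG hFG hj hjF hr
  rw [Finset.sum_eq_single_of_mem _ h1]
  · simp [h3]
  · intro H hH hne
    split_ifs with hjH
    · apply hf H hH hjH
      intro hc
      exact hne (M.cover_unique hF (M.mem_mid.1 hH).1 (M.mem_mid.1 hH).2.1.subset hjH hjF hc)
    · rfl

/-- truncation -/
def trunc (k : ℕ) (hk : 0 < k) : RankFn E where
  r S := min (M.r S) k
  empty := by simp [M.empty]
  mono S T h := by have := M.mono S T h; omega
  unit i S := by have := M.unit i S; omega
  submod S T := by
    have := M.submod S T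
    have := M.mono _ _ (Finset.subset_union_left (s₁ := S) (s₂ := T))
    have := M.mono _ _ (Finset.subset_union_right (s₁ := S) (s₂ := T))
    have := M.mono _ _ (Finset.inter_subset_left (s₁ := S) (s₂ := T))
    have := M.mono _ _ (Finset.inter_subset_right (s₁ := S) (s₂ := T))
    omega
  loopless i := by have := M.loopless i; omega

end RankFn
end ChromUni

namespace ChromUni
namespace RankFn
variable {E : Type*} [Fintype E] [DecidableEq E] (M : RankFn E)

/-- the chosen element of `G \ F` lies in `H` -/
def Pk (F G H : Finset E) : Prop := ∃ h : (G \ F).Nonempty, h.choose ∈ H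

open Classical in
noncomputable def pol (F G : Finset E) : MvPolynomial (Finset E) ℝ :=
  if M.r G ≤ M.r F + 1 then 1 else
    MvPolynomial.C (((M.r G : ℝ) - M.r F - 1)⁻¹) * ∑ H ∈ (M.mid F G).attach,
      (MvPolynomial.X H.1 - if Pk F G H.1 then MvPolynomial.X G else MvPolynomial.X F)
        * (pol F H.1 * pol H.1 G)
termination_by G.card - F.card
decreasing_by
  · have h := M.mem_mid.1 H.2
    have h1 := Finset.card_lt_card h.2.1
    have h2 := Finset.card_lt_card h.2.2
    omega
  · have h := M.mem_mid.1 H.2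
    have h1 := Finset.card_lt_card h.2.1
    have h2 := Finset.card_lt_card h.2.2
    omega

lemma pol_one {F G : Finset E} (h : M.r G ≤ M.r F + 1) : M.pol F G = 1 := by
  rw [pol, if_pos h]

/-- normalised variable -/
noncomputable def tau (F G : Finset E) (i : E) (H : Finset E) : MvPolynomial (Finset E) ℝ :=
  MvPolynomial.X H - MvPolynomial.X F
    - (if i ∈ H then (MvPolynomial.X G - MvPolynomial.X F) else 0)

lemma pol_rec {F G : Finset E} (hFG : F ⊂ G) (h : M.r F + 2 ≤ M.r G) :
    ∃ i ∈ G, i ∉ F ∧ MvPolynomial.C ((M.r G : ℝ) - M.r F - 1) * M.pol F G =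
      ∑ H ∈ M.mid F G, tau F G i H * (M.pol F H * M.pol H G) := by
  classical
  have hne : (G \ F).Nonempty := by
    obtain ⟨i, hi, hiF⟩ := Finset.exists_of_ssubset hFG
    exact ⟨i, by simp [hi, hiF]⟩
  have hm := hne.choose_spec
  rw [Finset.mem_sdiff] at hm
  refine ⟨hne.choose, hm.1, hm.2, ?_⟩
  rw [pol, if_neg (by omega), ← mul_assoc, ← MvPolynomial.C_mul]
  have h0 : ((M.r G : ℝ) - M.r F - 1) ≠ 0 := by
    have : (M.r F : ℝ) + 2 ≤ M.r G := by exact_mod_cast h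
    intro hc; linarith
  rw [mul_inv_cancel₀ h0, MvPolynomial.C_1, one_mul]
  rw [Finset.sum_attach (M.mid F G) (fun H => (MvPolynomial.X H -
    if Pk F G H then MvPolynomial.X G else MvPolynomial.X F) * (M.pol F H * M.pol H G))]
  refine Finset.sum_congr rfl fun H _ => ?_
  congr 1
  have : Pk F G H ↔ hne.choose ∈ H := ⟨fun ⟨_, h⟩ => h, fun h => ⟨hne, h⟩⟩
  simp only [this, tau]
  split_ifs <;> ring

structure Good (F G : Finset E) (e : ℝ) (g : MvPolynomial (Finset E) ℝ) : Prop where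
  vars : ∀ S, ¬ (M.Flat S ∧ F ⊆ S ∧ S ⊆ G) → MvPolynomial.pderiv S g = 0
  euler : ∑ S, MvPolynomial.X S * MvPolynomial.pderiv S g = MvPolynomial.C e * g
  m0 : ∑ S, MvPolynomial.pderiv S g = 0
  m1 : ∀ j, ∑ S, (if j ∈ S then MvPolynomial.pderiv S g else 0) = 0

variable {M}

lemma Good.one (F G : Finset E) : M.Good F G 0 1 := by
  constructor <;> simp

lemma Good.mul {F H G : Finset E} {a b : ℝ} {g h : MvPolynomial (Finset E) ℝ}
    (hg : M.Good F H a g) (hh : M.Good H G b h) (h1 : F ⊆ H) (h2 : H ⊆ G) :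
    M.Good F G (a + b) (g * h) := by
  have hl : ∀ S, MvPolynomial.pderiv S (g * h) =
      MvPolynomial.pderiv S g * h + g * MvPolynomial.pderiv S h := fun S => by
    rw [MvPolynomial.pderiv_mul]
  constructor
  · intro S hS
    rw [hl, hg.vars S (fun hc => hS ⟨hc.1, hc.2.1, hc.2.2.trans h2⟩),
      hh.vars S (fun hc => hS ⟨hc.1, h1.trans hc.2.1, hc.2.2⟩)]
    ring
  · calc _ = (∑ S, MvPolynomial.X S * MvPolynomial.pderiv S g) * h
          + g * ∑ S, MvPolynomial.X S * MvPolynomial.pderiv S h := by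
          rw [Finset.sum_mul, Finset.mul_sum, ← Finset.sum_add_distrib]
          exact Finset.sum_congr rfl fun S _ => by rw [hl]; ring
      _ = _ := by rw [hg.euler, hh.euler, MvPolynomial.C_add]; ring
  · simp only [hl]
    rw [Finset.sum_add_distrib, ← Finset.sum_mul, ← Finset.mul_sum, hg.m0, hh.m0]; ring
  · intro j
    calc _ = (∑ S, if j ∈ S then MvPolynomial.pderiv S g else 0) * h
          + g * ∑ S, (if j ∈ S then MvPolynomial.pderiv S h else 0) := by
          rw [Finset.sum_mul, Finset.mul_sum, ← Finset.sum_add_distrib]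
          exact Finset.sum_congr rfl fun S _ => by split_ifs <;> simp [hl]
      _ = _ := by rw [hg.m1, hh.m1]; ring

lemma pderiv_comm (S T : Finset E) (g : MvPolynomial (Finset E) ℝ) :
    MvPolynomial.pderiv S (MvPolynomial.pderiv T g) = MvPolynomial.pderiv T (MvPolynomial.pderiv S g) := by
  have h : ⁅(MvPolynomial.pderiv S : Derivation ℝ (MvPolynomial (Finset E) ℝ) (MvPolynomial (Finset E) ℝ)),
      (MvPolynomial.pderiv T : Derivation ℝ (MvPolynomial (Finset E) ℝ) (MvPolynomial (Finset E) ℝ))⁆ = 0 := by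
    apply MvPolynomial.derivation_ext
    intro i
    rw [Derivation.commutator_apply]
    simp only [MvPolynomial.pderiv_X, Pi.single_apply]
    split_ifs <;> simp
  have := congrArg (fun D : Derivation ℝ (MvPolynomial (Finset E) ℝ) (MvPolynomial (Finset E) ℝ) => D g) h
  simp only [Derivation.commutator_apply] at this
  exact sub_eq_zero.1 this

lemma Good.deriv {F G : Finset E} {e : ℝ} {g : MvPolynomial (Finset E) ℝ}
    (hg : M.Good F G e g) (T : Finset E) : M.Good F G (e - 1) (MvPolynomial.pderiv T g) := by
  constructor
  · intro S hS
    rw [pderiv_comm, hg.vars S hS, map_zero]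
  · have := congrArg (MvPolynomial.pderiv T) hg.euler
    rw [map_sum] at this
    simp only [MvPolynomial.pderiv_mul, Finset.sum_add_distrib, MvPolynomial.pderiv_X,
      MvPolynomial.pderiv_C] at this
    have h2 : ∑ S, (Pi.single T 1 : Finset E → MvPolynomial (Finset E) ℝ) S * MvPolynomial.pderiv S g = MvPolynomial.pderiv T g := by
      simp [Pi.single_apply]
    simp only [h2] at this
    simp only [pderiv_comm _ T, MvPolynomial.C_sub, MvPolynomial.C_1]
    linear_combination this
  · simp only [pderiv_comm _ T]
    rw [← map_sum, hg.m0, map_zero]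
  · intro j
    have := congrArg (MvPolynomial.pderiv T) (hg.m1 j)
    rw [map_sum, map_zero] at this
    refine Eq.trans ?_ this
    exact Finset.sum_congr rfl fun S _ => by split_ifs <;> simp [pderiv_comm S T]

/-- sums of derivatives reduce to the proper middle flats -/
lemma Good.sum_mid {F G : Finset E} {e : ℝ} {g : MvPolynomial (Finset E) ℝ}
    (hg : M.Good F G e g) (c : Finset E → MvPolynomial (Finset E) ℝ) (hF : c F = 0) (hG : c G = 0) :
    ∑ H ∈ M.mid F G, c H * MvPolynomial.pderiv H g = ∑ S, c S * MvPolynomial.pderiv S g := by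
  refine Finset.sum_subset (Finset.subset_univ _) fun S _ hS => ?_
  rw [M.mem_mid] at hS
  by_cases h1 : S = F
  · subst h1; rw [hF, zero_mul]
  by_cases h2 : S = G
  · subst h2; rw [hG, zero_mul]
  rw [hg.vars S, mul_zero]
  rintro ⟨a, b, c⟩
  exact hS ⟨a, Finset.ssubset_iff_subset_ne.2 ⟨b, Ne.symm h1⟩, Finset.ssubset_iff_subset_ne.2 ⟨c, h2⟩⟩

lemma tau_left {F G : Finset E} {i : E} (hi : i ∉ F) : tau F G i F = 0 := by simp [tau, hi]
lemma tau_right {F G : Finset E} {i : E} (hi : i ∈ G) : tau F G i G = 0 := by simp [tau, hi]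

lemma Good.em {F G : Finset E} {e : ℝ} {g : MvPolynomial (Finset E) ℝ}
    (hg : M.Good F G e g) {i : E} (hi : i ∈ G) (hiF : i ∉ F) :
    ∑ H ∈ M.mid F G, tau F G i H * MvPolynomial.pderiv H g = MvPolynomial.C e * g := by
  rw [hg.sum_mid _ (tau_left hiF) (tau_right hi), ← hg.euler]
  have h1 := hg.m0
  have h2 := hg.m1 i
  calc _ = ∑ S, MvPolynomial.X S * MvPolynomial.pderiv S g
      - MvPolynomial.X F * ∑ S, MvPolynomial.pderiv S g
      - (MvPolynomial.X G - MvPolynomial.X F) * ∑ S, (if i ∈ S then MvPolynomial.pderiv S g else 0) := by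
        simp only [Finset.mul_sum, ← Finset.sum_sub_distrib]
        exact Finset.sum_congr rfl fun S _ => by simp only [tau]; split_ifs <;> ring
    _ = _ := by rw [h1, h2]; ring

lemma pderiv_tau (F G H S : Finset E) (i : E) : MvPolynomial.pderiv S (tau F G i H) =
      (if H = S then 1 else 0) - (if F = S then 1 else 0)
      - (if i ∈ H then ((if G = S then 1 else 0) - (if F = S then 1 else 0)) else 0) := by
  have hX : ∀ K : Finset E, MvPolynomial.pderiv S (MvPolynomial.X K : MvPolynomial (Finset E) ℝ)
      = if K = S then 1 else 0 := by
    intro K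
    rw [MvPolynomial.pderiv_X, Pi.single_apply]
  by_cases h : i ∈ H
  · simp only [tau, map_sub, hX, if_pos h]
  · simp only [tau, map_sub, hX, if_neg h, map_zero]

variable (M)
set_option maxHeartbeats 2000000 in
/-- The structure theorem for the volume polynomials. -/
theorem pol_spec : ∀ (n : ℕ) (F G : Finset E), G.card - F.card ≤ n → M.Flat F → M.Flat G → F ⊂ G →
    M.Good F G ((M.r G : ℝ) - M.r F - 1) (M.pol F G) ∧
    ∀ K ∈ M.mid F G, MvPolynomial.pderiv K (M.pol F G) = M.pol F K * M.pol K G := by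
  intro n
  induction n with
  | zero =>
    intro F G hn _ _ h
    have := Finset.card_lt_card h
    omega
  | succ n ih =>
  intro F G hn hF hG hFG
  by_cases hr : M.r G ≤ M.r F + 1
  · have h1 := M.flat_rank_lt hF hFG
    have h2 : M.r G = M.r F + 1 := by omega
    constructor
    · rw [M.pol_one hr, h2]
      have := Good.one (M := M) F G
      convert this using 1
      push_cast; ring
    · intro K hK
      have := M.mid_rank hF hK
      omega
  push Not at hr
  obtain ⟨i, hi, hiF, hrec⟩ := M.pol_rec hFG hr
  -- abbreviations
  set d : ℝ := (M.r G : ℝ) - M.r F - 1 with hd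
  have hdpos : 0 < d := by
    have : (M.r F : ℝ) + 2 ≤ M.r G := by exact_mod_cast hr
    rw [hd]; linarith
  have hCd : (MvPolynomial.C d : MvPolynomial (Finset E) ℝ) ≠ 0 := by
    rw [Ne, MvPolynomial.C_eq_zero]; exact hdpos.ne'
  set q : Finset E → MvPolynomial (Finset E) ℝ := fun H => M.pol F H * M.pol H G with hq
  have ihL : ∀ H ∈ M.mid F G, M.Good F H ((M.r H : ℝ) - M.r F - 1) (M.pol F H) ∧
      ∀ K ∈ M.mid F H, MvPolynomial.pderiv K (M.pol F H) = M.pol F K * M.pol K H := by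
    intro H hH
    rw [M.mem_mid] at hH
    have h1 := Finset.card_lt_card hH.2.1
    have h2 := Finset.card_lt_card hH.2.2
    exact ih F H (by omega) hF hH.1 hH.2.1
  have ihR : ∀ H ∈ M.mid F G, M.Good H G ((M.r G : ℝ) - M.r H - 1) (M.pol H G) ∧
      ∀ K ∈ M.mid H G, MvPolynomial.pderiv K (M.pol H G) = M.pol H K * M.pol K G := by
    intro H hH
    rw [M.mem_mid] at hH
    have h1 := Finset.card_lt_card hH.2.1
    have h2 := Finset.card_lt_card hH.2.2
    exact ih H G (by omega) hH.1 hG hH.2.2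
  have hgood : ∀ H ∈ M.mid F G, M.Good F G (d - 1) (q H) := by
    intro H hH
    have h0 := M.mem_mid.1 hH
    have := (ihL H hH).1.mul (ihR H hH).1 h0.2.1.subset h0.2.2.subset
    convert this using 1
    rw [hd]; ring
  have hlt : ∀ H ∈ M.mid F G, ∀ K ∈ M.mid F G, H ⊂ K →
      MvPolynomial.pderiv K (q H) = MvPolynomial.pderiv H (q K) := by
    intro H hH K hK hHK
    have h1 := M.mem_mid.1 hH
    have h2 := M.mem_mid.1 hK
    simp only [hq, MvPolynomial.pderiv_mul]
    rw [(ihL H hH).1.vars K (fun hc => hHK.not_subset hc.2.2),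
      (ihR H hH).2 K (M.mem_mid.2 ⟨h2.1, hHK, h2.2.2⟩),
      (ihR K hK).1.vars H (fun hc => hHK.not_subset hc.2.1),
      (ihL K hK).2 H (M.mem_mid.2 ⟨h1.1, h1.2.1, hHK⟩)]
    ring
  have hsymm : ∀ H ∈ M.mid F G, ∀ K ∈ M.mid F G,
      MvPolynomial.pderiv K (q H) = MvPolynomial.pderiv H (q K) := by
    intro H hH K hK
    by_cases h0 : H = K
    · rw [h0]
    by_cases h1 : H ⊆ K
    · exact hlt H hH K hK (Finset.ssubset_iff_subset_ne.2 ⟨h1, h0⟩)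
    by_cases h2 : K ⊆ H
    · exact (hlt K hK H hH (Finset.ssubset_iff_subset_ne.2 ⟨h2, Ne.symm h0⟩)).symm
    · simp only [hq, MvPolynomial.pderiv_mul]
      rw [(ihL H hH).1.vars K (fun hc => h2 hc.2.2), (ihR H hH).1.vars K (fun hc => h1 hc.2.1),
        (ihL K hK).1.vars H (fun hc => h1 hc.2.2), (ihR K hK).1.vars H (fun hc => h2 hc.2.1)]
      ring
  -- the derivative of `d * pol`
  have hder : ∀ S, MvPolynomial.C d * MvPolynomial.pderiv S (M.pol F G) =
      ∑ H ∈ M.mid F G, (MvPolynomial.pderiv S (tau F G i H) * q H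
        + tau F G i H * MvPolynomial.pderiv S (q H)) := by
    intro S
    have := congrArg (MvPolynomial.pderiv S) hrec
    rw [MvPolynomial.pderiv_C_mul, map_sum] at this
    rw [this]
    exact Finset.sum_congr rfl fun H _ => by rw [MvPolynomial.pderiv_mul]
  -- explicit derivative of tau
  have htau : ∀ S H, MvPolynomial.pderiv S (tau F G i H) =
      (if H = S then 1 else 0) - (if F = S then 1 else 0)
      - (if i ∈ H then ((if G = S then 1 else 0) - (if F = S then 1 else 0)) else 0) := by
    intro S H
    exact pderiv_tau F G H S i
  have hK : ∀ K ∈ M.mid F G, MvPolynomial.pderiv K (M.pol F G) = q K := by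
    intro K hK
    have hK' := M.mem_mid.1 hK
    have e1 : F ≠ K := hK'.2.1.ne
    have e2 : G ≠ K := hK'.2.2.ne.symm
    have h1 := hder K
    simp only [htau, if_neg e1, if_neg e2] at h1
    rw [Finset.sum_add_distrib] at h1
    have h2 : ∑ H ∈ M.mid F G, tau F G i H * MvPolynomial.pderiv K (q H) = MvPolynomial.C (d - 1) * q K := by
      rw [← (hgood K hK).em hi hiF]
      exact Finset.sum_congr rfl fun H hH => by rw [hsymm H hH K hK]
    rw [h2] at h1
    simp [hK] at h1
    apply mul_left_cancel₀ hCd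
    rw [h1]; ring
  have hbal : ∀ j ∈ G, j ∉ F → ∑ H ∈ M.mid F G, (if j ∈ H then q H else 0)
      = ∑ H ∈ M.mid F G, (if i ∈ H then q H else 0) := by
    intro j hj hjF
    by_cases hr2 : M.r G = M.r F + 2
    · have hq1 : ∀ H ∈ M.mid F G, q H = 1 := by
        intro H hH
        have := M.mid_rank hF hH
        simp only [hq]
        rw [M.pol_one (by omega), M.pol_one (by omega), one_mul]
      have : ∀ j ∈ G, j ∉ F → ∑ H ∈ M.mid F G, (if j ∈ H then q H else 0) = 1 := by
        intro j hj hjF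
        rw [M.sum_cover hF hG hFG hj hjF hr, hq1 _ (M.cover_mem hF hG hFG hj hjF hr).1]
        intro H hH _ hne
        have := M.mid_rank hF hH
        omega
      rw [this j hj hjF, this i hi hiF]
    · set c : Finset E → MvPolynomial (Finset E) ℝ :=
        fun S => (if j ∈ S then 1 else 0) - (if i ∈ S then 1 else 0) with hc
      have hC1 : (MvPolynomial.C (d - 1) : MvPolynomial (Finset E) ℝ) ≠ 0 := by
        rw [Ne, MvPolynomial.C_eq_zero]
        have : (M.r F : ℝ) + 3 ≤ M.r G := by
          have : M.r F + 3 ≤ M.r G := by omega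
          exact_mod_cast this
        rw [hd]; intro h; linarith
      have h1 : MvPolynomial.C (d - 1) * ∑ H ∈ M.mid F G, c H * q H = 0 := by
        calc _ = ∑ H ∈ M.mid F G, ∑ K ∈ M.mid F G, c H * (tau F G i K * MvPolynomial.pderiv K (q H)) := by
              rw [Finset.mul_sum]
              refine Finset.sum_congr rfl fun H hH => ?_
              rw [← Finset.mul_sum, (hgood H hH).em hi hiF]; ring
          _ = ∑ K ∈ M.mid F G, tau F G i K * ∑ H ∈ M.mid F G, c H * MvPolynomial.pderiv H (q K) := by
              rw [Finset.sum_comm]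
              refine Finset.sum_congr rfl fun K hK => ?_
              rw [Finset.mul_sum]
              refine Finset.sum_congr rfl fun H hH => ?_
              rw [hsymm H hH K hK]; ring
          _ = 0 := by
              refine Finset.sum_eq_zero fun K hK => ?_
              rw [(hgood K hK).sum_mid c (by simp [hc, hiF, hjF]) (by simp [hc, hi, hj])]
              have a1 := (hgood K hK).m1 i
              have a2 := (hgood K hK).m1 j
              have : ∑ S, c S * MvPolynomial.pderiv S (q K) =
                  ∑ S, (if j ∈ S then MvPolynomial.pderiv S (q K) else 0)
                  - ∑ S, (if i ∈ S then MvPolynomial.pderiv S (q K) else 0) := by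
                rw [← Finset.sum_sub_distrib]
                refine Finset.sum_congr rfl fun S _ => ?_
                simp only [hc, sub_mul, ite_mul, one_mul, zero_mul]
              rw [this, a1, a2]; ring
      have h2 := (mul_eq_zero.1 h1).resolve_left hC1
      have h3 : ∑ H ∈ M.mid F G, c H * q H = ∑ H ∈ M.mid F G, (if j ∈ H then q H else 0)
          - ∑ H ∈ M.mid F G, (if i ∈ H then q H else 0) := by
        rw [← Finset.sum_sub_distrib]
        refine Finset.sum_congr rfl fun S _ => ?_
        simp only [hc, sub_mul, ite_mul, one_mul, zero_mul]
      rw [h3] at h2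
      exact sub_eq_zero.1 h2
  refine ⟨⟨?_, ?_, ?_, ?_⟩, hK⟩
  · intro S hS
    apply mul_left_cancel₀ hCd
    rw [hder, mul_zero]
    refine Finset.sum_eq_zero fun H hH => ?_
    have hH' := M.mem_mid.1 hH
    have n1 : H ≠ S := by
      rintro rfl; exact hS ⟨hH'.1, hH'.2.1.subset, hH'.2.2.subset⟩
    have n2 : F ≠ S := by
      rintro rfl; exact hS ⟨hF, le_rfl, hFG.subset⟩
    have n3 : G ≠ S := by
      rintro rfl; exact hS ⟨hG, hFG.subset, le_rfl⟩
    rw [(hgood H hH).vars S hS, htau, if_neg n1, if_neg n2, if_neg n3]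
    simp
  · apply mul_left_cancel₀ hCd
    rw [Finset.mul_sum]
    calc _ = ∑ S, ∑ H ∈ M.mid F G, (MvPolynomial.X S * MvPolynomial.pderiv S (tau F G i H) * q H
        + tau F G i H * (MvPolynomial.X S * MvPolynomial.pderiv S (q H))) := by
          refine Finset.sum_congr rfl fun S _ => ?_
          rw [mul_left_comm, hder, Finset.mul_sum]
          exact Finset.sum_congr rfl fun H _ => by ring
      _ = ∑ H ∈ M.mid F G, MvPolynomial.C d * (tau F G i H * q H) := by
          rw [Finset.sum_comm]
          refine Finset.sum_congr rfl fun H hH => ?_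
          rw [Finset.sum_add_distrib, ← Finset.sum_mul, ← Finset.mul_sum, (hgood H hH).euler]
          have : ∑ S, MvPolynomial.X S * MvPolynomial.pderiv S (tau F G i H) = tau F G i H := by
            have hx : ∀ K : Finset E, ∑ S : Finset E, (MvPolynomial.X S : MvPolynomial (Finset E) ℝ)
                * (if K = S then 1 else 0) = MvPolynomial.X K := by
              intro K; simp
            by_cases a : i ∈ H
            · simp only [htau]
              simp only [tau, if_pos a, mul_sub, Finset.sum_sub_distrib, hx]
            · simp only [htau]
              simp only [tau, if_neg a, mul_sub, Finset.sum_sub_distrib, hx, mul_zero,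
                Finset.sum_const_zero]
          rw [this, MvPolynomial.C_sub, MvPolynomial.C_1]; ring
      _ = _ := by rw [← Finset.mul_sum, ← hrec]
  · apply mul_left_cancel₀ hCd
    rw [Finset.mul_sum]
    simp only [hder]
    rw [Finset.sum_comm, mul_zero]
    refine Finset.sum_eq_zero fun H hH => ?_
    rw [Finset.sum_add_distrib, ← Finset.sum_mul, ← Finset.mul_sum, (hgood H hH).m0]
    have : ∑ S, MvPolynomial.pderiv S (tau F G i H) = 0 := by
      simp only [htau]
      split_ifs <;> simp [Finset.sum_sub_distrib]
    rw [this]; ring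
  · intro j
    apply mul_left_cancel₀ hCd
    rw [Finset.mul_sum, mul_zero]
    have h1 : ∀ H ∈ M.mid F G, ∑ S, (if j ∈ S then MvPolynomial.pderiv S (tau F G i H) else 0)
        = (if j ∈ H then 1 else 0) - (if j ∈ F then 1 else 0)
          - (if i ∈ H then ((if j ∈ G then 1 else 0) - (if j ∈ F then 1 else 0)) else 0) := by
      intro H _
      have : ∀ K : Finset E, ∑ S : Finset E, (if j ∈ S then (if K = S then (1 : MvPolynomial (Finset E) ℝ) else 0) else 0)
          = if j ∈ K then 1 else 0 := by
        intro K
        rw [Finset.sum_eq_single K]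
        · simp
        · intro b _ hb; simp [Ne.symm hb]
        · simp
      have h2 : ∀ S : Finset E, (if j ∈ S then MvPolynomial.pderiv S (tau F G i H) else 0) =
          (if j ∈ S then (if H = S then (1 : MvPolynomial (Finset E) ℝ) else 0) else 0)
          - (if j ∈ S then (if F = S then (1 : MvPolynomial (Finset E) ℝ) else 0) else 0)
          - (if i ∈ H then ((if j ∈ S then (if G = S then (1 : MvPolynomial (Finset E) ℝ) else 0) else 0)
            - (if j ∈ S then (if F = S then (1 : MvPolynomial (Finset E) ℝ) else 0) else 0)) else 0) := by
        intro S
        rw [htau]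
        by_cases a : j ∈ S <;> simp [a]
      simp only [h2, Finset.sum_sub_distrib, this]
      by_cases a : i ∈ H <;> simp [a, Finset.sum_sub_distrib, this]
    calc _ = ∑ S, ∑ H ∈ M.mid F G, ((if j ∈ S then MvPolynomial.pderiv S (tau F G i H) else 0) * q H
        + tau F G i H * (if j ∈ S then MvPolynomial.pderiv S (q H) else 0)) := by
          refine Finset.sum_congr rfl fun S _ => ?_
          split_ifs
          · rw [hder]
          · simp
      _ = ∑ H ∈ M.mid F G, ((if j ∈ H then 1 else 0) - (if j ∈ F then 1 else 0)
          - (if i ∈ H then ((if j ∈ G then 1 else 0) - (if j ∈ F then 1 else 0)) else 0)) * q H := by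
          rw [Finset.sum_comm]
          refine Finset.sum_congr rfl fun H hH => ?_
          rw [Finset.sum_add_distrib, ← Finset.sum_mul, ← Finset.mul_sum, (hgood H hH).m1, h1 H hH]
          ring
      _ = 0 := by
          by_cases a : j ∈ F
          · refine Finset.sum_eq_zero fun H hH => ?_
            have hH' := M.mem_mid.1 hH
            simp [a, hH'.2.1.subset a, hFG.subset a]
          by_cases b : j ∈ G
          · have := hbal j b a
            simp only [a, b, if_true, if_false, sub_zero]
            simp only [sub_mul, ite_mul, one_mul, zero_mul, Finset.sum_sub_distrib]
            rw [this]; ring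
          · refine Finset.sum_eq_zero fun H hH => ?_
            have hH' := M.mem_mid.1 hH
            have : j ∉ H := fun h => b (hH'.2.2.subset h)
            simp [a, b, this]

variable {M}
lemma pol_good {F G : Finset E} (hF : M.Flat F) (hG : M.Flat G) (h : F ⊂ G) :
    M.Good F G ((M.r G : ℝ) - M.r F - 1) (M.pol F G) := (M.pol_spec _ F G le_rfl hF hG h).1

lemma pol_deriv {F G : Finset E} (hF : M.Flat F) (hG : M.Flat G) (h : F ⊂ G) {K : Finset E}
    (hK : K ∈ M.mid F G) : MvPolynomial.pderiv K (M.pol F G) = M.pol F K * M.pol K G :=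
  (M.pol_spec _ F G le_rfl hF hG h).2 K hK

end RankFn
end ChromUni

namespace ChromUni
namespace RankFn
variable {E : Type*} [Fintype E] [DecidableEq E] {M : RankFn E}

/-- first directional derivative at `t` -/
noncomputable def D1 (t x : Finset E → ℝ) (g : MvPolynomial (Finset E) ℝ) : ℝ :=
  ∑ S, x S * MvPolynomial.eval t (MvPolynomial.pderiv S g)

/-- second directional derivative at `t` -/
noncomputable def D2 (t x : Finset E → ℝ) (g : MvPolynomial (Finset E) ℝ) : ℝ :=
  ∑ S, x S * D1 t x (MvPolynomial.pderiv S g)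

def Lor (t : Finset E → ℝ) (e : ℝ) (g : MvPolynomial (Finset E) ℝ) : Prop :=
  0 < MvPolynomial.eval t g ∧
  ∀ x, e * MvPolynomial.eval t g * D2 t x g ≤ (e - 1) * (D1 t x g) ^ 2

lemma D1_mul (t x : Finset E → ℝ) (g h : MvPolynomial (Finset E) ℝ) :
    D1 t x (g * h) = D1 t x g * MvPolynomial.eval t h + MvPolynomial.eval t g * D1 t x h := by
  simp only [D1, MvPolynomial.pderiv_mul, map_add, map_mul]
  rw [Finset.sum_mul, Finset.mul_sum, ← Finset.sum_add_distrib]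
  exact Finset.sum_congr rfl fun S _ => by ring

lemma D1_add (t x : Finset E → ℝ) (g h : MvPolynomial (Finset E) ℝ) :
    D1 t x (g + h) = D1 t x g + D1 t x h := by
  simp only [D1, map_add]
  rw [← Finset.sum_add_distrib]
  exact Finset.sum_congr rfl fun S _ => by ring

lemma D2_mul (t x : Finset E → ℝ) (g h : MvPolynomial (Finset E) ℝ) :
    D2 t x (g * h) = D2 t x g * MvPolynomial.eval t h + 2 * (D1 t x g * D1 t x h)
      + MvPolynomial.eval t g * D2 t x h := by
  have h1 : D1 t x g * D1 t x h = ∑ S, x S * MvPolynomial.eval t (MvPolynomial.pderiv S g) * D1 t x h := by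
    rw [← Finset.sum_mul]; rfl
  have h2 : D1 t x g * D1 t x h = ∑ S, x S * MvPolynomial.eval t (MvPolynomial.pderiv S h) * D1 t x g := by
    rw [← Finset.sum_mul, mul_comm]; rfl
  have h3 : 2 * (D1 t x g * D1 t x h) = D1 t x g * D1 t x h + D1 t x g * D1 t x h := by ring
  rw [h3]
  nth_rewrite 1 [h1]
  rw [h2]
  simp only [D2, MvPolynomial.pderiv_mul, D1_add, D1_mul]
  rw [Finset.sum_mul, Finset.mul_sum, ← Finset.sum_add_distrib, ← Finset.sum_add_distrib,
    ← Finset.sum_add_distrib]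
  exact Finset.sum_congr rfl fun S _ => by ring

lemma D1_one (t x : Finset E → ℝ) : D1 t x 1 = 0 := by simp [D1]
lemma D2_one (t x : Finset E → ℝ) : D2 t x 1 = 0 := by simp [D2, D1]

lemma lor_ineq {a b G H g1 h1 g2 h2 : ℝ} (ha : 0 < a) (hb : 0 < b) (hG : 0 < G) (hH : 0 < H)
    (hg : a * G * g2 ≤ (a - 1) * g1 ^ 2) (hh : b * H * h2 ≤ (b - 1) * h1 ^ 2) :
    (a + b) * (G * H) * (g2 * H + 2 * (g1 * h1) + G * h2) ≤ (a + b - 1) * (g1 * H + G * h1) ^ 2 := by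
  have hab : 0 < a * b := mul_pos ha hb
  refine le_of_mul_le_mul_left ?_ hab
  have e1 : (a + b) * b * H ^ 2 * (a * G * g2) ≤ (a + b) * b * H ^ 2 * ((a - 1) * g1 ^ 2) :=
    mul_le_mul_of_nonneg_left hg (by positivity)
  have e2 : (a + b) * a * G ^ 2 * (b * H * h2) ≤ (a + b) * a * G ^ 2 * ((b - 1) * h1 ^ 2) :=
    mul_le_mul_of_nonneg_left hh (by positivity)
  have e3 := sq_nonneg (b * (g1 * H) - a * (G * h1))
  nlinarith

lemma Lor.mul {t : Finset E → ℝ} {a b : ℝ} {g h : MvPolynomial (Finset E) ℝ}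
    (hg : Lor t a g) (hh : Lor t b h) (ha : 0 < a ∨ (a = 0 ∧ g = 1)) (hb : 0 < b ∨ (b = 0 ∧ h = 1)) :
    Lor t (a + b) (g * h) := by
  rcases ha with ha | ⟨rfl, rfl⟩
  · rcases hb with hb | ⟨rfl, rfl⟩
    · refine ⟨by rw [map_mul]; exact mul_pos hg.1 hh.1, fun x => ?_⟩
      rw [map_mul, D2_mul, D1_mul]
      exact lor_ineq ha hb hg.1 hh.1 (hg.2 x) (hh.2 x)
    · simpa using hg
  · simpa using hh

/-- the weighted Euler identity -/
lemma Good.m_card {F G : Finset E} {e : ℝ} {g : MvPolynomial (Finset E) ℝ} (hg : M.Good F G e g) :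
    ∑ S : Finset E, (MvPolynomial.C (S.card : ℝ)) * MvPolynomial.pderiv S g = 0 := by
  have h : ∑ j : E, ∑ S : Finset E, (if j ∈ S then MvPolynomial.pderiv S g else 0) = 0 :=
    Finset.sum_eq_zero fun j _ => hg.m1 j
  rw [Finset.sum_comm] at h
  rw [← h]
  refine Finset.sum_congr rfl fun S _ => ?_
  rw [Finset.sum_ite_mem, Finset.univ_inter, Finset.sum_const, nsmul_eq_mul]
  simp

lemma Good.emw {F G : Finset E} {e : ℝ} {g : MvPolynomial (Finset E) ℝ} (hg : M.Good F G e g)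
    (t : Finset E → ℝ) (c0 c1 : ℝ) (hF : t F = c0 + c1 * F.card) (hG : t G = c0 + c1 * G.card) :
    ∑ H ∈ M.mid F G, (t H - c0 - c1 * H.card) * MvPolynomial.eval t (MvPolynomial.pderiv H g)
      = e * MvPolynomial.eval t g := by
  have h0 := congrArg (MvPolynomial.eval t) hg.euler
  have h1 := congrArg (MvPolynomial.eval t) hg.m0
  have h2 := congrArg (MvPolynomial.eval t) hg.m_card
  simp only [map_sum, map_mul, MvPolynomial.eval_X, MvPolynomial.eval_C, map_zero] at h0 h1 h2
  have h3 : ∑ H ∈ M.mid F G, (t H - c0 - c1 * H.card) * MvPolynomial.eval t (MvPolynomial.pderiv H g)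
     = ∑ S : Finset E, (t S - c0 - c1 * S.card) * MvPolynomial.eval t (MvPolynomial.pderiv S g) := by
    refine Finset.sum_subset (Finset.subset_univ _) fun S _ hS => ?_
    rw [M.mem_mid] at hS
    by_cases a : S = F
    · subst a; rw [hF]; ring
    by_cases b : S = G
    · subst b; rw [hG]; ring
    rw [hg.vars S, map_zero, mul_zero]
    rintro ⟨x, y, z⟩
    exact hS ⟨x, Finset.ssubset_iff_subset_ne.2 ⟨y, Ne.symm a⟩, Finset.ssubset_iff_subset_ne.2 ⟨z, b⟩⟩
  rw [h3, ← h0]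
  calc _ = ∑ S : Finset E, t S * MvPolynomial.eval t (MvPolynomial.pderiv S g)
      - c0 * ∑ S : Finset E, MvPolynomial.eval t (MvPolynomial.pderiv S g)
      - c1 * ∑ S : Finset E, (S.card : ℝ) * MvPolynomial.eval t (MvPolynomial.pderiv S g) := by
        rw [Finset.mul_sum, Finset.mul_sum, ← Finset.sum_sub_distrib, ← Finset.sum_sub_distrib]
        exact Finset.sum_congr rfl fun S _ => by ring
    _ = _ := by rw [h1, h2]; ring

/-- normalised direction -/
noncomputable def xt (F G : Finset E) (j : E) (x : Finset E → ℝ) (H : Finset E) : ℝ :=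
  x H - x F - (if j ∈ H then x G - x F else 0)

lemma Good.D1_mid {F G : Finset E} {e : ℝ} {g : MvPolynomial (Finset E) ℝ} (hg : M.Good F G e g)
    (t x : Finset E → ℝ) {j : E} (hj : j ∈ G) (hjF : j ∉ F) :
    D1 t x g = ∑ H ∈ M.mid F G, xt F G j x H * MvPolynomial.eval t (MvPolynomial.pderiv H g) := by
  have h1 := congrArg (MvPolynomial.eval t) hg.m0
  have h2 := congrArg (MvPolynomial.eval t) (hg.m1 j)
  simp only [map_sum, map_zero] at h1 h2
  have h3 : ∑ H ∈ M.mid F G, xt F G j x H * MvPolynomial.eval t (MvPolynomial.pderiv H g)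
     = ∑ S : Finset E, xt F G j x S * MvPolynomial.eval t (MvPolynomial.pderiv S g) := by
    refine Finset.sum_subset (Finset.subset_univ _) fun S _ hS => ?_
    rw [M.mem_mid] at hS
    by_cases a : S = F
    · subst a; simp [xt, hjF]
    by_cases b : S = G
    · subst b; simp [xt, hj]
    rw [hg.vars S, map_zero, mul_zero]
    rintro ⟨x, y, z⟩
    exact hS ⟨x, Finset.ssubset_iff_subset_ne.2 ⟨y, Ne.symm a⟩, Finset.ssubset_iff_subset_ne.2 ⟨z, b⟩⟩
  rw [h3]
  calc _ = ∑ S : Finset E, x S * MvPolynomial.eval t (MvPolynomial.pderiv S g)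
      - x F * ∑ S : Finset E, MvPolynomial.eval t (MvPolynomial.pderiv S g)
      - (x G - x F) * ∑ S : Finset E, MvPolynomial.eval t (if j ∈ S then MvPolynomial.pderiv S g else 0) := by
        rw [h1, h2, D1]; ring
    _ = _ := by
        rw [Finset.mul_sum, Finset.mul_sum, ← Finset.sum_sub_distrib, ← Finset.sum_sub_distrib]
        exact Finset.sum_congr rfl fun S _ => by
          simp only [xt]; split_ifs <;> simp <;> ring

lemma Good.D2_mid {F G : Finset E} {e : ℝ} {g : MvPolynomial (Finset E) ℝ} (hg : M.Good F G e g)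
    (t x : Finset E → ℝ) {j : E} (hj : j ∈ G) (hjF : j ∉ F) :
    D2 t x g = ∑ H ∈ M.mid F G, xt F G j x H * D1 t x (MvPolynomial.pderiv H g) := by
  calc D2 t x g = ∑ S, ∑ H ∈ M.mid F G, x S * (xt F G j x H *
        MvPolynomial.eval t (MvPolynomial.pderiv H (MvPolynomial.pderiv S g))) := by
        simp only [D2]
        refine Finset.sum_congr rfl fun S _ => ?_
        rw [(hg.deriv S).D1_mid t x hj hjF, Finset.mul_sum]
    _ = _ := by
        rw [Finset.sum_comm]
        refine Finset.sum_congr rfl fun H _ => ?_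
        rw [D1, Finset.mul_sum]
        refine Finset.sum_congr rfl fun S _ => ?_
        rw [pderiv_comm]; ring

/-- reverse Cauchy-Schwarz in rank three, from an explicit form -/
lemma rev_cs {Bxx Bxw Bww lx lw : ℝ} (hw : 0 < Bww) (hlw : lw ≠ 0)
    (h : lw ^ 2 * Bxx - 2 * lx * lw * Bxw + lx ^ 2 * Bww ≤ 0) : Bxx * Bww ≤ Bxw ^ 2 := by
  have h1 : lw ^ 2 * (Bxx * Bww - Bxw ^ 2) ≤ 0 := by
    nlinarith [sq_nonneg (lx * Bww - lw * Bxw), mul_le_mul_of_nonneg_right h hw.le]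
  have h2 : 0 < lw ^ 2 := by positivity
  by_contra hc
  push Not at hc
  nlinarith [mul_pos h2 (sub_pos.2 hc)]

end RankFn
end ChromUni

namespace ChromUni
namespace RankFn

lemma base_alg {ι : Type*} (s u : Finset ι) (I : ι → ι → ℝ) (X : ι → ℝ)
    (h1 : ∀ a ∈ s, ∀ b ∈ s, a ≠ b → ∑ l ∈ u, I a l * I b l = 1)
    (h2 : ∀ a l, I a l * I a l = I a l) :
    ∑ a ∈ s, X a * (∑ l ∈ u, I a l * (X l - X a) + X a) + ∑ l ∈ u, X l * (∑ a ∈ s, I a l * X a - X l)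
      = (∑ a ∈ s, X a) ^ 2 - ∑ l ∈ u, (X l - ∑ a ∈ s, I a l * X a) ^ 2 := by
  classical
  have e1 : ∑ l ∈ u, (∑ a ∈ s, I a l * X a) ^ 2
      = (∑ a ∈ s, X a) ^ 2 + ∑ a ∈ s, X a ^ 2 * (∑ l ∈ u, I a l - 1) := by
    have : ∀ l, (∑ a ∈ s, I a l * X a) ^ 2 = ∑ a ∈ s, ∑ b ∈ s, (I a l * I b l) * (X a * X b) := by
      intro l
      rw [sq, Finset.sum_mul_sum]
      exact Finset.sum_congr rfl fun a _ => Finset.sum_congr rfl fun b _ => by ring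
    simp only [this]
    rw [Finset.sum_comm, sq, Finset.sum_mul_sum, ← Finset.sum_add_distrib]
    refine Finset.sum_congr rfl fun a ha => ?_
    rw [Finset.sum_comm]
    have : ∀ b ∈ s, ∑ l ∈ u, (I a l * I b l) * (X a * X b)
        = X a * X b + (if b = a then X a ^ 2 * (∑ l ∈ u, I a l - 1) else 0) := by
      intro b hb
      rw [← Finset.sum_mul]
      split_ifs with hab
      · subst hab; simp only [h2]; ring
      · rw [h1 a ha b hb (Ne.symm hab)]; ring
    rw [Finset.sum_congr rfl this, Finset.sum_add_distrib, Finset.sum_ite_eq' s a, if_pos ha]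
  have e2 : ∑ l ∈ u, X l * ∑ a ∈ s, I a l * X a = ∑ a ∈ s, X a * ∑ l ∈ u, I a l * X l := by
    simp only [Finset.mul_sum]
    rw [Finset.sum_comm]
    exact Finset.sum_congr rfl fun a _ => Finset.sum_congr rfl fun b _ => by ring
  have e3 : ∑ l ∈ u, (X l - ∑ a ∈ s, I a l * X a) ^ 2 = ∑ l ∈ u, X l ^ 2
      - 2 * ∑ l ∈ u, X l * ∑ a ∈ s, I a l * X a + ∑ l ∈ u, (∑ a ∈ s, I a l * X a) ^ 2 := by
    rw [Finset.mul_sum, ← Finset.sum_sub_distrib, ← Finset.sum_add_distrib]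
    exact Finset.sum_congr rfl fun a _ => by ring
  have e4 : ∑ a ∈ s, X a * (∑ l ∈ u, I a l * (X l - X a) + X a) =
      ∑ a ∈ s, X a * ∑ l ∈ u, I a l * X l - ∑ a ∈ s, X a ^ 2 * (∑ l ∈ u, I a l - 1) := by
    rw [← Finset.sum_sub_distrib]
    refine Finset.sum_congr rfl fun a _ => ?_
    simp only [mul_sub, Finset.sum_sub_distrib, ← Finset.sum_mul]; ring
  have e5 : ∑ l ∈ u, X l * (∑ a ∈ s, I a l * X a - X l) =
      ∑ l ∈ u, X l * ∑ a ∈ s, I a l * X a - ∑ l ∈ u, X l ^ 2 := by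
    rw [← Finset.sum_sub_distrib]
    exact Finset.sum_congr rfl fun a _ => by ring
  rw [e4, e5, e3, e2, e1]; ring

variable {E : Type*} [Fintype E] [DecidableEq E] {M : RankFn E}

lemma D1_lin (t x y : Finset E → ℝ) (α β : ℝ) (g : MvPolynomial (Finset E) ℝ) :
    D1 t (fun S => α * x S + β * y S) g = α * D1 t x g + β * D1 t y g := by
  simp only [D1]
  rw [Finset.mul_sum, Finset.mul_sum, ← Finset.sum_add_distrib]
  exact Finset.sum_congr rfl fun S _ => by ring

lemma Good.D1_self {F G : Finset E} {e : ℝ} {g : MvPolynomial (Finset E) ℝ} (hg : M.Good F G e g)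
    (t : Finset E → ℝ) : D1 t t g = e * MvPolynomial.eval t g := by
  have h0 := congrArg (MvPolynomial.eval t) hg.euler
  simpa only [D1, map_sum, map_mul, MvPolynomial.eval_X, MvPolynomial.eval_C] using h0

lemma Good.D2_lin {F G : Finset E} {e : ℝ} {g : MvPolynomial (Finset E) ℝ} (hg : M.Good F G e g)
    (t x : Finset E → ℝ) (α β : ℝ) :
    D2 t (fun S => α * x S + β * t S) g = α ^ 2 * D2 t x g + 2 * α * β * ((e - 1) * D1 t x g)
      + β ^ 2 * ((e - 1) * (e * MvPolynomial.eval t g)) := by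
  have h1 : ∀ S, D1 t t (MvPolynomial.pderiv S g) = (e - 1) * MvPolynomial.eval t (MvPolynomial.pderiv S g) :=
    fun S => (hg.deriv S).D1_self t
  have h2 : ∑ S, t S * D1 t x (MvPolynomial.pderiv S g) = (e - 1) * D1 t x g := by
    calc _ = ∑ S, ∑ T, t S * (x T * MvPolynomial.eval t (MvPolynomial.pderiv T (MvPolynomial.pderiv S g))) := by
          simp only [D1, Finset.mul_sum]
      _ = ∑ T, x T * D1 t t (MvPolynomial.pderiv T g) := by
          rw [Finset.sum_comm]
          refine Finset.sum_congr rfl fun T _ => ?_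
          rw [D1, Finset.mul_sum]
          refine Finset.sum_congr rfl fun S _ => ?_
          rw [pderiv_comm]; ring
      _ = _ := by
          simp only [h1]
          rw [D1, Finset.mul_sum]
          exact Finset.sum_congr rfl fun S _ => by ring
  have h3 : ∑ S, x S * ((e - 1) * MvPolynomial.eval t (MvPolynomial.pderiv S g)) = (e - 1) * D1 t x g := by
    rw [D1, Finset.mul_sum]
    exact Finset.sum_congr rfl fun S _ => by ring
  have h4 : ∑ S, t S * ((e - 1) * MvPolynomial.eval t (MvPolynomial.pderiv S g))
      = (e - 1) * (e * MvPolynomial.eval t g) := by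
    rw [← hg.D1_self, D1, Finset.mul_sum]
    exact Finset.sum_congr rfl fun S _ => by ring
  calc _ = α ^ 2 * D2 t x g + α * β * ∑ S, x S * ((e - 1) * MvPolynomial.eval t (MvPolynomial.pderiv S g))
        + α * β * ∑ S, t S * D1 t x (MvPolynomial.pderiv S g)
        + β ^ 2 * ∑ S, t S * ((e - 1) * MvPolynomial.eval t (MvPolynomial.pderiv S g)) := by
        simp only [D2, D1_lin, h1]
        simp only [Finset.mul_sum, ← Finset.sum_add_distrib]
        exact Finset.sum_congr rfl fun S _ => by ring
    _ = _ := by rw [h2, h3, h4]; ring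

lemma xt_left {F G : Finset E} {j : E} (hj : j ∉ F) (x : Finset E → ℝ) : xt F G j x F = 0 := by
  simp [xt, hj]
lemma xt_right {F G : Finset E} {j : E} (hj : j ∈ G) (x : Finset E → ℝ) : xt F G j x G = 0 := by
  simp [xt, hj]

/-- replacing the direction by the normalised one -/
lemma Good.D1_xt {F G : Finset E} {e : ℝ} {g : MvPolynomial (Finset E) ℝ} (hg : M.Good F G e g)
    (t x : Finset E → ℝ) {j : E} (hj : j ∈ G) (hjF : j ∉ F) :
    D1 t x g = D1 t (xt F G j x) g := by
  rw [hg.D1_mid t x hj hjF, hg.D1_mid t _ hj hjF]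
  refine Finset.sum_congr rfl fun H _ => ?_
  congr 1
  have : xt F G j (xt F G j x) H = xt F G j x H - xt F G j x F
    - (if j ∈ H then xt F G j x G - xt F G j x F else 0) := rfl
  rw [this, xt_left hjF, xt_right hj]; simp

/-- rank two interval -/
lemma D1_rank_two {F G : Finset E} (hF : M.Flat F) (hG : M.Flat G) (h : F ⊂ G)
    (hr : M.r G = M.r F + 2) (t X : Finset E → ℝ) :
    D1 t X (M.pol F G) = ∑ H ∈ M.mid F G, (X H - X F) - (X G - X F) := by
  obtain ⟨j, hj, hjF⟩ := Finset.exists_of_ssubset h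
  rw [(pol_good hF hG h).D1_mid t X hj hjF]
  have : ∀ H ∈ M.mid F G, xt F G j X H * MvPolynomial.eval t (MvPolynomial.pderiv H (M.pol F G))
      = (X H - X F) - (if j ∈ H then X G - X F else 0) := by
    intro H hH
    have h1 := M.mid_rank hF hH
    rw [pol_deriv hF hG h hH, pol_one _ (by omega), pol_one _ (by omega)]
    simp [xt]
  rw [Finset.sum_congr rfl this, Finset.sum_sub_distrib,
    M.sum_cover hF hG h hj hjF (by omega) (fun _ => X G - X F)]
  intro H hH _ hne
  have h1 := M.mid_rank hF hH
  omega

/-- rank three interval: the form is negative semidefinite on a hyperplane -/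
lemma D2_rank_three {F G : Finset E} (hF : M.Flat F) (hG : M.Flat G) (h : F ⊂ G)
    (hr : M.r G = M.r F + 3) (t x : Finset E → ℝ) {j : E} (hj : j ∈ G) (hjF : j ∉ F)
    (hx : ∑ a ∈ (M.mid F G).filter (fun H => M.r H = M.r F + 1), xt F G j x a = 0) :
    D2 t x (M.pol F G) ≤ 0 := by
  classical
  set At := (M.mid F G).filter (fun H => M.r H = M.r F + 1) with hAt
  set Ln := (M.mid F G).filter (fun H => ¬ M.r H = M.r F + 1) with hLn
  set X := xt F G j x with hX
  have hXF : X F = 0 := xt_left hjF x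
  have hXG : X G = 0 := xt_right hj x
  have hg := pol_good hF hG h
  have memA : ∀ a, a ∈ At ↔ M.Flat a ∧ F ⊂ a ∧ a ⊂ G ∧ M.r a = M.r F + 1 := by
    intro a; rw [hAt, Finset.mem_filter, M.mem_mid]; tauto
  have memL : ∀ a, a ∈ Ln ↔ M.Flat a ∧ F ⊂ a ∧ a ⊂ G ∧ M.r a = M.r F + 2 := by
    intro a; rw [hLn, Finset.mem_filter, M.mem_mid]
    constructor
    · rintro ⟨⟨h1, h2, h3⟩, h4⟩
      refine ⟨h1, h2, h3, ?_⟩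
      have := M.flat_rank_lt hF h2
      have := M.flat_rank_lt h1 h3
      omega
    · rintro ⟨h1, h2, h3, h4⟩
      exact ⟨⟨h1, h2, h3⟩, by omega⟩
  let I : Finset E → Finset E → ℝ := fun a l => if a ⊂ l then 1 else 0
  have midA : ∀ a ∈ At, M.mid a G = Ln.filter (fun l => a ⊂ l) := by
    intro a ha
    rw [memA] at ha
    ext l
    rw [Finset.mem_filter, memL, M.mem_mid]
    constructor
    · rintro ⟨h1, h2, h3⟩
      have := M.flat_rank_lt ha.1 h2
      have := M.flat_rank_lt h1 h3
      exact ⟨⟨h1, ha.2.1.trans h2, h3, by omega⟩, h2⟩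
    · rintro ⟨⟨h1, h2, h3, h4⟩, h5⟩
      exact ⟨h1, h5, h3⟩
  have midL : ∀ l ∈ Ln, M.mid F l = At.filter (fun a => a ⊂ l) := by
    intro l hl
    rw [memL] at hl
    ext a
    rw [Finset.mem_filter, memA, M.mem_mid]
    constructor
    · rintro ⟨h1, h2, h3⟩
      have := M.flat_rank_lt hF h2
      have := M.flat_rank_lt h1 h3
      exact ⟨⟨h1, h2, h3.trans hl.2.2.1, by omega⟩, h3⟩
    · rintro ⟨⟨h1, h2, h3, h4⟩, h5⟩
      exact ⟨h1, h2, h5⟩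
  have dA : ∀ a ∈ At, D1 t x (MvPolynomial.pderiv a (M.pol F G)) = ∑ l ∈ Ln, I a l * (X l - X a) + X a := by
    intro a ha
    have ha' := (memA a).1 ha
    rw [(hg.deriv a).D1_xt t x hj hjF, pol_deriv hF hG h (Finset.mem_filter.1 ha).1,
      pol_one _ (by omega : M.r a ≤ M.r F + 1), one_mul,
      D1_rank_two ha'.1 hG ha'.2.2.1 (by omega), midA a ha, Finset.sum_filter, ← hX, hXG]
    rw [sub_eq_add_neg, zero_sub, neg_neg]
    congr 1
    refine Finset.sum_congr rfl fun l _ => ?_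
    simp only [I]; split_ifs <;> simp
  have dL : ∀ l ∈ Ln, D1 t x (MvPolynomial.pderiv l (M.pol F G)) = ∑ a ∈ At, I a l * X a - X l := by
    intro l hl
    have hl' := (memL l).1 hl
    rw [(hg.deriv l).D1_xt t x hj hjF, pol_deriv hF hG h (Finset.mem_filter.1 hl).1,
      pol_one _ (by omega : M.r G ≤ M.r l + 1), mul_one,
      D1_rank_two hF hl'.1 hl'.2.1 (by omega), midL l hl, Finset.sum_filter, ← hX, hXF]
    rw [sub_zero]
    congr 1
    refine Finset.sum_congr rfl fun l _ => ?_
    simp only [I]; split_ifs <;> simp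
  rw [hg.D2_mid t x hj hjF, ← Finset.sum_filter_add_sum_filter_not (M.mid F G) (fun H => M.r H = M.r F + 1),
    ← hAt, ← hLn, ← hX]
  rw [Finset.sum_congr rfl fun a ha => by rw [dA a ha],
    Finset.sum_congr (s₁ := Ln) rfl fun l hl => by rw [dL l hl]]
  rw [base_alg At Ln I X ?_ ?_, hx]
  · have : 0 ≤ ∑ l ∈ Ln, (X l - ∑ a ∈ At, I a l * X a) ^ 2 := Finset.sum_nonneg fun _ _ => sq_nonneg _
    linarith
  · intro a ha b hb hab
    have ha' := (memA a).1 ha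
    have hb' := (memA b).1 hb
    obtain ⟨i, hib, hia⟩ : ∃ i ∈ b, i ∉ a := by
      by_contra hc
      push Not at hc
      have h1 : b ⊆ a := hc
      have := M.flat_rank_lt hb'.1 (Finset.ssubset_iff_subset_ne.2 ⟨h1, Ne.symm hab⟩)
      omega
    have hiF : i ∉ F := fun hc => hia (ha'.2.1.subset hc)
    have hbc : b = M.cl (insert i F) := M.cover_unique hF hb'.1 hb'.2.1.subset hib hiF hb'.2.2.2
    have hsum := M.sum_cover ha'.1 hG ha'.2.2.1 (hb'.2.2.1.subset hib) hia (by omega) (fun _ => (1 : ℝ)) (by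
      intro H hH _ hne
      have h1 := M.mid_rank ha'.1 hH
      omega)
    rw [midA a ha, Finset.sum_filter] at hsum
    rw [← hsum]
    refine Finset.sum_congr rfl fun l hl => ?_
    have hl' := (memL l).1 hl
    simp only [I]
    by_cases h1 : a ⊂ l
    · have : b ⊂ l ↔ i ∈ l := by
        constructor
        · intro h2; exact h2.subset hib
        · intro h2
          have h3 : b ⊆ l := by
            rw [hbc]; exact M.cl_subset hl'.1 (Finset.insert_subset h2 hl'.2.1.subset)
          refine Finset.ssubset_iff_subset_ne.2 ⟨h3, fun h4 => ?_⟩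
          rw [h4] at hb'; omega
      simp [h1, this]
    · simp [h1]
  · intro a l; simp only [I]; split_ifs <;> simp

end RankFn
end ChromUni

namespace ChromUni
namespace RankFn
variable {E : Type*} [Fintype E] [DecidableEq E] {M : RankFn E}

def Nrm (t : Finset E → ℝ) : Prop := ∀ F G : Finset E, F ⊂ G → ∃ c0 c1 : ℝ,
  t F = c0 + c1 * F.card ∧ t G = c0 + c1 * G.card ∧
    ∀ H, F ⊂ H → H ⊂ G → 0 < t H - c0 - c1 * H.card

lemma Good.D2_w {F G : Finset E} {e : ℝ} {g : MvPolynomial (Finset E) ℝ} (hg : M.Good F G e g)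
    (t X : Finset E → ℝ) (c0 c1 : ℝ) (hF : t F = c0 + c1 * F.card) (hG : t G = c0 + c1 * G.card) :
    ∑ H ∈ M.mid F G, (t H - c0 - c1 * H.card) * D2 t X (MvPolynomial.pderiv H g)
      = (e - 2) * D2 t X g := by
  calc _ = ∑ H ∈ M.mid F G, ∑ S, ∑ T, X S * (X T * ((t H - c0 - c1 * H.card) *
        MvPolynomial.eval t (MvPolynomial.pderiv H (MvPolynomial.pderiv T (MvPolynomial.pderiv S g))))) := by
        refine Finset.sum_congr rfl fun H _ => ?_
        simp only [D2, D1, Finset.mul_sum]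
        refine Finset.sum_congr rfl fun S _ => Finset.sum_congr rfl fun T _ => ?_
        rw [pderiv_comm S H, pderiv_comm T H]; ring
    _ = ∑ S, ∑ T, X S * (X T * ((e - 1 - 1) * MvPolynomial.eval t (MvPolynomial.pderiv T (MvPolynomial.pderiv S g)))) := by
        rw [Finset.sum_comm]
        refine Finset.sum_congr rfl fun S _ => ?_
        rw [Finset.sum_comm]
        refine Finset.sum_congr rfl fun T _ => ?_
        rw [← Finset.mul_sum, ← Finset.mul_sum, ((hg.deriv S).deriv T).emw t c0 c1 hF hG]
    _ = _ := by
        simp only [D2, D1, Finset.mul_sum]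
        refine Finset.sum_congr rfl fun S _ => Finset.sum_congr rfl fun T _ => by ring

lemma lor_big {F G : Finset E} (hF : M.Flat F) (hG : M.Flat G) (h : F ⊂ G)
    (hr : M.r F + 4 ≤ M.r G) (t : Finset E → ℝ) (ht : Nrm t)
    (pos1 : ∀ H ∈ M.mid F G, 0 < MvPolynomial.eval t (MvPolynomial.pderiv H (M.pol F G)))
    (ihL : ∀ H ∈ M.mid F G, Lor t ((M.r G : ℝ) - M.r F - 1 - 1) (MvPolynomial.pderiv H (M.pol F G)))
    (pos2 : ∀ H ∈ M.mid F G, ∀ K ∈ M.mid F G, H ⊂ K →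
      0 < MvPolynomial.eval t (MvPolynomial.pderiv H (MvPolynomial.pderiv K (M.pol F G))))
    (x : Finset E → ℝ) :
    ((M.r G : ℝ) - M.r F - 1) * MvPolynomial.eval t (M.pol F G) * D2 t x (M.pol F G) ≤
      ((M.r G : ℝ) - M.r F - 1 - 1) * (D1 t x (M.pol F G)) ^ 2 := by
  classical
  set p := M.pol F G with hp
  set d : ℝ := (M.r G : ℝ) - M.r F - 1 with hd
  have hd3 : 3 ≤ d := by
    have : ((M.r F + 4 : ℕ) : ℝ) ≤ M.r G := by exact_mod_cast hr
    push_cast at this; rw [hd]; linarith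
  have hg : M.Good F G d p := pol_good hF hG h
  obtain ⟨c0, c1, hc0, hc1, hw⟩ := ht F G h
  set w : Finset E → ℝ := fun H => t H - c0 - c1 * H.card with hwdef
  let A : {H // H ∈ M.mid F G} → {H // H ∈ M.mid F G} → ℝ := fun H K =>
    MvPolynomial.eval t (MvPolynomial.pderiv K.1 (MvPolynomial.pderiv H.1 p))
  have toSub : ∀ f : Finset E → ℝ, ∑ K : {H // H ∈ M.mid F G}, f K.1 = ∑ K ∈ M.mid F G, f K := by
    intro f; exact Finset.sum_coe_sort (M.mid F G) f
  have hsymm : ∀ H K, A H K = A K H := fun H K => by simp only [A]; rw [pderiv_comm]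
  have hwpos : ∀ H : {H // H ∈ M.mid F G}, 0 < w H.1 := fun H =>
    hw H.1 (M.mem_mid.1 H.2).2.1 (M.mem_mid.1 H.2).2.2
  have hAw : ∀ H : {H // H ∈ M.mid F G}, ∑ K, A H K * w K.1 =
      (d - 1) * MvPolynomial.eval t (MvPolynomial.pderiv H.1 p) := by
    intro H
    rw [← (hg.deriv H.1).emw t c0 c1 hc0 hc1, ← toSub]
    exact Finset.sum_congr rfl fun K _ => by simp only [A, w]; ring
  have hAwpos : ∀ H : {H // H ∈ M.mid F G}, 0 < ∑ K, A H K * w K.1 := by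
    intro H; rw [hAw]; exact mul_pos (by linarith) (pos1 _ H.2)
  have hpos : ∀ H K : {H // H ∈ M.mid F G}, H.1 ⊂ K.1 → 0 < A H K := fun H K hHK => by
    rw [hsymm]; exact pos2 _ H.2 _ K.2 hHK
  have hoff : ∀ H K : {H // H ∈ M.mid F G}, H ≠ K → 0 ≤ A H K := by
    intro H K hHK
    by_cases h1 : H.1 ⊂ K.1
    · exact (hpos H K h1).le
    by_cases h2 : K.1 ⊂ H.1
    · rw [hsymm]; exact (hpos K H h2).le
    have hne : H.1 ≠ K.1 := fun hc => hHK (Subtype.ext hc)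
    have mH := M.mem_mid.1 H.2
    have mK := M.mem_mid.1 K.2
    refine le_of_eq ?_
    simp only [A]
    rw [hp, pol_deriv hF hG h H.2, MvPolynomial.pderiv_mul,
      (pol_good hF mH.1 mH.2.1).vars K.1 (fun hc => h2 (Finset.ssubset_iff_subset_ne.2 ⟨hc.2.2, hne.symm⟩)),
      (pol_good mH.1 hG mH.2.2).vars K.1 (fun hc => h1 (Finset.ssubset_iff_subset_ne.2 ⟨hc.2.1, hne⟩))]
    simp
  have conn : ∀ y : {H // H ∈ M.mid F G} → ℝ, (∀ i j, 0 < A i j → y i = y j) → ∀ i j, y i = y j := by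
    intro y hy
    have hle : ∀ H K : {H // H ∈ M.mid F G}, H.1 ⊆ K.1 → y H = y K := by
      intro H K hHK
      by_cases h1 : H = K
      · rw [h1]
      · exact hy _ _ (hpos H K (Finset.ssubset_iff_subset_ne.2 ⟨hHK, fun hc => h1 (Subtype.ext hc)⟩))
    intro H K
    have mH := M.mem_mid.1 H.2
    have mK := M.mem_mid.1 K.2
    obtain ⟨a, ha, haF⟩ := Finset.exists_of_ssubset mH.2.1
    obtain ⟨b, hb, hbF⟩ := Finset.exists_of_ssubset mK.2.1
    have haG := mH.2.2.subset ha
    have hbG := mK.2.2.subset hb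
    obtain ⟨a1, a2, a3⟩ := M.cover_mem hF hG h haG haF (by omega)
    obtain ⟨b1, b2, b3⟩ := M.cover_mem hF hG h hbG hbF (by omega)
    have hlr : M.r (M.cl (insert a (insert b F))) ≤ M.r F + 2 := by
      rw [M.r_cl]
      have := M.unit a (insert b F)
      have := M.unit b F
      omega
    have hsub : insert a (insert b F) ⊆ M.cl (insert a (insert b F)) := M.subset_cl _
    have hL : M.cl (insert a (insert b F)) ∈ M.mid F G := by
      refine M.mem_mid.2 ⟨M.flat_cl _, ?_, ?_⟩
      · refine Finset.ssubset_iff_subset_ne.2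
          ⟨((Finset.subset_insert _ _).trans (Finset.subset_insert _ _)).trans hsub, fun hc => haF ?_⟩
        rw [hc]; exact hsub (Finset.mem_insert_self _ _)
      · refine Finset.ssubset_iff_subset_ne.2 ⟨M.cl_subset hG
          (Finset.insert_subset haG (Finset.insert_subset hbG h.subset)), fun hc => ?_⟩
        rw [hc] at hlr; omega
    have e1 := hle ⟨_, a1⟩ H (M.cl_subset mH.1 (Finset.insert_subset ha mH.2.1.subset))
    have e2 := hle ⟨_, b1⟩ K (M.cl_subset mK.1 (Finset.insert_subset hb mK.2.1.subset))
    have e3 := hle ⟨_, a1⟩ ⟨_, hL⟩ (M.cl_subset (M.flat_cl _)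
      ((Finset.insert_subset_insert _ (Finset.subset_insert _ _)).trans hsub))
    have e4 := hle ⟨_, b1⟩ ⟨_, hL⟩ (M.cl_subset (M.flat_cl _)
      ((Finset.subset_insert _ _).trans hsub))
    rw [← e1, e3, ← e4, e2]
  have hyp : ∀ x : {H // H ∈ M.mid F G} → ℝ, ∑ i, x i * ∑ j, A i j * x j ≤
      ∑ i, w i.1 * (∑ j, A i j * x j) ^ 2 / (∑ j, A i j * w j.1) := by
    intro x
    let X : Finset E → ℝ := fun S => if hS : S ∈ M.mid F G then x ⟨S, hS⟩ else 0
    have hX : ∀ f : Finset E → ℝ, ∑ S, X S * f S = ∑ i, x i * f i.1 := by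
      intro f
      have : ∑ i, x i * f i.1 = ∑ i : {H // H ∈ M.mid F G}, (fun S => X S * f S) i.1 := by
        refine Finset.sum_congr rfl fun i _ => ?_
        simp only [X, dif_pos i.2]
      rw [this, toSub (fun S => X S * f S)]
      symm
      refine Finset.sum_subset (Finset.subset_univ _) fun S _ hS => ?_
      simp only [X, dif_neg hS, zero_mul]
    have h1 : ∀ i : {H // H ∈ M.mid F G}, ∑ j, A i j * x j = D1 t X (MvPolynomial.pderiv i.1 p) := by
      intro i
      rw [D1, hX]
      exact Finset.sum_congr rfl fun j _ => by simp only [A]; ring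
    have h2 : ∑ i, x i * ∑ j, A i j * x j = D2 t X p := by
      rw [D2, hX]
      exact Finset.sum_congr rfl fun j _ => by rw [h1]
    rw [h2]
    have h3 := hg.D2_w t X c0 c1 hc0 hc1
    have h4 : ∀ i : {H // H ∈ M.mid F G}, w i.1 * D2 t X (MvPolynomial.pderiv i.1 p) ≤
        (d - 2) * (w i.1 * (∑ j, A i j * x j) ^ 2 / (∑ j, A i j * w j.1)) := by
      intro i
      have h5 := (ihL i.1 i.2).2 X
      rw [mul_div_assoc, mul_left_comm]
      refine mul_le_mul_of_nonneg_left ?_ (hwpos i).le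
      rw [h1, ← mul_div_assoc, le_div_iff₀ (hAwpos i), hAw]
      have e : d - 1 - 1 = d - 2 := by ring
      rw [e] at h5
      linarith
    have h6 : (d - 2) * D2 t X p ≤ (d - 2) * ∑ i, w i.1 * (∑ j, A i j * x j) ^ 2 / (∑ j, A i j * w j.1) := by
      rw [← h3, ← toSub (fun H => (t H - c0 - c1 * H.card) * D2 t X (MvPolynomial.pderiv H p)), Finset.mul_sum]
      exact Finset.sum_le_sum fun i _ => h4 i
    exact le_of_mul_le_mul_left h6 (by linarith)
  obtain ⟨j, hj, hjF⟩ := Finset.exists_of_ssubset h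
  have main := lg A hsymm (fun H => w H.1) hwpos hAwpos hoff conn hyp (fun H => xt F G j x H.1)
  have k1 : ∑ i : {H // H ∈ M.mid F G}, xt F G j x i.1 * ∑ k, A i k * xt F G j x k.1 = D2 t x p := by
    rw [hg.D2_mid t x hj hjF, ← toSub]
    refine Finset.sum_congr rfl fun i _ => ?_
    rw [(hg.deriv i.1).D1_mid t x hj hjF, ← toSub]
    congr 1
    exact Finset.sum_congr rfl fun k _ => by simp only [A]; ring
  have k2 : ∑ i : {H // H ∈ M.mid F G}, w i.1 * ∑ k, A i k * w k.1 = (d - 1) * (d * MvPolynomial.eval t p) := by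
    rw [← hg.emw t c0 c1 hc0 hc1, ← toSub, Finset.mul_sum]
    refine Finset.sum_congr rfl fun i _ => ?_
    rw [hAw]; simp only [w]; ring
  have k3 : ∑ i : {H // H ∈ M.mid F G}, xt F G j x i.1 * ∑ k, A i k * w k.1 = (d - 1) * D1 t x p := by
    rw [hg.D1_mid t x hj hjF, ← toSub, Finset.mul_sum]
    refine Finset.sum_congr rfl fun i _ => ?_
    rw [hAw]; ring
  rw [k1, k2, k3] at main
  have hd1 : 0 < d - 1 := by linarith
  refine le_of_mul_le_mul_left ?_ hd1
  nlinarith [main]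

theorem lor_main (t : Finset E → ℝ) (ht : Nrm t) : ∀ (n : ℕ) (F G : Finset E), G.card - F.card ≤ n →
    M.Flat F → M.Flat G → F ⊂ G → Lor t ((M.r G : ℝ) - M.r F - 1) (M.pol F G) := by
  intro n
  induction n with
  | zero =>
    intro F G hn _ _ h
    have := Finset.card_lt_card h
    omega
  | succ n ih =>
    intro F G hn hF hG h
    have hlt := M.flat_rank_lt hF h
    have hg := pol_good hF hG h
    have ihl : ∀ H ∈ M.mid F G, Lor t ((M.r H : ℝ) - M.r F - 1) (M.pol F H) := by
      intro H hH
      have m := M.mem_mid.1 hH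
      have := Finset.card_lt_card m.2.2
      exact ih F H (by omega) hF m.1 m.2.1
    have ihr : ∀ H ∈ M.mid F G, Lor t ((M.r G : ℝ) - M.r H - 1) (M.pol H G) := by
      intro H hH
      have m := M.mem_mid.1 hH
      have := Finset.card_lt_card m.2.1
      have := Finset.card_lt_card m.2.2
      exact ih H G (by omega) m.1 hG m.2.2
    have hdeg : ∀ F G, M.Flat F → F ⊂ G → (0 : ℝ) < (M.r G : ℝ) - M.r F - 1 ∨
        ((M.r G : ℝ) - M.r F - 1 = 0 ∧ M.pol F G = 1) := by
      intro F G hF h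
      have := M.flat_rank_lt hF h
      rcases (show M.r G = M.r F + 1 ∨ M.r F + 2 ≤ M.r G by omega) with h1 | h1
      · right; exact ⟨by rw [h1]; push_cast; ring, M.pol_one (by omega)⟩
      · left
        have : ((M.r F + 2 : ℕ) : ℝ) ≤ M.r G := by exact_mod_cast h1
        push_cast at this; linarith
    have ihL : ∀ H ∈ M.mid F G, Lor t ((M.r G : ℝ) - M.r F - 1 - 1) (MvPolynomial.pderiv H (M.pol F G)) := by
      intro H hH
      have m := M.mem_mid.1 hH
      rw [pol_deriv hF hG h hH]
      have := (ihl H hH).mul (ihr H hH) (hdeg _ _ hF m.2.1) (hdeg _ _ m.1 m.2.2)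
      convert this using 1; ring
    have pos1 : ∀ H ∈ M.mid F G, 0 < MvPolynomial.eval t (MvPolynomial.pderiv H (M.pol F G)) :=
      fun H hH => (ihL H hH).1
    by_cases hc1 : M.r G = M.r F + 1
    · rw [M.pol_one hc1.le]
      refine ⟨by simp, fun x => ?_⟩
      rw [D1_one, D2_one]; simp
    have hpos : 0 < MvPolynomial.eval t (M.pol F G) := by
      obtain ⟨c0, c1, hc0, hc1', hw⟩ := ht F G h
      have h1 := hg.emw t c0 c1 hc0 hc1'
      obtain ⟨j, hj, hjF⟩ := Finset.exists_of_ssubset h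
      have h2 : 0 < ∑ H ∈ M.mid F G, (t H - c0 - c1 * H.card) * MvPolynomial.eval t (MvPolynomial.pderiv H (M.pol F G)) := by
        refine Finset.sum_pos (fun H hH => ?_) ⟨_, (M.cover_mem hF hG h hj hjF (by omega)).1⟩
        have m := M.mem_mid.1 hH
        exact mul_pos (hw H m.2.1 m.2.2) (pos1 H hH)
      rw [h1] at h2
      have h3 : (0 : ℝ) < (M.r G : ℝ) - M.r F - 1 := by
        have h4 : M.r F + 2 ≤ M.r G := by omega
        have : ((M.r F + 2 : ℕ) : ℝ) ≤ M.r G := by exact_mod_cast h4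
        push_cast at this; linarith
      exact (mul_pos_iff_of_pos_left h3).1 h2
    refine ⟨hpos, fun x => ?_⟩
    obtain ⟨j, hj, hjF⟩ := Finset.exists_of_ssubset h
    by_cases hc2 : M.r G = M.r F + 2
    · have : D2 t x (M.pol F G) = 0 := by
        rw [hg.D2_mid t x hj hjF]
        refine Finset.sum_eq_zero fun H hH => ?_
        have := M.mid_rank hF hH
        rw [pol_deriv hF hG h hH, M.pol_one (by omega), M.pol_one (by omega), mul_one, D1_one, mul_zero]
      rw [this, hc2]; push_cast
      have : (M.r F + 2 - M.r F - 1 - 1 : ℝ) = 0 := by ring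
      rw [this]; simp
    by_cases hc3 : M.r G = M.r F + 3
    · set ell : (Finset E → ℝ) → ℝ := fun x =>
        ∑ a ∈ (M.mid F G).filter (fun H => M.r H = M.r F + 1), xt F G j x a with hell
      have hlin : ∀ α β : ℝ, ell (fun S => α * x S + β * t S) = α * ell x + β * ell t := by
        intro α β
        simp only [hell]
        rw [Finset.mul_sum, Finset.mul_sum, ← Finset.sum_add_distrib]
        refine Finset.sum_congr rfl fun S _ => ?_
        simp only [xt]; split_ifs <;> ring
      have hd : (M.r G : ℝ) - M.r F - 1 = 2 := by rw [hc3]; push_cast; ring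
      rw [hd] at hg ⊢
      have hlt0 : ell t ≠ 0 := by
        intro hc
        have h1 := D2_rank_three hF hG h hc3 t t hj hjF hc
        have h2 := hg.D2_lin t t 0 1
        have h3 : (fun S : Finset E => (0 : ℝ) * t S + 1 * t S) = t := by ext; ring
        rw [h3] at h2
        rw [h2] at h1
        linarith
      have h1 := D2_rank_three hF hG h hc3 t (fun S => ell t * x S + (- ell x) * t S) hj hjF (by
        have := hlin (ell t) (- ell x)
        rw [hell] at this
        simp only at this
        rw [this]; ring)
      rw [hg.D2_lin] at h1
      have := rev_cs (Bxx := D2 t x (M.pol F G)) (Bxw := D1 t x (M.pol F G))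
        (Bww := 2 * MvPolynomial.eval t (M.pol F G)) (lx := ell x) (lw := ell t) (by linarith) hlt0 (by linarith)
      linarith
    · refine lor_big hF hG h (by omega) t ht pos1 ihL ?_ x
      intro H hH K hK hHK
      have mH := M.mem_mid.1 hH
      have mK := M.mem_mid.1 hK
      have hHm : H ∈ M.mid F K := M.mem_mid.2 ⟨mH.1, mH.2.1, hHK⟩
      have c1 := Finset.card_lt_card mH.2.1
      have c2 := Finset.card_lt_card mK.2.2
      have c3 := Finset.card_lt_card hHK
      rw [pol_deriv hF hG h hK, MvPolynomial.pderiv_mul,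
        pol_deriv hF mK.1 mK.2.1 hHm,
        (pol_good mK.1 hG mK.2.2).vars H (fun hc => hHK.not_subset hc.2.1), mul_zero, add_zero,
        map_mul, map_mul]
      exact mul_pos (mul_pos (ihl H hH).1 (ih H K (by omega) mH.1 mK.1 hHK).1) (ihr K hK).1

end RankFn
end ChromUni

namespace ChromUni
namespace RankFn
variable {E : Type*} [Fintype E] [DecidableEq E] {M : RankFn E}

/-- the perturbed evaluation point -/
noncomputable def te (ε : ℝ) (S : Finset E) : ℝ := (if S = ∅ then -1 else 0) - ε * (S.card : ℝ) ^ 2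

lemma te_nrm {ε : ℝ} (hε : 0 < ε) : Nrm (te ε : Finset E → ℝ) := by
  intro F G h
  have hcard : (F.card : ℝ) < G.card := by exact_mod_cast Finset.card_lt_card h
  have hG : G ≠ ∅ := by
    rintro rfl
    exact (Finset.not_ssubset_empty F) h
  by_cases hF : F = ∅
  · subst hF
    have hg : (0 : ℝ) < G.card := by simpa using hcard
    refine ⟨-1, 1 / G.card - ε * G.card, by simp [te], ?_, fun H h1 h2 => ?_⟩
    · simp only [te, if_neg hG]; field_simp; ring
    · have hH : H ≠ ∅ := by
        rintro rfl
        exact (Finset.not_ssubset_empty _) h1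
      have c1 : (0 : ℝ) < H.card := by exact_mod_cast Finset.card_lt_card h1
      have c2 : (H.card : ℝ) < G.card := by exact_mod_cast Finset.card_lt_card h2
      simp only [te, if_neg hH]
      have e : 0 - ε * (H.card : ℝ) ^ 2 - -1 - (1 / G.card - ε * G.card) * H.card
        = (1 - H.card / G.card) + ε * (H.card * (G.card - H.card)) := by ring
      rw [e]
      have : (H.card : ℝ) / G.card < 1 := (div_lt_one hg).2 c2
      have : 0 < ε * ((H.card : ℝ) * (G.card - H.card)) := by
        have := sub_pos.2 c2
        positivity
      linarith
  · refine ⟨ε * (F.card * G.card), - ε * (F.card + G.card), ?_, ?_, fun H h1 h2 => ?_⟩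
    · simp only [te, if_neg hF]; ring
    · simp only [te, if_neg hG]; ring
    · have hH : H ≠ ∅ := by
        rintro rfl
        exact (Finset.not_ssubset_empty _) h1
      have c1 : (F.card : ℝ) < H.card := by exact_mod_cast Finset.card_lt_card h1
      have c2 : (H.card : ℝ) < G.card := by exact_mod_cast Finset.card_lt_card h2
      simp only [te, if_neg hH]
      have := mul_pos hε (mul_pos (sub_pos.2 c1) (sub_pos.2 c2))
      nlinarith

lemma D1_single (t : Finset E → ℝ) (u : Finset E) (g : MvPolynomial (Finset E) ℝ) :
    D1 t (Pi.single u 1) g = MvPolynomial.eval t (MvPolynomial.pderiv u g) := by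
  rw [D1, Finset.sum_eq_single u]
  · simp
  · intro S _ hS; simp [Pi.single_apply, hS]
  · simp

lemma D2_single (t : Finset E → ℝ) (u : Finset E) (g : MvPolynomial (Finset E) ℝ) :
    D2 t (Pi.single u 1) g = MvPolynomial.eval t (MvPolynomial.pderiv u (MvPolynomial.pderiv u g)) := by
  rw [D2, Finset.sum_eq_single u]
  · simp [D1_single]
  · intro S _ hS; simp [Pi.single_apply, hS]
  · simp

lemma limit_ineq {G : Finset E} (hG : M.Flat G) (h : ∅ ⊂ G) :
    ((M.r G : ℝ) - 1) * MvPolynomial.eval (te 0) (M.pol ∅ G) *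
      MvPolynomial.eval (te 0) (MvPolynomial.pderiv G (MvPolynomial.pderiv G (M.pol ∅ G)))
      ≤ ((M.r G : ℝ) - 1 - 1) * (MvPolynomial.eval (te 0) (MvPolynomial.pderiv G (M.pol ∅ G))) ^ 2 := by
  have hc : ∀ g : MvPolynomial (Finset E) ℝ, Continuous fun ε : ℝ => MvPolynomial.eval (te ε) g := by
    intro g
    refine (MvPolynomial.continuous_eval g).comp (continuous_pi fun S => ?_)
    unfold te
    fun_prop
  have key : ∀ ε : ℝ, 0 < ε → ((M.r G : ℝ) - 1) * MvPolynomial.eval (te ε) (M.pol ∅ G) *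
      MvPolynomial.eval (te ε) (MvPolynomial.pderiv G (MvPolynomial.pderiv G (M.pol ∅ G)))
      ≤ ((M.r G : ℝ) - 1 - 1) * (MvPolynomial.eval (te ε) (MvPolynomial.pderiv G (M.pol ∅ G))) ^ 2 := by
    intro ε hε
    have := (lor_main (te ε) (te_nrm hε) _ ∅ G le_rfl M.flat_empty hG h).2 (Pi.single G 1)
    rw [D1_single, D2_single, M.empty] at this
    simpa using this
  have cl : Continuous fun ε : ℝ => ((M.r G : ℝ) - 1) * MvPolynomial.eval (te ε) (M.pol ∅ G) *
      MvPolynomial.eval (te ε) (MvPolynomial.pderiv G (MvPolynomial.pderiv G (M.pol ∅ G))) :=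
    (continuous_const.mul (hc _)).mul (hc _)
  have cr : Continuous fun ε : ℝ => ((M.r G : ℝ) - 1 - 1) *
      (MvPolynomial.eval (te ε) (MvPolynomial.pderiv G (M.pol ∅ G))) ^ 2 :=
    continuous_const.mul ((hc _).pow 2)
  refine le_of_tendsto_of_tendsto ((cl.tendsto 0).mono_left nhdsWithin_le_nhds)
    ((cr.tendsto 0).mono_left nhdsWithin_le_nhds) (b := nhdsWithin 0 (Set.Ioi 0)) ?_
  filter_upwards [self_mem_nhdsWithin] with ε hε
  exact key ε hε

/-- the evaluation point -/
noncomputable abbrev t0 : Finset E → ℝ := te 0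

lemma t0_empty : (t0 (∅ : Finset E)) = -1 := by simp [t0, te]
lemma t0_ne {S : Finset E} (h : S ≠ ∅) : t0 S = 0 := by simp [t0, te, h]

lemma ne_of_ssub {F H : Finset E} (h : F ⊂ H) : H ≠ ∅ := by
  rintro rfl
  exact (Finset.not_ssubset_empty _) h

lemma Good.eval_zero {F G : Finset E} {e : ℝ} {g : MvPolynomial (Finset E) ℝ} (hg : M.Good F G e g)
    (hF : F ≠ ∅) (h : F ⊂ G) (he : e ≠ 0) : MvPolynomial.eval t0 g = 0 := by
  have h1 := hg.emw t0 0 0 (by simp [t0_ne hF]) (by simp [t0_ne (ne_of_ssub h)])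
  rw [Finset.sum_eq_zero] at h1
  · rcases mul_eq_zero.1 h1.symm with h2 | h2
    · exact absurd h2 he
    · exact h2
  · intro H hH
    rw [t0_ne (ne_of_ssub (M.mem_mid.1 hH).2.1)]
    simp

lemma Good.eval_empty {G : Finset E} {e : ℝ} {g : MvPolynomial (Finset E) ℝ} (hg : M.Good ∅ G e g)
    {i : E} (hi : i ∈ G) : e * MvPolynomial.eval t0 g =
      ∑ H ∈ M.mid ∅ G, if i ∉ H then MvPolynomial.eval t0 (MvPolynomial.pderiv H g) else 0 := by
  have h1 := congrArg (MvPolynomial.eval t0) (hg.em hi (by simp))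
  rw [map_sum, map_mul, MvPolynomial.eval_C] at h1
  rw [← h1]
  refine Finset.sum_congr rfl fun H hH => ?_
  have hGne : G ≠ ∅ := by rintro rfl; simp at hi
  rw [map_mul]
  have : MvPolynomial.eval t0 (tau ∅ G i H) = if i ∉ H then 1 else 0 := by
    by_cases hiH : i ∈ H
    · simp [tau, hiH, t0_empty, t0_ne hGne, t0_ne (ne_of_ssub (M.mem_mid.1 hH).2.1)]
    · simp [tau, hiH, t0_empty, t0_ne (ne_of_ssub (M.mem_mid.1 hH).2.1)]
  rw [this]
  split_ifs <;> simp

lemma du_pol {H G : Finset E} (hH : M.Flat H) (hG : M.Flat G) (h : ∅ ⊂ H) (h2 : H ⊂ G) :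
    MvPolynomial.pderiv G (M.pol ∅ H) = 0 :=
  (pol_good M.flat_empty hH h).vars G fun hc => h2.not_subset hc.2.2

lemma du_one {F G : Finset E} (hF : M.Flat F) (hG : M.Flat G) (h : F ⊂ G) (hr : M.r G = M.r F + 2)
    (t : Finset E → ℝ) :
    MvPolynomial.eval t (MvPolynomial.pderiv G (M.pol F G)) = -1 := by
  rw [← D1_single, D1_rank_two hF hG h hr, Finset.sum_eq_zero]
  · have : F ≠ G := h.ne
    simp [Pi.single_apply, this]
  · intro H hH
    have h1 : H ≠ G := (M.mem_mid.1 hH).2.2.ne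
    have : F ≠ G := h.ne
    simp [Pi.single_apply, this, h1]

lemma du_two {F G : Finset E} (hF : M.Flat F) (hG : M.Flat G) (h : F ⊂ G) (hr : M.r G = M.r F + 3)
    (t : Finset E → ℝ) :
    MvPolynomial.eval t (MvPolynomial.pderiv G (MvPolynomial.pderiv G (M.pol F G))) = 1 := by
  obtain ⟨j, hj, hjF⟩ := Finset.exists_of_ssubset h
  have hg := pol_good hF hG h
  rw [← D1_single, (hg.deriv G).D1_mid t _ hj hjF]
  have hFG : F ≠ G := h.ne
  have : ∀ H ∈ M.mid F G, xt F G j (Pi.single G 1) H * MvPolynomial.eval t (MvPolynomial.pderiv H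
      (MvPolynomial.pderiv G (M.pol F G))) = if j ∈ H then (if M.r H = M.r F + 1 then 1 else 0) else 0 := by
    intro H hH
    have m := M.mem_mid.1 hH
    have hHG : H ≠ G := m.2.2.ne
    have rk := M.mid_rank hF hH
    have hx : xt F G j (Pi.single G 1) H = if j ∈ H then -1 else 0 := by
      by_cases hjH : j ∈ H <;> simp [xt, Pi.single_apply, hHG, hFG, hjH]
    rw [hx]
    split_ifs with h1 h2
    · rw [pderiv_comm, pol_deriv hF hG h hH, M.pol_one h2.le, one_mul, du_one m.1 hG m.2.2 (by omega)]
      norm_num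
    · rw [pderiv_comm, pol_deriv hF hG h hH, M.pol_one (by omega : M.r G ≤ M.r H + 1), mul_one,
        (pol_good hF m.1 m.2.1).vars G fun hc => m.2.2.not_subset hc.2.2]
      simp
    · simp
  rw [Finset.sum_congr rfl this, M.sum_cover hF hG h hj hjF (by omega)
    (fun H => if M.r H = M.r F + 1 then (1 : ℝ) else 0)]
  · rw [if_pos]
    exact (M.cover_mem hF hG h hj hjF (by omega)).2.1
  · intro H _ _ h2
    simp [h2]

variable (M) in
noncomputable def PP (G : Finset E) : ℝ := MvPolynomial.eval t0 (M.pol ∅ G)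

/-- evaluation recursions -/
lemma rec0 {G : Finset E} (hG : M.Flat G) {i : E} (hi : i ∈ G) :
    ((M.r G : ℝ) - 1) * M.PP G = ∑ H ∈ M.mid ∅ G, if i ∉ H then (if M.r G = M.r H + 1 then M.PP H else 0) else 0 := by
  have hs : ∅ ⊂ G := Finset.ssubset_iff_subset_ne.2 ⟨Finset.empty_subset _, by rintro rfl; simp at hi⟩
  have h1 := (pol_good M.flat_empty hG hs).eval_empty hi
  rw [M.empty, Nat.cast_zero, sub_zero] at h1
  rw [PP, h1]
  refine Finset.sum_congr rfl fun H hH => ?_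
  have m := M.mem_mid.1 hH
  congr 1
  rw [pol_deriv M.flat_empty hG hs hH, map_mul]
  split_ifs with h2
  · rw [M.pol_one h2.le]; simp [PP]
  · rw [(pol_good m.1 hG m.2.2).eval_zero (ne_of_ssub m.2.1) m.2.2, mul_zero]
    intro hc
    apply h2
    have : (M.r G : ℝ) = (M.r H + 1 : ℕ) := by push_cast; linarith
    exact_mod_cast this

lemma rec1 {G : Finset E} (hG : M.Flat G) {i : E} (hi : i ∈ G) :
    ((M.r G : ℝ) - 2) * MvPolynomial.eval t0 (MvPolynomial.pderiv G (M.pol ∅ G))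
      = - ∑ H ∈ M.mid ∅ G, if i ∉ H then (if M.r G = M.r H + 2 then M.PP H else 0) else 0 := by
  have hs : ∅ ⊂ G := Finset.ssubset_iff_subset_ne.2 ⟨Finset.empty_subset _, by rintro rfl; simp at hi⟩
  have h1 := ((pol_good M.flat_empty hG hs).deriv G).eval_empty hi
  rw [M.empty, Nat.cast_zero, sub_zero] at h1
  have e : (M.r G : ℝ) - 2 = M.r G - 1 - 1 := by ring
  rw [e, h1, ← Finset.sum_neg_distrib]
  refine Finset.sum_congr rfl fun H hH => ?_
  have m := M.mem_mid.1 hH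
  rw [pderiv_comm, pol_deriv M.flat_empty hG hs hH, MvPolynomial.pderiv_mul,
    du_pol m.1 hG m.2.1 m.2.2, zero_mul, zero_add, map_mul]
  by_cases h2 : i ∈ H
  · simp [h2]
  rw [if_pos h2, if_pos h2]
  split_ifs with h3
  · rw [du_one m.1 hG m.2.2 h3]; simp [PP]
  · rw [((pol_good m.1 hG m.2.2).deriv G).eval_zero (ne_of_ssub m.2.1) m.2.2, mul_zero, neg_zero]
    intro hc
    apply h3
    have : (M.r G : ℝ) = (M.r H + 2 : ℕ) := by push_cast; linarith
    exact_mod_cast this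

lemma rec2 {G : Finset E} (hG : M.Flat G) {i : E} (hi : i ∈ G) :
    ((M.r G : ℝ) - 3) * MvPolynomial.eval t0 (MvPolynomial.pderiv G (MvPolynomial.pderiv G (M.pol ∅ G)))
      = ∑ H ∈ M.mid ∅ G, if i ∉ H then (if M.r G = M.r H + 3 then M.PP H else 0) else 0 := by
  have hs : ∅ ⊂ G := Finset.ssubset_iff_subset_ne.2 ⟨Finset.empty_subset _, by rintro rfl; simp at hi⟩
  have h1 := (((pol_good M.flat_empty hG hs).deriv G).deriv G).eval_empty hi
  rw [M.empty, Nat.cast_zero, sub_zero] at h1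
  have e : (M.r G : ℝ) - 3 = M.r G - 1 - 1 - 1 := by ring
  rw [e, h1]
  refine Finset.sum_congr rfl fun H hH => ?_
  have m := M.mem_mid.1 hH
  rw [pderiv_comm, pderiv_comm H, pol_deriv M.flat_empty hG hs hH, MvPolynomial.pderiv_mul,
    du_pol m.1 hG m.2.1 m.2.2, zero_mul, zero_add, MvPolynomial.pderiv_mul,
    du_pol m.1 hG m.2.1 m.2.2, zero_mul, zero_add, map_mul]
  congr 1
  split_ifs with h3
  · rw [du_two m.1 hG m.2.2 h3]; simp [PP]
  · rw [(((pol_good m.1 hG m.2.2).deriv G).deriv G).eval_zero (ne_of_ssub m.2.1) m.2.2, mul_zero]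
    intro hc
    apply h3
    have : (M.r G : ℝ) = (M.r H + 3 : ℕ) := by push_cast; linarith
    exact_mod_cast this

end RankFn
end ChromUni

namespace ChromUni
namespace RankFn
variable {E : Type*} [Fintype E] [DecidableEq E] (M : RankFn E)

/-- signed count of spanning subsets of `K` -/
noncomputable def mm (K : Finset E) : ℝ := ∑ S ∈ K.powerset, if M.r S = M.r K then (-1 : ℝ) ^ S.card else 0

/-- signed count of subsets of `G` of rank at most `j` -/
noncomputable def BB (G : Finset E) (j : ℕ) : ℝ :=
  ∑ S ∈ G.powerset, if M.r S ≤ j then (-1 : ℝ) ^ S.card else 0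

open Classical in
/-- flats in `G` of rank `j` avoiding `i` -/
noncomputable def fl (G : Finset E) (i : E) (j : ℕ) : Finset (Finset E) :=
  Finset.univ.filter (fun K => K ⊆ G ∧ M.Flat K ∧ M.r K = j ∧ i ∉ K)

lemma mem_fl {G : Finset E} {i : E} {j : ℕ} {K : Finset E} :
    K ∈ M.fl G i j ↔ K ⊆ G ∧ M.Flat K ∧ M.r K = j ∧ i ∉ K := by simp [fl]

lemma BB_eq {G : Finset E} (hG : M.Flat G) {i : E} (hi : i ∈ G) (j : ℕ) :
    M.BB G j = ∑ K ∈ M.fl G i j, M.mm K := by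
  classical
  have h1 : M.BB G j = ∑ S ∈ (G.erase i).powerset,
      if M.r S = j ∧ M.r (insert i S) = j + 1 then (-1 : ℝ) ^ S.card else 0 := by
    rw [BB]
    nth_rewrite 1 [← Finset.insert_erase hi]
    rw [Finset.sum_powerset_insert (Finset.notMem_erase i G), ← Finset.sum_add_distrib]
    refine Finset.sum_congr rfl fun S hS => ?_
    have hiS : i ∉ S := fun hc => Finset.notMem_erase i G (Finset.mem_powerset.1 hS hc)
    rw [Finset.card_insert_of_notMem hiS]
    have a := M.unit i S
    have b := M.mono S (insert i S) (Finset.subset_insert _ _)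
    by_cases c1 : M.r (insert i S) ≤ j
    · rw [if_pos (by omega), if_pos c1, if_neg (by omega)]; ring
    · by_cases c2 : M.r S ≤ j
      · rw [if_pos c2, if_neg c1, if_pos (by omega)]; ring
      · rw [if_neg c2, if_neg c1, if_neg (by omega)]; ring
  rw [h1, ← Finset.sum_filter]
  rw [← Finset.sum_fiberwise_of_maps_to (t := M.fl G i j) (g := fun S => M.cl S)]
  · refine Finset.sum_congr rfl fun K hK => ?_
    rw [mem_fl] at hK
    rw [mm, ← Finset.sum_filter]
    refine Finset.sum_congr ?_ fun _ _ => rfl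
    ext S
    simp only [Finset.mem_filter, Finset.mem_powerset]
    constructor
    · rintro ⟨⟨a, b, c⟩, rfl⟩
      exact ⟨M.subset_cl S, by rw [M.r_cl]⟩
    · rintro ⟨a, b⟩
      have hcl : K = M.cl S := M.eq_cl hK.2.1 a b.symm
      refine ⟨⟨fun x hx => Finset.mem_erase.2 ⟨?_, hK.1 (a hx)⟩, by rw [b, hK.2.2.1], ?_⟩, hcl.symm⟩
      · rintro rfl; exact hK.2.2.2 (a hx)
      · have hne : i ∉ M.cl S := hcl ▸ hK.2.2.2
        rw [M.mem_cl] at hne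
        have a := M.unit i S
        have b' := M.mono S (insert i S) (Finset.subset_insert _ _)
        have := hK.2.2.1
        omega
  · intro S hS
    simp only [Finset.mem_filter, Finset.mem_powerset] at hS
    rw [mem_fl]
    refine ⟨M.cl_subset hG (hS.1.trans (Finset.erase_subset _ _)), M.flat_cl S, by rw [M.r_cl]; exact hS.2.1, ?_⟩
    rw [M.mem_cl]; omega

lemma exists_fl {G : Finset E} (hG : M.Flat G) {i : E} (hi : i ∈ G) :
    ∀ j, j < M.r G → (M.fl G i j).Nonempty := by
  intro j
  induction j with
  | zero =>
    intro _
    exact ⟨∅, M.mem_fl.2 ⟨Finset.empty_subset _, M.flat_empty, M.empty, by simp⟩⟩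
  | succ j ih =>
    intro hj
    obtain ⟨K, hK⟩ := ih (by omega)
    rw [mem_fl] at hK
    obtain ⟨k1, k2, k3, k4⟩ := hK
    have r1 : M.r (insert i K) = j + 1 := by rw [M.r_insert k2 k4, k3]
    obtain ⟨e, heG, he⟩ : ∃ e ∈ G, e ∉ M.cl (insert i K) := by
      by_contra hc
      push Not at hc
      have := M.mono G _ hc
      rw [M.r_cl, r1] at this
      omega
    have heK : e ∉ K := fun hc => he (M.subset_cl _ (Finset.mem_insert_of_mem hc))
    have r2 : M.r (insert e K) = j + 1 := by rw [M.r_insert k2 heK, k3]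
    refine ⟨M.cl (insert e K), M.mem_fl.2 ⟨M.cl_subset hG (Finset.insert_subset heG k1), M.flat_cl _,
      by rw [M.r_cl, r2], ?_⟩⟩
    intro hc
    rw [M.mem_cl, Finset.insert_comm] at hc
    apply he
    rw [M.mem_cl]; omega

lemma sum_pow {G : Finset E} (h : G ≠ ∅) : ∑ S ∈ G.powerset, (-1 : ℝ) ^ S.card = 0 := by
  have := Finset.sum_powerset_neg_one_pow_card_of_nonempty (Finset.nonempty_iff_ne_empty.2 h)
  exact_mod_cast congrArg (fun z : ℤ => (z : ℝ)) this

lemma mm_BB {G : Finset E} {k : ℕ} (hk : M.r G = k + 1) : M.mm G = - M.BB G k := by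
  have hne : G ≠ ∅ := by rintro rfl; rw [M.empty] at hk; omega
  have h := sum_pow hne
  rw [eq_neg_iff_add_eq_zero, ← h, mm, BB, ← Finset.sum_add_distrib]
  refine Finset.sum_congr rfl fun S hS => ?_
  have := M.mono S G (Finset.mem_powerset.1 hS)
  by_cases c : M.r S = M.r G
  · rw [if_pos c, if_neg (by omega), add_zero]
  · rw [if_neg c, if_pos (by omega), zero_add]

lemma BB_zero (G : Finset E) : M.BB G 0 = 1 := by
  rw [BB, Finset.sum_eq_single ∅]
  · simp [M.empty]
  · intro S _ hS
    rw [if_neg]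
    intro hc
    exact hS (M.r_zero (by omega))
  · simp

lemma mid_fl {G : Finset E} {i : E} (hi : i ∈ G) {j : ℕ} (f : Finset E → ℝ) :
    ∑ H ∈ M.mid ∅ G, (if i ∉ H then (if M.r H = j + 1 then f H else 0) else 0) = ∑ H ∈ M.fl G i (j + 1), f H := by
  rw [← Finset.sum_filter, ← Finset.sum_filter]
  refine Finset.sum_congr ?_ fun _ _ => rfl
  ext H
  simp only [Finset.mem_filter, M.mem_mid, mem_fl]
  constructor
  · rintro ⟨⟨⟨a, b, c⟩, d⟩, e⟩
    exact ⟨c.subset, a, e, d⟩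
  · rintro ⟨a, b, c, d⟩
    refine ⟨⟨⟨b, ?_, ?_⟩, d⟩, c⟩
    · refine Finset.ssubset_iff_subset_ne.2 ⟨Finset.empty_subset _, ?_⟩
      rintro rfl
      rw [M.empty] at c; omega
    · refine Finset.ssubset_iff_subset_ne.2 ⟨a, ?_⟩
      rintro rfl
      exact d hi

/-- closed form of `PP` -/
lemma PP_mm : ∀ (k : ℕ) (G : Finset E), M.Flat G → M.r G = k + 1 →
    (k.factorial : ℝ) * M.PP G = (-1) ^ (k + 1) * M.mm G ∧ 0 < M.PP G := by
  intro k
  induction k with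
  | zero =>
    intro G hG hr
    have : M.PP G = 1 := by rw [PP, M.pol_one (by omega)]; simp
    rw [this, M.mm_BB hr, M.BB_zero]; norm_num
  | succ k ih =>
    intro G hG hr
    obtain ⟨i, hi⟩ : G.Nonempty := by
      rw [Finset.nonempty_iff_ne_empty]; rintro rfl; rw [M.empty] at hr; omega
    have h1 := rec0 hG hi
    have h2 : ∀ H, (if M.r G = M.r H + 1 then M.PP H else 0) = if M.r H = k + 1 then M.PP H else 0 := by
      intro H
      have : M.r G = M.r H + 1 ↔ M.r H = k + 1 := by omega
      simp [this]
    simp only [h2] at h1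
    rw [M.mid_fl hi] at h1
    have hk : (M.r G : ℝ) - 1 = k + 1 := by rw [hr]; push_cast; ring
    rw [hk] at h1
    constructor
    · rw [M.mm_BB hr, M.BB_eq hG hi, Nat.factorial_succ, Nat.cast_mul]
      push_cast
      rw [mul_comm ((k : ℝ) + 1), mul_assoc, h1, Finset.mul_sum, ← Finset.sum_neg_distrib, Finset.mul_sum]
      refine Finset.sum_congr rfl fun H hH => ?_
      rw [mem_fl] at hH
      rw [(ih H hH.2.1 hH.2.2.1).1]; ring
    · have : 0 < ∑ H ∈ M.fl G i (k + 1), M.PP H :=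
        Finset.sum_pos (fun H hH => (ih H (M.mem_fl.1 hH).2.1 (M.mem_fl.1 hH).2.2.1).2)
          (M.exists_fl hG hi _ (by omega))
      rw [← h1] at this
      exact (mul_pos_iff_of_pos_left (by positivity)).1 this

/-- the reduced coefficients -/
noncomputable def UU (j : ℕ) : ℝ := (-1) ^ j * M.BB Finset.univ j

lemma UU_sum [Nonempty E] (i : E) (k : ℕ) :
    M.UU (k + 1) = (k.factorial : ℝ) * ∑ H ∈ M.fl Finset.univ i (k + 1), M.PP H := by
  rw [UU, M.BB_eq M.flat_univ (Finset.mem_univ i), Finset.mul_sum, Finset.mul_sum]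
  refine Finset.sum_congr rfl fun H hH => ?_
  rw [mem_fl] at hH
  rw [(M.PP_mm k H hH.2.1 hH.2.2.1).1]

lemma UU_zero : M.UU 0 = 1 := by rw [UU, M.BB_zero]; norm_num

lemma UU_pos {j : ℕ} (hj : j < M.r Finset.univ) : 0 < M.UU j := by
  cases j with
  | zero => rw [UU_zero]; norm_num
  | succ k =>
    have hne : (Finset.univ : Finset E).Nonempty := by
      rw [Finset.nonempty_iff_ne_empty]; intro h; rw [h, M.empty] at hj; omega
    obtain ⟨i, _⟩ := hne
    haveI : Nonempty E := ⟨i⟩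
    rw [M.UU_sum i]
    refine mul_pos (by positivity) (Finset.sum_pos (fun H hH => ?_)
      (M.exists_fl M.flat_univ (Finset.mem_univ i) _ hj))
    exact (M.PP_mm k H (M.mem_fl.1 hH).2.1 (M.mem_fl.1 hH).2.2.1).2

lemma UU_top {k : ℕ} (h : M.r Finset.univ ≤ k) (hne : (Finset.univ : Finset E) ≠ ∅) : M.UU k = 0 := by
  have : M.BB Finset.univ k = 0 := by
    rw [← sum_pow hne, BB]
    refine Finset.sum_congr rfl fun S hS => ?_
    rw [if_pos]
    exact (M.mono S _ (Finset.subset_univ S)).trans h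
  rw [UU, this, mul_zero]

/-- top log-concavity inequality -/
lemma UU_lc_top {k : ℕ} (hr : M.r Finset.univ = k + 3) : M.UU (k + 2) * M.UU k ≤ M.UU (k + 1) ^ 2 := by
  have hne : (Finset.univ : Finset E).Nonempty := by
    rw [Finset.nonempty_iff_ne_empty]; intro h; rw [h, M.empty] at hr; omega
  obtain ⟨i, hi⟩ := hne
  haveI : Nonempty E := ⟨i⟩
  have hs : ∅ ⊂ (Finset.univ : Finset E) :=
    Finset.ssubset_iff_subset_ne.2 ⟨Finset.empty_subset _, by intro h; rw [← h] at hi; simp at hi⟩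
  have ineq := limit_ineq M.flat_univ hs
  have h0 := rec0 M.flat_univ hi
  have h1 := rec1 M.flat_univ hi
  have h2 := rec2 M.flat_univ hi
  have e0 : ∀ H, (if M.r Finset.univ = M.r H + 1 then M.PP H else 0) = if M.r H = (k + 1) + 1 then M.PP H else 0 := by
    intro H
    have : M.r Finset.univ = M.r H + 1 ↔ M.r H = (k + 1) + 1 := by omega
    simp only [this]
  have e1 : ∀ H, (if M.r Finset.univ = M.r H + 2 then M.PP H else 0) = if M.r H = k + 1 then M.PP H else 0 := by
    intro H
    have : M.r Finset.univ = M.r H + 2 ↔ M.r H = k + 1 := by omega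
    simp only [this]
  simp only [e0] at h0
  simp only [e1] at h1
  rw [M.mid_fl hi] at h0 h1
  change ((M.r Finset.univ : ℝ) - 1) * M.PP Finset.univ * MvPolynomial.eval t0 _ ≤ _ at ineq
  have u0 := M.UU_sum i (k + 1)
  have u1 := M.UU_sum i k
  rw [← h0] at u0
  rw [← neg_eq_iff_eq_neg] at h1
  rw [← h1] at u1
  set P0 := M.PP Finset.univ
  set P1 := MvPolynomial.eval t0 (MvPolynomial.pderiv Finset.univ (M.pol ∅ Finset.univ))
  set P2 := MvPolynomial.eval t0 (MvPolynomial.pderiv Finset.univ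
    (MvPolynomial.pderiv Finset.univ (M.pol ∅ Finset.univ))) with hP2
  have hrr : (M.r Finset.univ : ℝ) = k + 3 := by rw [hr]; push_cast; ring
  have u2 : M.UU k = (k.factorial : ℝ) * P2 := by
    cases k with
    | zero =>
      rw [UU_zero, hP2, du_two M.flat_empty M.flat_univ hs (by rw [M.empty, hr])]
      simp
    | succ l =>
      have e2 : ∀ H, (if M.r Finset.univ = M.r H + 3 then M.PP H else 0) = if M.r H = l + 1 then M.PP H else 0 := by
        intro H
        have : M.r Finset.univ = M.r H + 3 ↔ M.r H = l + 1 := by omega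
        simp only [this]
      simp only [e2] at h2
      rw [M.mid_fl hi] at h2
      rw [M.UU_sum i l, ← h2, hrr, Nat.factorial_succ]
      push_cast; ring
  rw [hrr] at ineq u0 u1
  rw [Nat.factorial_succ] at u0
  push_cast at u0
  have f : (0 : ℝ) < k.factorial := by positivity
  rw [u0, u1, u2]
  have := mul_le_mul_of_nonneg_left ineq (show (0 : ℝ) ≤ (k.factorial : ℝ) ^ 2 * (k + 1) by positivity)
  calc _ = (k.factorial : ℝ) ^ 2 * (k + 1) * ((k + 3 - 1) * P0 * P2) := by ring
    _ ≤ _ := this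
    _ = _ := by ring

lemma UU_trunc {k : ℕ} (hk : 0 < k) {j : ℕ} (hj : j < k) : (M.trunc k hk).UU j = M.UU j := by
  rw [UU, UU, BB, BB]
  congr 1
  refine Finset.sum_congr rfl fun S _ => ?_
  have : (M.trunc k hk).r S ≤ j ↔ M.r S ≤ j := by
    change min (M.r S) k ≤ j ↔ _
    omega
  simp only [this]

theorem UU_lc {k : ℕ} (hr : k + 3 ≤ M.r Finset.univ) : M.UU (k + 2) * M.UU k ≤ M.UU (k + 1) ^ 2 := by
  have h := (M.trunc (k + 3) (by omega)).UU_lc_top (k := k) (by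
    change min (M.r Finset.univ) (k + 3) = _
    omega)
  rwa [UU_trunc _ _ (by omega), UU_trunc _ _ (by omega), UU_trunc _ _ (by omega)] at h

/-- signed Whitney number -/
noncomputable def cc (j : ℕ) : ℝ := ∑ S : Finset E, if M.r S = j then (-1 : ℝ) ^ S.card else 0

lemma cc_zero : M.cc 0 = M.UU 0 := by
  rw [cc, UU, BB, Finset.powerset_univ, pow_zero, one_mul]
  refine Finset.sum_congr rfl fun S _ => ?_
  simp

lemma cc_succ (j : ℕ) : M.cc (j + 1) = (-1) ^ (j + 1) * (M.UU (j + 1) + M.UU j) := by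
  have h : M.cc (j + 1) = M.BB Finset.univ (j + 1) - M.BB Finset.univ j := by
    rw [cc, BB, BB, Finset.powerset_univ, ← Finset.sum_sub_distrib]
    refine Finset.sum_congr rfl fun S _ => ?_
    by_cases c : M.r S = j + 1
    · rw [if_pos c, if_pos (by omega), if_neg (by omega), sub_zero]
    · rw [if_neg c]
      by_cases c' : M.r S ≤ j
      · rw [if_pos (by omega), if_pos c', sub_self]
      · rw [if_neg (by omega), if_neg c', sub_self]
  rw [h, UU, UU]
  rcases Nat.even_or_odd j with hj | hj
  · rw [Even.neg_one_pow hj, Odd.neg_one_pow hj.add_one]; ring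
  · rw [Odd.neg_one_pow hj, Even.neg_one_pow hj.add_one]; ring

end RankFn
end ChromUni

namespace ChromUni

lemma unimodal_of_step (h : ℕ → ℝ) (step : ∀ i, h (i + 1) ≤ h i → h (i + 2) ≤ h (i + 1)) (n : ℕ) :
    ∃ j ≤ n, (∀ i₁ i₂, i₁ ≤ i₂ → i₂ ≤ j → h i₁ ≤ h i₂) ∧
      (∀ i₁ i₂, j ≤ i₁ → i₁ ≤ i₂ → i₂ ≤ n → h i₂ ≤ h i₁) := by
  classical
  have hex : ∃ i, i = n ∨ h (i + 1) ≤ h i := ⟨n, Or.inl rfl⟩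
  refine ⟨Nat.find hex, Nat.find_le (Or.inl rfl), ?_, ?_⟩
  · intro i₁ i₂ h12 h2
    induction i₂, h12 using Nat.le_induction with
    | base => exact le_rfl
    | succ m hm ih =>
      have h3 := Nat.find_min hex (m := m) (by omega)
      push Not at h3
      exact (ih (by omega)).trans h3.2.le
  · intro i₁ i₂ h1 h12 h2
    rcases Nat.find_spec hex with h3 | h3
    · have : i₁ = i₂ := by omega
      rw [this]
    · have h4 : ∀ m, Nat.find hex ≤ m → h (m + 1) ≤ h m := by
        intro m hm
        induction m, hm using Nat.le_induction with
        | base => exact h3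
        | succ m hm ih => exact step m ih
      induction i₂, h12 using Nat.le_induction with
      | base => exact le_rfl
      | succ m hm ih => exact (h4 m (by omega)).trans (ih (by omega))

namespace RankFn
variable {E : Type*} [Fintype E] [DecidableEq E] (M : RankFn E)

lemma cc_step (i : ℕ) (hi : |M.cc (i + 1)| ≤ |M.cc i|) : |M.cc (i + 2)| ≤ |M.cc (i + 1)| := by
  by_cases hne : (Finset.univ : Finset E) = ∅
  · have : M.cc (i + 2) = 0 := by
      rw [cc]
      refine Finset.sum_eq_zero fun S _ => ?_
      have : S = ∅ := Finset.subset_empty.1 (hne ▸ Finset.subset_univ S)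
      rw [this, M.empty, if_neg (by omega)]
    rw [this, abs_zero]; exact abs_nonneg _
  have nn : ∀ j, 0 ≤ M.UU j := by
    intro j
    rcases lt_or_ge j (M.r Finset.univ) with h | h
    · exact (M.UU_pos h).le
    · exact (M.UU_top h hne).ge
  have lc : ∀ k, M.UU (k + 2) * M.UU k ≤ M.UU (k + 1) ^ 2 := by
    intro k
    rcases lt_or_ge (k + 2) (M.r Finset.univ) with h | h
    · exact M.UU_lc h
    · rw [M.UU_top h hne, zero_mul]; positivity
  have hz : ∀ j, M.UU j = 0 → M.UU (j + 1) = 0 := by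
    intro j hj
    refine M.UU_top ?_ hne
    by_contra hc
    have := M.UU_pos (j := j) (by omega)
    linarith
  have ab : ∀ j, |M.cc (j + 1)| = M.UU (j + 1) + M.UU j := by
    intro j
    rw [M.cc_succ, abs_mul, abs_pow, abs_neg, abs_one, one_pow, one_mul, abs_of_nonneg]
    linarith [nn j, nn (j + 1)]
  cases i with
  | zero =>
    rw [ab, ab]
    rw [ab, M.cc_zero, abs_of_nonneg (nn 0)] at hi
    have h1 : M.UU 1 = 0 := le_antisymm (by simpa using hi) (nn 1)
    have h2 := hz 1 h1
    have := nn 0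
    simp only [zero_add] at *
    rw [h2, h1]; linarith
  | succ i =>
    rw [ab, ab]
    rw [ab, ab] at hi
    have h1 : M.UU (i + 2) ≤ M.UU i := by
      have : i + 1 + 1 = i + 2 := rfl
      rw [this] at hi; linarith
    suffices M.UU (i + 3) ≤ M.UU (i + 1) by
      have e1 : i + 1 + 1 = i + 2 := rfl
      have e2 : i + 1 + 1 + 1 = i + 3 := rfl
      rw [e2, e1]; linarith
    by_cases h2 : M.UU (i + 1) = 0
    · rw [hz _ (hz _ h2)]; exact nn _
    · have h3 : 0 < M.UU (i + 1) := lt_of_le_of_ne (nn _) (Ne.symm h2)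
      have l1 := lc i
      have l2 := lc (i + 1)
      have h4 : M.UU (i + 2) ^ 2 ≤ M.UU (i + 2) * M.UU i := by
        rw [sq]; exact mul_le_mul_of_nonneg_left h1 (nn _)
      have e1 : i + 1 + 1 = i + 2 := rfl
      have e2 : i + 1 + 2 = i + 3 := rfl
      rw [e1, e2] at l2
      refine le_of_mul_le_mul_right ?_ h3
      calc _ ≤ _ := l2
        _ ≤ _ := h4
        _ ≤ _ := l1
        _ = _ := sq _

end RankFn

section Graph
variable {V : Type*} [Fintype V] (G : SimpleGraph V)

/-- functions constant on the edges of `S` -/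
def WW (S : Finset G.edgeSet) : Submodule (ZMod 2) (V → ZMod 2) where
  carrier := {f | ∀ e ∈ S, ∀ a b, e.1 = s(a, b) → f a = f b}
  add_mem' := by
    intro f g hf hg e he a b h
    simp [hf e he a b h, hg e he a b h]
  zero_mem' := by intro e _ a b _; rfl
  smul_mem' := by
    intro c f hf e he a b h
    simp [hf e he a b h]

lemma mem_WW {S : Finset G.edgeSet} {f : V → ZMod 2} :
    f ∈ WW G S ↔ ∀ e ∈ S, ∀ a b, e.1 = s(a, b) → f a = f b := Iff.rfl

lemma WW_anti {S T : Finset G.edgeSet} (h : S ⊆ T) : WW G T ≤ WW G S :=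
  fun _ hf e he => hf e (h he)

noncomputable def dW (S : Finset G.edgeSet) : ℕ := Module.finrank (ZMod 2) (WW G S)

lemma dW_le (S : Finset G.edgeSet) : dW G S ≤ Fintype.card V := by
  have := Submodule.finrank_le (WW G S)
  rwa [Module.finrank_fintype_fun_eq_card] at this

lemma dW_anti {S T : Finset G.edgeSet} (h : S ⊆ T) : dW G T ≤ dW G S :=
  Submodule.finrank_mono (WW_anti G h)

variable [DecidableEq G.edgeSet]

lemma dW_submod (S T : Finset G.edgeSet) : dW G S + dW G T ≤ dW G (S ∪ T) + dW G (S ∩ T) := by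
  have h := Submodule.finrank_sup_add_finrank_inf_eq (WW G S) (WW G T)
  have h1 : WW G S ⊓ WW G T = WW G (S ∪ T) := by
    ext f
    simp only [Submodule.mem_inf, mem_WW, Finset.mem_union]
    constructor
    · rintro ⟨a, b⟩ e (he | he)
      · exact a e he
      · exact b e he
    · intro h
      exact ⟨fun e he => h e (Or.inl he), fun e he => h e (Or.inr he)⟩
  have h2 : WW G S ⊔ WW G T ≤ WW G (S ∩ T) :=
    sup_le (WW_anti G Finset.inter_subset_left) (WW_anti G Finset.inter_subset_right)
  have h3 := Submodule.finrank_mono h2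
  rw [h1] at h
  simp only [dW]; omega

lemma dW_empty : dW G ∅ = Fintype.card V := by
  have : WW G ∅ = ⊤ := by
    ext f; simp [mem_WW]
  rw [dW, this, finrank_top, Module.finrank_fintype_fun_eq_card]

lemma dW_single_ge (e : G.edgeSet) : Fintype.card V ≤ dW G {e} + 1 := by
  obtain ⟨e, he⟩ := e
  induction e using Sym2.ind with
  | _ a b =>
    let φ : (V → ZMod 2) →ₗ[ZMod 2] ZMod 2 :=
      LinearMap.proj (R := ZMod 2) (φ := fun _ : V => ZMod 2) a - LinearMap.proj (R := ZMod 2) (φ := fun _ : V => ZMod 2) b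
    have h1 := LinearMap.finrank_range_add_finrank_ker φ
    have h2 : Module.finrank (ZMod 2) (LinearMap.range φ) ≤ 1 := by
      have := Submodule.finrank_le (LinearMap.range φ)
      rwa [Module.finrank_self] at this
    have h3 : LinearMap.ker φ ≤ WW G {⟨s(a, b), he⟩} := by
      intro f hf e' he' c d h
      rw [Finset.mem_singleton] at he'
      subst he'
      have hab : f a = f b := by
        have : f a - f b = 0 := hf
        exact sub_eq_zero.1 this
      rcases Sym2.eq_iff.1 h with ⟨rfl, rfl⟩ | ⟨rfl, rfl⟩
      · exact hab
      · exact hab.symm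
    have h4 := Submodule.finrank_mono h3
    rw [Module.finrank_fintype_fun_eq_card] at h1
    simp only [dW]; omega

lemma dW_single_lt (e : G.edgeSet) : dW G {e} < Fintype.card V := by
  classical
  obtain ⟨e, he⟩ := e
  induction e using Sym2.ind with
  | _ a b =>
    have hab : a ≠ b := G.ne_of_adj he
    have h1 : WW G {⟨s(a, b), he⟩} < ⊤ := by
      rw [lt_top_iff_ne_top]
      intro hc
      have h2 : (Pi.single a 1 : V → ZMod 2) ∈ WW G {⟨s(a, b), he⟩} := by rw [hc]; trivial
      have h3 := h2 ⟨s(a, b), he⟩ (Finset.mem_singleton_self _) a b rfl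
      simp [hab.symm] at h3
    have := Submodule.finrank_lt h1.ne
    rwa [Module.finrank_fintype_fun_eq_card] at this

/-- the graphic rank function -/
noncomputable def graphRank [Fintype G.edgeSet] : RankFn G.edgeSet where
  r S := Fintype.card V - dW G S
  empty := by rw [dW_empty]; omega
  mono S T h := by have := dW_anti G h; omega
  unit i S := by
    have h1 := dW_submod G {i} S
    have h2 := dW_anti G (Finset.inter_subset_left (s₁ := {i}) (s₂ := S))
    have h3 := dW_single_ge G i
    have h4 := dW_le G ({i} ∩ S)
    rw [← Finset.insert_eq] at h1
    omega
  submod S T := by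
    have h1 := dW_submod G S T
    have := dW_le G S
    have := dW_le G T
    have := dW_le G (S ∪ T)
    have := dW_le G (S ∩ T)
    omega
  loopless i := by have := dW_single_lt G i; omega

end Graph

section Count
variable {V : Type*} [Fintype V] [DecidableEq V] (G : SimpleGraph V) [DecidableRel G.Adj]

lemma count_WW (S : Finset G.edgeSet) (m : ℕ) :
    Nat.card {f : V → Fin (2 ^ m) // ∀ e ∈ S, ∀ a b, e.1 = s(a, b) → f a = f b} = (2 ^ m) ^ dW G S := by
  classical
  let φ : Fin (2 ^ m) ≃ (Fin m → ZMod 2) := Fintype.equivOfCardEq (by simp [ZMod.card])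
  let ψ : {f : V → Fin (2 ^ m) // ∀ e ∈ S, ∀ a b, e.1 = s(a, b) → f a = f b} ≃ (Fin m → WW G S) :=
    { toFun := fun f i => ⟨fun v => φ (f.1 v) i, fun e he a b h => by
        show φ (f.1 a) i = φ (f.1 b) i
        rw [f.2 e he a b h]⟩
      invFun := fun g => ⟨fun v => φ.symm (fun i => (g i).1 v), fun e he a b h => by
        have : (fun i => (g i).1 a) = fun i => (g i).1 b := funext fun i => (g i).2 e he a b h
        show φ.symm (fun i => (g i).1 a) = φ.symm (fun i => (g i).1 b)
        rw [this]⟩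
      left_inv := fun f => by
        apply Subtype.ext
        funext v
        simp
      right_inv := fun g => by
        funext i
        apply Subtype.ext
        funext v
        simp }
  rw [Nat.card_congr ψ, Nat.card_fun, Nat.card_eq_fintype_card, Nat.card_eq_fintype_card,
    Module.card_eq_pow_finrank (K := ZMod 2), ZMod.card, Fintype.card_fin, dW, ← pow_mul, ← pow_mul, mul_comm]

lemma incl_excl (k : ℕ) : (G.numColorings k : ℤ) = ∑ S : Finset G.edgeSet, (-1 : ℤ) ^ S.card *
    (Nat.card {f : V → Fin k // ∀ e ∈ S, ∀ a b, e.1 = s(a, b) → f a = f b} : ℤ) := by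
  classical
  let mono : (V → Fin k) → Finset G.edgeSet := fun f =>
    Finset.univ.filter (fun e => ∀ a b, e.1 = s(a, b) → f a = f b)
  have h1 : ∀ S : Finset G.edgeSet,
      (Nat.card {f : V → Fin k // ∀ e ∈ S, ∀ a b, e.1 = s(a, b) → f a = f b} : ℤ)
        = ∑ f : V → Fin k, if S ⊆ mono f then 1 else 0 := by
    intro S
    rw [Nat.card_eq_fintype_card, Fintype.card_subtype, Finset.card_filter]
    push_cast
    refine Finset.sum_congr rfl fun f _ => ?_
    have : (∀ e ∈ S, ∀ a b, e.1 = s(a, b) → f a = f b) ↔ S ⊆ mono f := by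
      simp only [mono, Finset.subset_iff, Finset.mem_filter, Finset.mem_univ, true_and]
    simp only [this]
  have h2 : ∀ f : V → Fin k, (∀ a b, G.Adj a b → f a ≠ f b) ↔ mono f = ∅ := by
    intro f
    rw [Finset.eq_empty_iff_forall_notMem]
    simp only [mono, Finset.mem_filter, Finset.mem_univ, true_and]
    constructor
    · rintro h ⟨e, he⟩ hc
      induction e using Sym2.ind with
      | _ a b => exact h a b he (hc a b rfl)
    · intro h a b hab hf
      refine h ⟨s(a, b), hab⟩ fun c d hcd => ?_
      rcases Sym2.eq_iff.1 hcd with ⟨rfl, rfl⟩ | ⟨rfl, rfl⟩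
      · exact hf
      · exact hf.symm
  rw [SimpleGraph.numColorings, Fintype.card_subtype, Finset.card_filter]
  push_cast
  simp only [h1, Finset.mul_sum]
  rw [Finset.sum_comm]
  refine Finset.sum_congr rfl fun f _ => ?_
  have h3 := Finset.sum_powerset_neg_one_pow_card (x := mono f)
  have h4 : ∑ S : Finset G.edgeSet, (-1 : ℤ) ^ S.card * (if S ⊆ mono f then 1 else 0)
      = ∑ S ∈ (mono f).powerset, (-1 : ℤ) ^ S.card := by
    simp only [mul_ite, mul_one, mul_zero]
    rw [← Finset.sum_filter]
    refine Finset.sum_congr ?_ fun _ _ => rfl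
    ext S; simp
  rw [h4, h3]
  simp only [h2]

lemma poly_eq (P : Polynomial ℤ) (hP : ∀ k : ℕ, P.eval (k : ℤ) = G.numColorings k) :
    P = ∑ S : Finset G.edgeSet, Polynomial.C ((-1 : ℤ) ^ S.card) * Polynomial.X ^ dW G S := by
  refine Polynomial.eq_of_infinite_eval_eq _ _ ?_
  refine Set.infinite_of_injective_forall_mem (f := fun m : ℕ => (2 : ℤ) ^ m) ?_ ?_
  · exact pow_right_injective₀ (by norm_num) (by norm_num)
  · intro m
    have h := hP (2 ^ m)
    rw [incl_excl] at h
    simp only [count_WW] at h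
    push_cast at h
    rw [Set.mem_setOf_eq, h, Polynomial.eval_finset_sum]
    simp

lemma coeff_eq [DecidableEq G.edgeSet] (P : Polynomial ℤ) (hP : ∀ k : ℕ, P.eval (k : ℤ) = G.numColorings k) {i : ℕ}
    (hi : i ≤ Fintype.card V) : ((P.coeff (Fintype.card V - i) : ℤ) : ℝ) = (graphRank G).cc i := by
  rw [poly_eq G P hP, Polynomial.finsetSum_coeff, RankFn.cc]
  push_cast
  refine Finset.sum_congr rfl fun S _ => ?_
  have h1 := dW_le G S
  rw [Polynomial.coeff_C_mul, Polynomial.coeff_X_pow]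
  have : (graphRank G).r S = i ↔ Fintype.card V - i = dW G S := by
    change Fintype.card V - dW G S = i ↔ _
    omega
  simp only [this]
  split_ifs <;> simp

end Count
end ChromUni

/-- The absolute values of the coefficients of the chromatic polynomial of a finite
simple graph form a unimodal sequence: with `h_i = |c_{n−i}|`, there is an index
`0 ≤ j ≤ n` such that `h_0 ≤ h_1 ≤ … ≤ h_j` and `h_j ≥ h_{j+1} ≥ … ≥ h_n`. -/
theorem chromaticPolynomial_coeff_unimodal {V : Type*} [Fintype V] [DecidableEq V]
    (G : SimpleGraph V) [DecidableRel G.Adj] (P : Polynomial ℤ)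
    (hP : ∀ k : ℕ, P.eval (k : ℤ) = G.numColorings k) :
    ∃ j ≤ Fintype.card V,
      (∀ i₁ i₂, i₁ ≤ i₂ → i₂ ≤ j →
        |P.coeff (Fintype.card V - i₁)| ≤ |P.coeff (Fintype.card V - i₂)|) ∧
      (∀ i₁ i₂, j ≤ i₁ → i₁ ≤ i₂ → i₂ ≤ Fintype.card V →
        |P.coeff (Fintype.card V - i₂)| ≤ |P.coeff (Fintype.card V - i₁)|) := by
  classical
  obtain ⟨j, hj, h1, h2⟩ := ChromUni.unimodal_of_step (fun i => |(ChromUni.graphRank G).cc i|)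
    (fun i => (ChromUni.graphRank G).cc_step i) (Fintype.card V)
  have key : ∀ i, i ≤ Fintype.card V → ((|P.coeff (Fintype.card V - i)| : ℤ) : ℝ)
      = |(ChromUni.graphRank G).cc i| := by
    intro i hi
    rw [Int.cast_abs, ChromUni.coeff_eq G P hP hi]
  refine ⟨j, hj, fun i₁ i₂ h12 hi2 => ?_, fun i₁ i₂ hi1 h12 hi2 => ?_⟩
  · have := h1 i₁ i₂ h12 hi2
    rw [← key i₁ (by omega), ← key i₂ (by omega)] at this
    exact_mod_cast this
  · have := h2 i₁ i₂ hi1 h12 hi2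
    rw [← key i₁ (by omega), ← key i₂ (by omega)] at this
    exact_mod_cast this
end

section
/- Cycle graphs are chromatically unique: for n ≥ 3, if H is a finite simple graph whose chromatic polynomial equals the chromatic polynomial of the cycle graph C_n on n vertices, then H is isomorphic to C_n. -/
open Polynomial

/-- Number of proper colorings, without decidability. -/
noncomputable def ncol {V : Type*} (G : SimpleGraph V) (k : ℕ) : ℕ :=
  Nat.card {f : V → Fin k // ∀ a b, G.Adj a b → f a ≠ f b}

lemma ncol_iso {V W : Type*} {G : SimpleGraph V} {H : SimpleGraph W} (e : G ≃g H) (k : ℕ) :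
    ncol G k = ncol H k := by
  refine Nat.card_congr (Equiv.subtypeEquiv (e.toEquiv.arrowCongr (Equiv.refl _)) ?_)
  intro f
  constructor
  · intro h a b hab
    exact h (e.symm a) (e.symm b) (e.symm.map_rel_iff.2 hab)
  · intro h a b hab
    have := h (e a) (e b) (e.map_rel_iff.2 hab)
    change f (e.symm (e a)) ≠ f (e.symm (e b)) at this
    rwa [e.symm_apply_apply, e.symm_apply_apply] at this

lemma iso_cycle {V : Type*} [Fintype V] (G : SimpleGraph V) [DecidableRel G.Adj]
    (hG : G.Connected) (hd : ∀ v, G.degree v = 2) :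
    3 ≤ Fintype.card V ∧ Nonempty (SimpleGraph.cycleGraph (Fintype.card V) ≃g G) := by
  classical
  have hna : ¬ G.IsAcyclic := by
    intro h
    have h1 := SimpleGraph.IsTree.card_edgeFinset ⟨hG, h⟩
    have h2 := G.sum_degrees_eq_twice_card_edges
    simp [hd] at h2
    omega
  rw [SimpleGraph.isAcyclic_iff_free_cycleGraph] at hna
  push Not at hna
  obtain ⟨m, hm, hc⟩ := hna
  obtain ⟨f⟩ : (SimpleGraph.cycleGraph m).IsContained G := by
    simpa [SimpleGraph.Free] using hc
  have hdeg : ∀ x : Fin m, (SimpleGraph.cycleGraph m).degree x = 2 := by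
    obtain ⟨m, rfl⟩ := Nat.exists_eq_add_of_le' hm
    intro x
    exact SimpleGraph.cycleGraph_degree_three_le
  have hinj : Function.Injective f := f.injective
  have hnb : ∀ x, ((SimpleGraph.cycleGraph m).neighborFinset x).image f
      = G.neighborFinset (f x) := by
    intro x
    apply Finset.eq_of_subset_of_card_le
    · intro y hy
      simp only [Finset.mem_image, SimpleGraph.mem_neighborFinset] at hy ⊢
      obtain ⟨z, hz, rfl⟩ := hy
      exact f.toHom.map_adj hz
    · rw [Finset.card_image_of_injective _ hinj, SimpleGraph.card_neighborFinset_eq_degree,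
        SimpleGraph.card_neighborFinset_eq_degree, hd, hdeg]
  have hnb' : ∀ x y, G.Adj (f x) y → ∃ z, (SimpleGraph.cycleGraph m).Adj x z ∧ f z = y := by
    intro x y h
    have : y ∈ G.neighborFinset (f x) := by simpa using h
    rw [← hnb] at this
    simpa using this
  have hsurj : Function.Surjective f := by
    intro y
    obtain ⟨w⟩ := hG.preconnected (f ⟨0, by omega⟩) y
    have key : ∀ (a b : V) (w : G.Walk a b), (∃ x, f x = a) → ∃ x, f x = b := by
      intro a b w
      induction w with
      | nil => exact id
      | cons h p ih =>
        rintro ⟨x, rfl⟩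
        obtain ⟨z, -, hz⟩ := hnb' _ _ h
        exact ih ⟨z, hz⟩
    exact key _ _ w ⟨_, rfl⟩
  have hcard : m = Fintype.card V := by
    simpa using Fintype.card_of_bijective ⟨hinj, hsurj⟩
  subst hcard
  refine ⟨hm, ⟨⟨Equiv.ofBijective f ⟨hinj, hsurj⟩, ?_⟩⟩⟩
  intro a b
  change G.Adj (f a) (f b) ↔ _
  constructor
  · intro h
    obtain ⟨z, hz, hzb⟩ := hnb' _ _ h
    rwa [← hinj hzb]
  · intro h
    exact f.toHom.map_adj h

/-! Counting colorings of the cycle. -/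

/-- path colorings -/
abbrev PC (n k : ℕ) := {f : Fin (n+1) → Fin k // ∀ i : Fin n, f i.castSucc ≠ f i.succ}
/-- cycle colorings -/
abbrev CyC (n k : ℕ) := {f : Fin (n+1) → Fin k // (∀ i : Fin n, f i.castSucc ≠ f i.succ) ∧
  f (Fin.last n) ≠ f 0}


def pcSucc (n k : ℕ) : PC (n+1) k ≃ (Σ g : PC n k, {c : Fin k // c ≠ g.1 0}) where
  toFun f := ⟨⟨Fin.tail f.1, fun i => f.2 i.succ⟩, ⟨f.1 0, f.2 0⟩⟩
  invFun p := ⟨Fin.cons p.2.1 p.1.1, by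
    intro i
    refine Fin.cases ?_ (fun j => ?_) i
    · simpa using p.2.2
    · simpa using p.1.2 j⟩
  left_inv f := by
    apply Subtype.ext
    simp
  right_inv p := by
    rcases p with ⟨⟨g, hg⟩, ⟨c, hc⟩⟩
    rfl

lemma card_PC (n k : ℕ) : Fintype.card (PC n k) = k * (k-1)^n := by
  induction n with
  | zero =>
    have : Fintype.card (PC 0 k) = Fintype.card (Fin 1 → Fin k) :=
      Fintype.card_congr (Equiv.subtypeUnivEquiv (fun f i => i.elim0))
    simp [this]
  | succ n ih =>
    rw [Fintype.card_congr (pcSucc n k), Fintype.card_sigma]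
    simp [ih, Fintype.card_subtype_compl, pow_succ, mul_assoc]

/-- Split a path coloring by whether the endpoints agree. -/
def pcSplit (n k : ℕ) : PC (n+1) k ≃ CyC (n+1) k ⊕ CyC n k where
  toFun f := if h : f.1 (Fin.last (n+1)) = f.1 0 then
      Sum.inr ⟨Fin.tail f.1, fun i => f.2 i.succ, fun h' => f.2 0 (by
        simpa [Fin.tail, ← h] using h')⟩
    else Sum.inl ⟨f.1, f.2, h⟩
  invFun := Sum.elim (fun g => ⟨g.1, g.2.1⟩) (fun g => ⟨Fin.cons (g.1 (Fin.last n)) g.1, by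
    intro i
    refine Fin.cases ?_ (fun j => ?_) i
    · simpa using g.2.2
    · simpa using g.2.1 j⟩)
  left_inv f := by
    by_cases h : f.1 (Fin.last (n+1)) = f.1 0
    · refine (congrArg _ (dif_pos h)).trans ?_
      apply Subtype.ext
      show Fin.cons (Fin.tail f.1 (Fin.last n)) (Fin.tail f.1) = f.1
      have : Fin.tail f.1 (Fin.last n) = f.1 0 := by rw [← h]; rfl
      rw [this]; simp
    · exact congrArg _ (dif_neg h)
  right_inv := by
    rintro (g | g)
    · have := g.2.2
      exact dif_neg this
    · have : (Fin.cons (g.1 (Fin.last n)) g.1 : Fin (n+2) → Fin k) (Fin.last (n+1))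
        = (Fin.cons (g.1 (Fin.last n)) g.1 : Fin (n+2) → Fin k) 0 := by
        rw [← Fin.succ_last]; simp
      exact dif_pos this

lemma card_CC (n k : ℕ) : (Fintype.card (CyC n (k+1)) : ℤ) = (k:ℤ)^(n+1) + (-1)^(n+1) * k := by
  induction n with
  | zero =>
    have : IsEmpty (CyC 0 (k+1)) := ⟨fun f => f.2.2 rfl⟩
    simp
  | succ n ih =>
    have h := Fintype.card_congr (pcSplit n (k+1))
    rw [card_PC, Fintype.card_sum] at h
    have h3 : ((k:ℤ)+1) * k^(n+1) = Fintype.card (CyC (n+1) (k+1)) + Fintype.card (CyC n (k+1)) := by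
      exact_mod_cast h
    rw [ih] at h3
    linear_combination -h3

lemma ncol_cycle (n k : ℕ) (hn : 3 ≤ n) :
    (ncol (SimpleGraph.cycleGraph n) (k+1) : ℤ) = (k:ℤ)^n + (-1)^n * k := by
  obtain ⟨n, rfl⟩ := Nat.exists_eq_add_of_le' hn
  rw [← card_CC, ncol, ← Nat.card_eq_fintype_card]
  congr 1
  refine Nat.card_congr (Equiv.subtypeEquivRight ?_)
  intro f
  constructor
  · intro h
    refine ⟨fun i => h _ _ ?_, h _ _ ?_⟩
    · refine SimpleGraph.cycleGraph_adj.2 (Or.inr ?_)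
      refine sub_eq_of_eq_add' ?_
      exact (Fin.coeSucc_eq_succ).symm
    · refine SimpleGraph.cycleGraph_adj.2 (Or.inr ?_)
      refine sub_eq_of_eq_add' ?_
      exact (Fin.last_add_one _).symm
  · rintro ⟨h1, h2⟩
    have key : ∀ a : Fin (n+3), f a ≠ f (a+1) := by
      intro a
      refine Fin.lastCases ?_ (fun j => ?_) a
      · simpa using h2
      · simpa using h1 j
    intro a b hab
    rcases SimpleGraph.cycleGraph_adj.1 hab with h | h
    · have := key b
      rw [← h] at this
      simpa using this.symm
    · have := key a
      rw [← h] at this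
      simpa using this

lemma card_involution_split {S : Type*} [Finite S] (p : S → Prop) (φ : S → S)
    (h1 : ∀ s, φ (φ s) = s) (h2 : ∀ s, p (φ s) ↔ ¬ p s) :
    Nat.card S = 2 * Nat.card {s // p s} := by
  classical
  have := Fintype.ofFinite S
  have e : {s // p s} ≃ {s // ¬ p s} :=
    { toFun := fun s => ⟨φ s.1, fun h => ((h2 _).1 h) s.2⟩
      invFun := fun s => ⟨φ s.1, (h2 _).2 s.2⟩
      left_inv := fun s => Subtype.ext (h1 _)
      right_inv := fun s => Subtype.ext (h1 _) }
  have h3 := Nat.card_congr (Equiv.sumCompl p)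
  rw [Nat.card_sum, ← Nat.card_congr e] at h3
  omega

lemma fin3_refl (a b : Fin 3) (h : a ≠ b) : (2 * a - b = a + 1 ↔ ¬ b = a + 1) ∧ a ≠ 2 * a - b := by
  revert a b; decide

lemma fin3_invol (a b : Fin 3) : 2 * a - (2 * a - b) = b := by
  revert a b; decide

lemma fin3_inj (a b c : Fin 3) (h : 2 * a - b = 2 * a - c) : b = c := by
  revert a b c; decide

lemma fin3_self (a : Fin 3) : 2 * a - a = a := by
  revert a; decide

lemma leaf_four_dvd {V : Type*} [Finite V] (G : SimpleGraph V) (u v w : V)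
    (huv : G.Adj u v) (huw : G.Adj u w) (hvw : v ≠ w) (hleaf : ∀ x, G.Adj v x → x = u) :
    4 ∣ ncol G 3 := by
  classical
  have hvu : v ≠ u := huv.ne'
  let S := {f : V → Fin 3 // ∀ a b, G.Adj a b → f a ≠ f b}
  let φ : S → S := fun f => ⟨Function.update f.1 v (2 * f.1 u - f.1 v), by
    intro a b hab
    by_cases ha : a = v
    · subst ha
      have := hleaf _ hab
      subst this
      simp only [Function.update_self, Function.update_of_ne hab.ne']
      exact (fin3_refl _ _ (f.2 _ _ huv)).2.symm
    · by_cases hb : b = v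
      · subst hb
        have := hleaf _ hab.symm
        subst this
        simp only [Function.update_self, Function.update_of_ne hab.ne]
        exact (fin3_refl _ _ (f.2 _ _ huv)).2
      · simp only [Function.update_of_ne ha, Function.update_of_ne hb]
        exact f.2 _ _ hab⟩
  have hA : Nat.card S = 2 * Nat.card {f : S // f.1 v = f.1 u + 1} := by
    refine card_involution_split _ φ ?_ ?_
    · intro f
      apply Subtype.ext
      funext x
      by_cases hx : x = v
      · subst hx
        simp [φ, Function.update_of_ne hvu.symm]
      · simp [φ, hx]
    · intro f
      simp only [φ, Function.update_self, Function.update_of_ne hvu.symm]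
      exact (fin3_refl _ _ (f.2 _ _ huv)).1
  let T := {f : S // f.1 v = f.1 u + 1}
  let ψ : T → T := fun f => ⟨⟨fun x => if x = v then f.1.1 v else 2 * f.1.1 u - f.1.1 x, by
    intro a b hab
    by_cases ha : a = v
    · subst ha
      have := hleaf _ hab
      subst this
      simp only [if_true, if_neg hab.ne', fin3_self]
      exact f.1.2 _ _ hab
    · by_cases hb : b = v
      · subst hb
        have := hleaf _ hab.symm
        subst this
        simp only [if_true, if_neg hab.ne, fin3_self]
        exact f.1.2 _ _ hab
      · simp only [if_neg ha, if_neg hb]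
        exact fun h => f.1.2 _ _ hab (fin3_inj _ _ _ h)⟩, by
    simp only [if_true, if_neg hvu.symm, fin3_self]
    exact f.2⟩
  have hB : Nat.card T = 2 * Nat.card {f : T // f.1.1 w = f.1.1 u + 1} := by
    refine card_involution_split _ ψ ?_ ?_
    · intro f
      apply Subtype.ext
      apply Subtype.ext
      funext x
      by_cases hx : x = v
      · subst hx
        simp [ψ]
      · simp [ψ, hx, hvu.symm, fin3_self]
    · intro f
      simp only [ψ, if_neg hvw.symm, if_neg hvu.symm, fin3_self]
      exact (fin3_refl _ _ (f.1.2 _ _ huw)).1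
  have hS : ncol G 3 = Nat.card S := rfl
  change Nat.card S = 2 * Nat.card T at hA
  omega

lemma disconnected_sq_dvd {V : Type*} (G : SimpleGraph V) (a b : V)
    (hab : ¬ G.Reachable a b) (k : ℕ) : (k+1)^2 ∣ ncol G (k+1) := by
  classical
  let S := {f : V → Fin (k+1) // ∀ a b, G.Adj a b → f a ≠ f b}
  have hr : ∀ x y, G.Adj x y → (G.Reachable a x ↔ G.Reachable a y) := fun x y h =>
    ⟨fun h' => h'.trans h.reachable, fun h' => h'.trans h.symm.reachable⟩
  let sh : (V → Fin (k+1)) → Fin (k+1) → Fin (k+1) → V → Fin (k+1) :=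
    fun f i j x => if G.Reachable a x then f x + i else f x + j
  have hsh : ∀ f i j, (∀ x y, G.Adj x y → f x ≠ f y) →
      (∀ x y, G.Adj x y → sh f i j x ≠ sh f i j y) := by
    intro f i j hf x y hxy
    by_cases hx : G.Reachable a x
    · have hy := (hr x y hxy).1 hx
      simpa [sh, hx, hy] using hf x y hxy
    · have hy : ¬ G.Reachable a y := fun h => hx ((hr x y hxy).2 h)
      simpa [sh, hx, hy] using hf x y hxy
  have ha : ∀ f i j, sh f i j a = f a + i := fun f i j => if_pos (SimpleGraph.Reachable.refl a)
  have hb : ∀ f i j, sh f i j b = f b + j := fun f i j => if_neg hab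
  let e : S ≃ (Fin (k+1) × Fin (k+1)) × {f : S // f.1 a = 0 ∧ f.1 b = 0} :=
    { toFun := fun f => ((f.1 a, f.1 b), ⟨⟨sh f.1 (-f.1 a) (-f.1 b), hsh _ _ _ f.2⟩, by
        simp [ha, hb]⟩)
      invFun := fun p => ⟨sh p.2.1.1 p.1.1 p.1.2, hsh _ _ _ p.2.1.2⟩
      left_inv := fun f => by
        apply Subtype.ext
        funext x
        by_cases hx : G.Reachable a x <;> simp [sh, hx]
      right_inv := by
        rintro ⟨⟨i, j⟩, ⟨f, hf1, hf2⟩⟩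
        refine Prod.ext (Prod.ext ?_ ?_) (Subtype.ext (Subtype.ext ?_))
        · simp [ha, hf1]
        · simp [hb, hf2]
        · funext x
          simp only [ha, hb, hf1, hf2]
          by_cases hx : G.Reachable a x <;> simp [sh, hx] }
  have : ncol G (k+1) = Nat.card S := rfl
  rw [this, Nat.card_congr e, Nat.card_prod, Nat.card_prod]
  simp [sq]

lemma pow_expand (x : ℤ) (j : ℕ) : ∃ c : ℤ, (x-1)^j = (-1)^j * (1 - j * x) + c * x^2 := by
  induction j with
  | zero => exact ⟨0, by simp⟩
  | succ j ih =>
    obtain ⟨c, hc⟩ := ih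
    refine ⟨c * (x - 1) - (-1)^j * j , ?_⟩
    rw [pow_succ, hc]
    push_cast
    ring

lemma not_sq_dvd (n : ℕ) (hn : 2 ≤ n) : ¬ ((n:ℤ)^2 ∣ ((n:ℤ)-1)^n + (-1)^n * ((n:ℤ)-1)) := by
  intro h
  obtain ⟨c, hc⟩ := pow_expand n n
  rw [hc] at h
  have h2 : (n:ℤ)^2 ∣ (-1)^n * n := by
    have : (-1:ℤ)^n * n = ((-1)^n * (1 - n * n) + c * n^2 + (-1)^n * ((n:ℤ)-1))
      + n^2 * ((-1)^n - c) := by ring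
    rw [this]
    exact dvd_add h (dvd_mul_right _ _)
  have h3 : (n:ℤ)^2 ∣ n := by
    rcases neg_one_pow_eq_or ℤ n with h | h <;> simpa [h] using h2
  have h4 : n^2 ∣ n := by exact_mod_cast h3
  have := Nat.le_of_dvd (by omega) h4
  nlinarith

lemma not_four_dvd (n : ℕ) (hn : 3 ≤ n) : ¬ ((4:ℤ) ∣ 2^n + (-1)^n * 2) := by
  obtain ⟨n, rfl⟩ := Nat.exists_eq_add_of_le' hn
  intro h
  rcases neg_one_pow_eq_or ℤ (n+3) with h' | h' <;> rw [h', pow_add] at h <;> omega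

/-! Bonferroni bounds -/

/-- functions monochromatic on `e` -/
def monoFn {V : Type*} (k : ℕ) (e : Sym2 V) : Set (V → Fin k) := {f | (e.map f).IsDiag}

lemma mem_monoFn {V : Type*} (k : ℕ) (a b : V) (f : V → Fin k) :
    f ∈ monoFn k s(a, b) ↔ f a = f b := by
  simp [monoFn]

lemma card_monoFn {V : Type*} [Fintype V] (k : ℕ) (e : Sym2 V) (he : ¬ e.IsDiag) :
    (monoFn k e).ncard = k ^ (Fintype.card V - 1) := by
  classical
  induction e with | _ a b =>
  have hab : a ≠ b := by simpa using he
  let φ : monoFn k s(a, b) ≃ ({x // x ≠ a} → Fin k) :=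
    { toFun := fun f x => f.1 x
      invFun := fun g => ⟨fun x => if h : x = a then g ⟨b, hab.symm⟩ else g ⟨x, h⟩, by
        rw [mem_monoFn]; simp [hab.symm]⟩
      left_inv := by
        rintro ⟨f, hf⟩
        rw [mem_monoFn] at hf
        apply Subtype.ext
        funext x
        by_cases hx : x = a
        · subst hx; simp [hf]
        · simp [hx]
      right_inv := by
        intro g
        funext x
        simp [x.2] }
  rw [← Nat.card_coe_set_eq, Nat.card_congr φ, Nat.card_eq_fintype_card]
  simp [Fintype.card_subtype_compl]

lemma card_monoFn_inter {V : Type*} [Fintype V] (k : ℕ) (e e' : Sym2 V) (he : ¬ e.IsDiag)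
    (he' : ¬ e'.IsDiag) (hne : e ≠ e') :
    (monoFn k e ∩ monoFn k e').ncard ≤ k ^ (Fintype.card V - 2) := by
  classical
  obtain ⟨c, d, rfl, hc⟩ : ∃ c d, e' = s(c, d) ∧ c ∉ e := by
    induction e' with | _ c d =>
    have hcd : c ≠ d := by simpa using he'
    by_cases hc : c ∈ e
    · refine ⟨d, c, Sym2.eq_swap, fun hd => hne ?_⟩
      exact (Sym2.mem_and_mem_iff hcd).1 ⟨hc, hd⟩
    · exact ⟨c, d, rfl, hc⟩
  induction e with | _ a b =>
  have hab : a ≠ b := by simpa using he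
  have hcd : c ≠ d := by simpa using he'
  simp only [Sym2.mem_iff, not_or] at hc
  obtain ⟨hca, hcb⟩ := hc
  let T := {x // x ∉ ({a, c} : Finset V)}
  let φ : ↥(monoFn k s(a, b) ∩ monoFn k s(c, d)) → (T → Fin k) := fun f x => f.1 x
  have hφ : Function.Injective φ := by
    rintro ⟨f, hf⟩ ⟨g, hg⟩ h
    rw [Set.mem_inter_iff, mem_monoFn, mem_monoFn] at hf hg
    have h0 : ∀ x, x ≠ a → x ≠ c → f x = g x := fun x h1 h2 =>
      congrFun h ⟨x, by simp [h1, h2]⟩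
    have hb := h0 b hab.symm (Ne.symm hcb)
    have ha : f a = g a := by rw [hf.1, hg.1, hb]
    have hd : f d = g d := by
      by_cases hda : d = a
      · rw [hda, ha]
      · exact h0 d hda hcd.symm
    apply Subtype.ext
    funext x
    change f x = g x
    by_cases hxa : x = a
    · rw [hxa, ha]
    · by_cases hxc : x = c
      · rw [hxc, hf.2, hg.2, hd]
      · exact h0 x hxa hxc
  rw [← Nat.card_coe_set_eq]
  refine (Nat.card_le_card_of_injective φ hφ).trans ?_
  have hT : Fintype.card T = Fintype.card V - 2 := by
    have := Fintype.card_subtype_compl (fun x => x ∈ ({a, c} : Finset V))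
    rw [Fintype.card_coe, Finset.card_pair (Ne.symm hca)] at this
    exact this
  rw [Nat.card_eq_fintype_card, Fintype.card_fun, hT]
  simp

lemma union_upper {α ι : Type*} [Finite α] (A : ι → Set α) (S : Finset ι) (a : ℕ)
    (h : ∀ i ∈ S, (A i).ncard = a) : (⋃ i ∈ S, A i).ncard ≤ S.card * a := by
  classical
  induction S using Finset.induction_on with
  | empty => simp
  | insert i S hi ih =>
    rw [Finset.set_biUnion_insert, Finset.card_insert_of_notMem hi]
    have h1 := ih (fun j hj => h j (Finset.mem_insert_of_mem hj))
    have h2 := h i (Finset.mem_insert_self _ _)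
    have h3 := Set.ncard_union_le (A i) (⋃ j ∈ S, A j)
    rw [add_mul]
    omega

lemma union_inter_upper {α ι : Type*} [Finite α] (A : ι → Set α) (S : Finset ι) (a : ℕ)
    (B : Set α) (h : ∀ i ∈ S, (B ∩ A i).ncard ≤ a) : (B ∩ ⋃ i ∈ S, A i).ncard ≤ S.card * a := by
  classical
  induction S using Finset.induction_on with
  | empty => simp
  | insert i S hi ih =>
    rw [Finset.set_biUnion_insert, Finset.card_insert_of_notMem hi, Set.inter_union_distrib_left]
    have h1 := ih (fun j hj => h j (Finset.mem_insert_of_mem hj))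
    have h2 := h i (Finset.mem_insert_self _ _)
    have h3 := Set.ncard_union_le (B ∩ A i) (B ∩ ⋃ j ∈ S, A j)
    rw [add_mul]
    omega

lemma union_lower {α ι : Type*} [Finite α] (A : ι → Set α) (S : Finset ι) (a b : ℕ)
    (h : ∀ i ∈ S, (A i).ncard = a) (h' : ∀ i ∈ S, ∀ j ∈ S, i ≠ j → (A i ∩ A j).ncard ≤ b) :
    S.card * a ≤ (⋃ i ∈ S, A i).ncard + S.card ^ 2 * b := by
  classical
  induction S using Finset.induction_on with
  | empty => simp
  | insert i S hi ih =>
    rw [Finset.set_biUnion_insert, Finset.card_insert_of_notMem hi]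
    have h1 := ih (fun j hj => h j (Finset.mem_insert_of_mem hj)) (fun j hj l hl =>
      h' j (Finset.mem_insert_of_mem hj) l (Finset.mem_insert_of_mem hl))
    have h2 := h i (Finset.mem_insert_self _ _)
    have h3 := Set.ncard_union_add_ncard_inter (A i) (⋃ j ∈ S, A j)
    have h4 := union_inter_upper A S b (A i) (fun j hj => h' i (Finset.mem_insert_self _ _) j
      (Finset.mem_insert_of_mem hj) (fun hij => hi (hij ▸ hj)))
    nlinarith

lemma ncol_add_bad {V : Type*} [Fintype V] (G : SimpleGraph V) [Fintype G.edgeSet] (k : ℕ) :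
    ncol G k + (⋃ e ∈ G.edgeFinset, monoFn k e).ncard = k ^ Fintype.card V := by
  classical
  have : ncol G k = ((⋃ e ∈ G.edgeFinset, monoFn k e)ᶜ : Set (V → Fin k)).ncard := by
    rw [ncol, ← Nat.card_coe_set_eq]
    refine Nat.card_congr (Equiv.subtypeEquivRight fun f => ?_)
    simp only [Set.mem_compl_iff, Set.mem_iUnion, not_exists, SimpleGraph.mem_edgeFinset]
    constructor
    · intro h e
      induction e with | _ a b =>
      intro hab
      rw [mem_monoFn]
      exact h a b hab
    · intro h a b hab
      have := h s(a, b) hab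
      rwa [mem_monoFn] at this
  rw [this, add_comm, Set.ncard_add_ncard_compl]
  simp

lemma ncol_lower {V : Type*} [Fintype V] (G : SimpleGraph V) [Fintype G.edgeSet] (k : ℕ) :
    k ^ Fintype.card V ≤ ncol G k + G.edgeFinset.card * k ^ (Fintype.card V - 1) := by
  have h1 := ncol_add_bad G k
  have h2 := union_upper (monoFn k) G.edgeFinset _ (fun e he => card_monoFn k e
    (G.not_isDiag_of_mem_edgeFinset he))
  omega

lemma ncol_upper {V : Type*} [Fintype V] (G : SimpleGraph V) [Fintype G.edgeSet] (k : ℕ) :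
    ncol G k + G.edgeFinset.card * k ^ (Fintype.card V - 1) ≤
      k ^ Fintype.card V + G.edgeFinset.card ^ 2 * k ^ (Fintype.card V - 2) := by
  have h1 := ncol_add_bad G k
  have h2 := union_lower (monoFn k) G.edgeFinset _ (k ^ (Fintype.card V - 2)) (fun e he => card_monoFn k e
    (G.not_isDiag_of_mem_edgeFinset he)) (fun e he e' he' hne => card_monoFn_inter k e e'
      (G.not_isDiag_of_mem_edgeFinset he) (G.not_isDiag_of_mem_edgeFinset he') hne)
  omega

lemma card_le_of_ncol {V W : Type*} [Fintype V] [Fintype W] (G : SimpleGraph V)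
    (H : SimpleGraph W) (h : ∀ k, ncol G k = ncol H k) : Fintype.card V ≤ Fintype.card W := by
  classical
  by_contra! hlt
  set m := G.edgeFinset.card with hm
  have h1 := ncol_lower G (m+2)
  have h2 := ncol_add_bad H (m+2)
  have h3 : (m+2) ^ Fintype.card W ≤ (m+2) ^ (Fintype.card V - 1) :=
    Nat.pow_le_pow_right (by omega) (by omega)
  rw [h, ← hm] at h1
  have h4 : (m+2) ^ Fintype.card V = (m+2) ^ (Fintype.card V - 1) * (m+2) := by
    rw [← pow_succ]; congr 1; omega
  have h5 : 0 < (m+2) ^ (Fintype.card V - 1) := by positivity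
  nlinarith

lemma edges_le_of_ncol {V W : Type*} [Fintype V] [Fintype W] (G : SimpleGraph V)
    (H : SimpleGraph W) [Fintype G.edgeSet] [Fintype H.edgeSet]
    (h : ∀ k, ncol G k = ncol H k) (hc : Fintype.card V = Fintype.card W)
    (h2 : 2 ≤ Fintype.card V) : G.edgeFinset.card ≤ H.edgeFinset.card := by
  by_contra! hlt
  set m := G.edgeFinset.card with hm
  set m' := H.edgeFinset.card with hm'
  obtain ⟨N, hN⟩ := Nat.exists_eq_add_of_le' h2
  have h1 := ncol_upper G (m^2+1)
  have h3 := ncol_lower H (m^2+1)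
  rw [h, ← hm, hN] at h1
  rw [← hc, ← hm', hN] at h3
  simp only [show N + 2 - 1 = N + 1 from rfl, show N + 2 - 2 = N from rfl] at h1 h3
  have h5 : 0 < (m^2+1) ^ N := by positivity
  have h6 : (m' + 1) * (m^2+1)^(N+1) ≤ m * (m^2+1)^(N+1) := Nat.mul_le_mul_right _ hlt
  have h7 : (m^2+1)^(N+1) ≤ m^2 * (m^2+1)^N := by linarith
  rw [pow_succ] at h7
  nlinarith

lemma numColorings_eq_ncol {V : Type*} [Fintype V] [DecidableEq V]
    (G : SimpleGraph V) [DecidableRel G.Adj] (k : ℕ) : G.numColorings k = ncol G k := by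
  rw [ncol, Nat.card_eq_fintype_card, SimpleGraph.numColorings]

/-- Cycle graphs are chromatically unique: for `n ≥ 3`, if `H` is a finite simple graph
whose chromatic polynomial equals the chromatic polynomial of a cycle graph `C` on `n`
vertices (a connected graph in which every vertex has degree `2`), then `H ≃g C`. -/
theorem cycleGraph_chromatically_unique {V W : Type*} [Fintype V] [DecidableEq V]
    [Fintype W] [DecidableEq W]
    (C : SimpleGraph V) [DecidableRel C.Adj] (H : SimpleGraph W) [DecidableRel H.Adj]
    (hn : 3 ≤ Fintype.card V)
    (hC : C.Connected ∧ ∀ v, C.degree v = 2)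
    (hPoly : ∀ k : ℕ, H.numColorings k = C.numColorings k) :
    Nonempty (H ≃g C) := by
  have hP : ∀ k, ncol H k = ncol C k := fun k => by
    rw [← numColorings_eq_ncol, ← numColorings_eq_ncol, hPoly]
  obtain ⟨-, ⟨eC⟩⟩ := iso_cycle C hC.1 hC.2
  have hcard : Fintype.card W = Fintype.card V :=
    le_antisymm (card_le_of_ncol _ _ hP) (card_le_of_ncol _ _ (fun k => (hP k).symm))
  have hedge := edges_le_of_ncol H C hP hcard (by omega)
  have hform : ∀ k : ℕ, (ncol H (k+1) : ℤ)
      = (k:ℤ)^(Fintype.card V) + (-1)^(Fintype.card V) * k := fun k => by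
    rw [hP, ← ncol_iso eC, ncol_cycle _ _ hn]
  have hne : Nonempty W := Fintype.card_pos_iff.1 (by omega)
  have hconn : H.Connected := by
    refine ⟨?_⟩
    intro a b
    by_contra hab
    have h1 := disconnected_sq_dvd H a b hab (Fintype.card V - 1)
    have h2 := hform (Fintype.card V - 1)
    apply not_sq_dvd (Fintype.card V) (by omega)
    have h3 : ((Fintype.card V - 1 : ℕ) : ℤ) = (Fintype.card V : ℤ) - 1 := by
      push_cast [show 1 ≤ Fintype.card V by omega]; ring
    rw [h3] at h2
    rw [← h2]
    have h4 : Fintype.card V - 1 + 1 = Fintype.card V := by omega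
    rw [h4] at h1 ⊢
    exact_mod_cast h1
  have hnt : Nontrivial W := Fintype.one_lt_card_iff_nontrivial.1 (by omega)
  have hdeg2 : ∀ v, 2 ≤ H.degree v := by
    intro v
    have hpos := hconn.preconnected.degree_pos_of_nontrivial v
    by_contra! hlt
    have h1 : H.degree v = 1 := by omega
    obtain ⟨u, hu, huniq⟩ := SimpleGraph.degree_eq_one_iff_existsUnique_adj.1 h1
    have hw : ∃ w, H.Adj u w ∧ v ≠ w := by
      by_contra! hall
      have hreach : ∀ x y, H.Walk x y → (x = v ∨ x = u) → (y = v ∨ y = u) := by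
        intro x y p
        induction p with
        | nil => exact id
        | cons h p ih =>
          rintro (rfl | rfl)
          · exact ih (Or.inr (huniq _ h))
          · exact ih (Or.inl (hall _ h).symm)
      have hsub : (Finset.univ : Finset W) ⊆ {v, u} := by
        intro y _
        obtain ⟨p⟩ := hconn.preconnected v y
        simpa using hreach v y p (Or.inl rfl)
      have := (Finset.card_le_card hsub).trans Finset.card_le_two
      rw [Finset.card_univ] at this
      omega
    obtain ⟨w, huw, hvw⟩ := hw
    have h4 := leaf_four_dvd H u v w hu.symm huw hvw huniq
    have h5 := hform 2
    apply not_four_dvd (Fintype.card V) hn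
    rw [show ((2:ℕ):ℤ) = 2 from rfl] at h5
    rw [← h5]
    exact_mod_cast h4
  have hsumH := H.sum_degrees_eq_twice_card_edges
  have hsumC := C.sum_degrees_eq_twice_card_edges
  simp only [hC.2, Finset.sum_const, Finset.card_univ, smul_eq_mul] at hsumC
  have hdeg : ∀ v, H.degree v = 2 := by
    have h1 : ∑ _v : W, 2 = ∑ v, H.degree v := by
      apply le_antisymm (Finset.sum_le_sum fun v _ => hdeg2 v)
      rw [hsumH, Finset.sum_const, Finset.card_univ, smul_eq_mul]
      omega
    have h2 := (Finset.sum_eq_sum_iff_of_le fun v _ => hdeg2 v).1 h1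
    intro v
    exact (h2 v (Finset.mem_univ v)).symm
  obtain ⟨-, ⟨eH⟩⟩ := iso_cycle H hconn hdeg
  rw [hcard] at eH
  exact ⟨eH.symm.trans eC⟩
end

section
/- Let G and H be finite connected simple graphs with equal chromatic polynomials, P_G = P_H. Then G and H have the same number of vertices, the same number of edges, and the same number of triangles (3-element vertex subsets that are pairwise adjacent); moreover, G contains a cycle if and only if H does, and in that case G and H have the same girth. -/
open Polynomial

namespace ChromAux

open SimpleGraph

set_option linter.unusedSectionVars false

variable {V : Type*} [Fintype V] [DecidableEq V]

/-- The spanning graph with edge set `S`. -/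
abbrev gr (S : Finset (Sym2 V)) : SimpleGraph V := fromEdgeSet (S : Set (Sym2 V))

/-- The number of connected components of the spanning graph with edge set `S`. -/
noncomputable def cc (S : Finset (Sym2 V)) : ℕ := Nat.card (gr S).ConnectedComponent

lemma gr_mono {S T : Finset (Sym2 V)} (h : S ⊆ T) : gr S ≤ gr T :=
  fromEdgeSet_mono (by exact_mod_cast h)

lemma cc_anti {S T : Finset (Sym2 V)} (h : S ⊆ T) : cc T ≤ cc S :=
  ConnectedComponent.card_le_card_of_le (gr_mono h)

lemma reach_insert {S : Finset (Sym2 V)} {u v a b : V}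
    (h : (gr (insert s(u, v) S)).Reachable a b) :
    (gr S).Reachable a b ∨ ((gr S).Reachable a u ∧ (gr S).Reachable v b) ∨
      ((gr S).Reachable a v ∧ (gr S).Reachable u b) := by
  obtain ⟨p⟩ := h
  induction p with
  | nil => exact Or.inl (Reachable.refl _)
  | @cons a c b hac p ih =>
    simp only [fromEdgeSet_adj, Finset.coe_insert, Set.mem_insert_iff, Finset.mem_coe] at hac
    obtain ⟨h | h, hne⟩ := hac
    · rw [Sym2.eq_iff] at h
      rcases h with ⟨rfl, rfl⟩ | ⟨rfl, rfl⟩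
      · rcases ih with ih | ih | ih
        · exact Or.inr (Or.inl ⟨Reachable.refl _, ih⟩)
        · exact Or.inr (Or.inl ⟨Reachable.refl _, ih.2⟩)
        · exact Or.inl ih.2
      · rcases ih with ih | ih | ih
        · exact Or.inr (Or.inr ⟨Reachable.refl _, ih⟩)
        · exact Or.inl ih.2
        · exact Or.inr (Or.inr ⟨Reachable.refl _, ih.2⟩)
    · have hac : (gr S).Reachable a c := by
        apply Adj.reachable
        simp [h, hne]
      rcases ih with ih | ih | ih
      · exact Or.inl (hac.trans ih)
      · exact Or.inr (Or.inl ⟨hac.trans ih.1, ih.2⟩)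
      · exact Or.inr (Or.inr ⟨hac.trans ih.1, ih.2⟩)

lemma cc_insert_reach {S : Finset (Sym2 V)} {u v : V} (h : (gr S).Reachable u v) :
    cc S ≤ cc (insert s(u, v) S) := by
  apply Nat.card_le_card_of_injective
    (ConnectedComponent.map (Hom.ofLE (gr_mono (Finset.subset_insert s(u, v) S))))
  intro x y
  induction x using ConnectedComponent.ind
  induction y using ConnectedComponent.ind
  intro hxy
  simp only [ConnectedComponent.map_mk, ConnectedComponent.eq] at hxy ⊢
  rcases reach_insert hxy with h1 | h1 | h1
  · exact h1
  · exact h1.1.trans (h.trans h1.2)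
  · exact h1.1.trans (h.symm.trans h1.2)

lemma cc_insert_le {S : Finset (Sym2 V)} (e : Sym2 V) :
    cc S ≤ cc (insert e S) + 1 := by
  classical
  induction e with | h u v
  unfold cc
  rw [← Finite.card_option]
  apply Nat.card_le_card_of_injective
    (fun x : (gr S).ConnectedComponent =>
      if x = (gr S).connectedComponentMk v then none else
      some (ConnectedComponent.map (Hom.ofLE (gr_mono (Finset.subset_insert s(u, v) S))) x))
  intro x y
  induction x using ConnectedComponent.ind with | _ x
  induction y using ConnectedComponent.ind with | _ y
  intro hxy
  simp only [ConnectedComponent.map_mk, ConnectedComponent.eq] at hxy ⊢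
  split_ifs at hxy with h1 h2 h2
  · exact h1.trans h2.symm
  · simp only [Option.some.injEq, ConnectedComponent.eq] at hxy
    rcases reach_insert hxy with h | h | h
    · exact h
    · exact absurd h.2.symm h2
    · exact absurd h.1 h1

lemma cc_insert_lt {S : Finset (Sym2 V)} {u v : V} (h : ¬ (gr S).Reachable u v) :
    cc (insert s(u, v) S) < cc S := by
  classical
  unfold cc
  have hle := gr_mono (Finset.subset_insert s(u, v) S)
  have hs := ConnectedComponent.surjective_map_ofLE hle
  have := Fintype.ofFinite (gr S).ConnectedComponent
  have := Fintype.ofFinite (gr (insert s(u, v) S)).ConnectedComponent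
  rw [Nat.card_eq_fintype_card, Nat.card_eq_fintype_card]
  apply Fintype.card_lt_of_surjective_not_injective _ hs
  intro hinj
  have hne : u ≠ v := by rintro rfl; exact h (Reachable.refl _)
  have := @hinj ((gr S).connectedComponentMk u) ((gr S).connectedComponentMk v) (by
    simp only [ConnectedComponent.map_mk, ConnectedComponent.eq]
    apply Adj.reachable
    simp [hne])
  exact h (ConnectedComponent.eq.1 this)

lemma cc_empty : cc (∅ : Finset (Sym2 V)) = Fintype.card V := by
  unfold cc
  rw [← Nat.card_eq_fintype_card]
  symm
  apply Nat.card_eq_of_bijective (gr (∅ : Finset (Sym2 V))).connectedComponentMk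
  constructor
  · intro a b hab
    have := ConnectedComponent.eq.1 hab
    simpa [gr] using this
  · intro x
    exact x.exists_rep

lemma cc_add_ge (S : Finset (Sym2 V)) : Fintype.card V ≤ cc S + S.card := by
  induction S using Finset.induction_on with
  | empty => simp [cc_empty]
  | insert e S he ih =>
    rw [Finset.card_insert_of_notMem he]
    have := cc_insert_le (S := S) e
    omega

lemma cc_le (S : Finset (Sym2 V)) : cc S ≤ Fintype.card V := by
  rw [← cc_empty]; exact cc_anti (by simp)

lemma cc_acyclic (S : Finset (Sym2 V)) (hS : (gr S).IsAcyclic) (hd : ∀ e ∈ S, ¬ e.IsDiag) :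
    cc S + S.card = Fintype.card V := by
  induction S using Finset.induction_on with
  | empty => simp [cc_empty]
  | insert e S he ih =>
    have ih := ih (hS.anti (gr_mono (by simp))) (fun e h => hd e (by simp [h]))
    have hge := cc_add_ge (insert e S)
    rw [Finset.card_insert_of_notMem he] at hge ⊢
    have : cc (insert e S) < cc S := by
      induction e with | h u v
      apply cc_insert_lt
      have hb := isAcyclic_iff_forall_isBridge.1 hS (e := s(u, v)) (by
        simpa using hd s(u, v) (by simp))
      rw [isBridge_iff] at hb
      intro hr
      apply hb
      refine hr.mono ?_
      intro a b hab
      simp only [fromEdgeSet_adj, Finset.mem_coe] at hab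
      simp only [deleteEdges_adj, fromEdgeSet_adj, Finset.coe_insert, Set.mem_insert_iff,
        Finset.mem_coe, Set.mem_singleton_iff]
      exact ⟨⟨Or.inr hab.1, hab.2⟩, fun h => he (h ▸ hab.1)⟩
    omega

lemma cc_not_acyclic (S : Finset (Sym2 V)) (hS : ¬ (gr S).IsAcyclic) :
    Fintype.card V < cc S + S.card := by
  rw [isAcyclic_iff_forall_isBridge] at hS
  push Not at hS
  obtain ⟨e, he, hb⟩ := hS
  induction e with | h u v
  have heS : s(u, v) ∈ S := by
    simp at he; exact he.1
  rw [isBridge_iff, not_not] at hb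
  have h1 : cc (S.erase s(u, v)) ≤ cc (insert s(u, v) (S.erase s(u, v))) := by
    apply cc_insert_reach
    refine hb.mono ?_
    intro a b hab
    simp only [deleteEdges_adj, fromEdgeSet_adj, Finset.mem_coe, Set.mem_singleton_iff] at hab
    simp [hab]
  rw [Finset.insert_erase heS] at h1
  have h2 := cc_add_ge (S.erase s(u, v))
  rw [Finset.card_erase_of_mem heS] at h2
  have := Finset.card_pos.2 ⟨_, heS⟩
  omega

/-! Whitney expansion -/

lemma card_mono (S : Finset (Sym2 V)) (k : ℕ) :
    Nat.card {f : V → Fin k // ∀ a b, s(a, b) ∈ S → f a = f b} = k ^ cc S := by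
  classical
  have := Fintype.ofFinite (gr S).ConnectedComponent
  have e : {f : V → Fin k // ∀ a b, s(a, b) ∈ S → f a = f b} ≃
      ((gr S).ConnectedComponent → Fin k) :=
    { toFun := fun f => fun x => x.lift f.1 (by
        intro v w p _
        induction p with
        | nil => rfl
        | cons h p ih =>
          rename_i hp
          refine (f.2 _ _ ?_).trans (ih hp.of_cons)
          simp at h; exact h.1)
      invFun := fun g => ⟨fun v => g ((gr S).connectedComponentMk v), by
        intro a b hab
        by_cases hne : a = b
        · rw [hne]
        refine congrArg g (ConnectedComponent.eq.2 ?_)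
        apply Adj.reachable
        simp [hab, hne]⟩
      left_inv := fun f => by ext; simp
      right_inv := fun g => by
        ext x
        induction x using ConnectedComponent.ind
        simp }
  rw [Nat.card_congr e, Nat.card_fun, Nat.card_fin]
  rfl

/-- The chromatic polynomial by Whitney's expansion. -/
noncomputable def wpoly (G : SimpleGraph V) [DecidableRel G.Adj] : ℤ[X] :=
  ∑ S ∈ G.edgeFinset.powerset, C ((-1 : ℤ) ^ S.card) * X ^ cc S

/-- The endpoints of `e` get the same color. -/
def monoOn {k : ℕ} (f : V → Fin k) (e : Sym2 V) : Prop := (e.map f).IsDiag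

lemma whitney (G : SimpleGraph V) [DecidableRel G.Adj] (k : ℕ) :
    (G.numColorings k : ℤ) = (wpoly G).eval (k : ℤ) := by
  classical
  have h1 : (G.numColorings k : ℤ) =
      ∑ f : V → Fin k, ∏ e ∈ G.edgeFinset, (1 + (if monoOn f e then (-1 : ℤ) else 0)) := by
    unfold SimpleGraph.numColorings
    rw [Fintype.card_subtype, Finset.card_filter, Nat.cast_sum]
    refine Finset.sum_congr rfl fun f _ => ?_
    split_ifs with hf
    · rw [Finset.prod_eq_one, Nat.cast_one]
      intro e he
      rw [if_neg, add_zero]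
      induction e with | h a b
      simpa [monoOn] using hf a b (by simpa using he)
    · push Not at hf
      obtain ⟨a, b, hab, h⟩ := hf
      symm
      rw [Nat.cast_zero]
      apply Finset.prod_eq_zero (i := s(a, b)) (by simpa using hab)
      rw [if_pos (by simpa [monoOn] using h)]
      norm_num
  rw [h1]
  simp_rw [Finset.prod_one_add]
  rw [Finset.sum_comm, wpoly, eval_finsetSum]
  refine Finset.sum_congr rfl fun S _ => ?_
  simp only [eval_mul, eval_C, eval_pow, eval_X]
  have h2 : ∀ f : V → Fin k, (∏ e ∈ S, (if monoOn f e then (-1 : ℤ) else 0)) =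
      (-1) ^ S.card * (if ∀ a b, s(a, b) ∈ S → f a = f b then 1 else 0) := by
    intro f
    split_ifs with h
    · rw [mul_one, ← Finset.prod_const]
      refine Finset.prod_congr rfl fun e he => ?_
      rw [if_pos]
      induction e with | h a b
      simpa [monoOn] using h a b he
    · push Not at h
      obtain ⟨a, b, hab, h⟩ := h
      rw [mul_zero]
      apply Finset.prod_eq_zero hab
      rw [if_neg]
      simpa [monoOn] using h
  simp_rw [h2]
  rw [← Finset.mul_sum]
  congr 1
  rw [Finset.sum_boole, ← Fintype.card_subtype, ← Nat.card_eq_fintype_card, card_mono]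
  push_cast
  rfl

/-- Coefficients from the top. -/
noncomputable def co (G : SimpleGraph V) [DecidableRel G.Adj] (j : ℕ) : ℤ :=
  ∑ S ∈ G.edgeFinset.powerset with cc S + j = Fintype.card V, (-1 : ℤ) ^ S.card

lemma coeff_wpoly (G : SimpleGraph V) [DecidableRel G.Adj] (i : ℕ) :
    (wpoly G).coeff i = ∑ S ∈ G.edgeFinset.powerset with cc S = i, (-1 : ℤ) ^ S.card := by
  rw [wpoly, finsetSum_coeff, Finset.sum_filter]
  refine Finset.sum_congr rfl fun S _ => ?_
  rw [coeff_C_mul, coeff_X_pow]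
  by_cases h : cc S = i <;> simp [h, eq_comm]
  intro h'; exact absurd h'.symm h

lemma co_eq (G : SimpleGraph V) [DecidableRel G.Adj] (j : ℕ) :
    co G j = if j ≤ Fintype.card V then (wpoly G).coeff (Fintype.card V - j) else 0 := by
  split_ifs with h
  · rw [coeff_wpoly, co]
    congr 1
    apply Finset.filter_congr
    intro S _
    omega
  · rw [co, Finset.sum_eq_zero]
    intro S hS
    simp at hS
    omega

lemma coeff_top (G : SimpleGraph V) [DecidableRel G.Adj] (i : ℕ) (hi : Fintype.card V < i) :
    (wpoly G).coeff i = 0 := by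
  rw [coeff_wpoly, Finset.sum_eq_zero]
  intro S hS
  simp at hS
  have := cc_le S
  omega

/-- Number of cyclic edge sets of size `j`. -/
noncomputable def nc (G : SimpleGraph V) [DecidableRel G.Adj] (j : ℕ) : ℕ :=
  by classical exact
  (G.edgeFinset.powerset.filter fun S => S.card = j ∧ ¬ (gr S).IsAcyclic).card

lemma gr_le (G : SimpleGraph V) [DecidableRel G.Adj] {S : Finset (Sym2 V)}
    (hS : S ⊆ G.edgeFinset) : gr S ≤ G := by
  intro a b hab
  simp only [fromEdgeSet_adj, Finset.mem_coe] at hab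
  simpa using hS hab.1

lemma cycle_edges (G : SimpleGraph V) [DecidableRel G.Adj] {S : Finset (Sym2 V)}
    (hS : S ⊆ G.edgeFinset) {j : ℕ} (hj : (j : ℕ∞) ≤ G.egirth) (hc : S.card ≤ j)
    {a : V} (w : (gr S).Walk a a) (hw : w.IsCycle) :
    w.edges.toFinset = S ∧ w.length = j ∧ S.card = j := by
  have h1 : G.egirth ≤ w.length := by
    have := egirth_le_length (hw.mapLe (gr_le G hS))
    simpa using this
  have h2 : j ≤ w.length := by exact_mod_cast hj.trans h1
  have h3 : w.edges.toFinset ⊆ S := by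
    intro e he
    have := w.edges_subset_edgeSet (by simpa using he)
    simp at this; exact this.1
  have h4 : w.edges.toFinset.card = w.length := by
    rw [List.toFinset_card_of_nodup hw.edges_nodup, Walk.length_edges]
  have h5 := Finset.card_le_card h3
  exact ⟨Finset.eq_of_subset_of_card_le h3 (by omega), by omega, by omega⟩

lemma exists_cycle {S : Finset (Sym2 V)} (h : ¬ (gr S).IsAcyclic) :
    ∃ (a : V) (w : (gr S).Walk a a), w.IsCycle := by
  unfold IsAcyclic at h
  push Not at h
  exact h

lemma acyclic_of_lt (G : SimpleGraph V) [DecidableRel G.Adj] {S : Finset (Sym2 V)}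
    (hS : S ⊆ G.edgeFinset) {j : ℕ} (hj : (j : ℕ∞) ≤ G.egirth) (hc : S.card < j) :
    (gr S).IsAcyclic := by
  by_contra h
  obtain ⟨a, w, hw⟩ := exists_cycle h
  have := (cycle_edges G hS hj hc.le w hw).2.2
  omega

lemma even_deg (G : SimpleGraph V) [DecidableRel G.Adj] {S : Finset (Sym2 V)}
    (hS : S ⊆ G.edgeFinset) {j : ℕ} (hj : (j : ℕ∞) ≤ G.egirth) (hc : S.card = j)
    (h : ¬ (gr S).IsAcyclic) (x : V) : Even (S.filter fun e => x ∈ e).card := by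
  obtain ⟨a, w, hw⟩ := exists_cycle h
  have h1 := (cycle_edges G hS hj hc.le w hw).1
  have h2 := (hw.isTrail.even_countP_edges_iff x).2 (by simp)
  have h3 : (w.edges.toFinset.filter fun e => x ∈ e) =
      (w.edges.filter fun e => decide (x ∈ e)).toFinset := by ext; simp
  rw [← h1, h3, List.toFinset_card_of_nodup (hw.edges_nodup.filter _),
    ← List.countP_eq_length_filter]
  exact h2

lemma notDiag (G : SimpleGraph V) [DecidableRel G.Adj] {S : Finset (Sym2 V)}
    (hS : S ⊆ G.edgeFinset) : ∀ e ∈ S, ¬ e.IsDiag := fun e he =>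
  G.not_isDiag_of_mem_edgeSet (by simpa using hS he)

/-- An edge set with two more elements than `j` has rank bigger than `j`. -/
lemma rank_big (G : SimpleGraph V) [DecidableRel G.Adj] {S : Finset (Sym2 V)}
    (hS : S ⊆ G.edgeFinset) {j : ℕ} (hj : ((j + 1 : ℕ) : ℕ∞) ≤ G.egirth) (hc : j + 2 ≤ S.card)
    (hr : cc S + j = Fintype.card V) : False := by
  obtain ⟨T, hTS, hT⟩ := Finset.exists_subset_card_eq hc
  have hsub : ∀ e ∈ T, ∀ x : V, Even ((T.erase e).filter fun e => x ∈ e).card := by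
    intro e he x
    have hsS : T.erase e ⊆ S := (Finset.erase_subset _ _).trans hTS
    have hcard : (T.erase e).card = j + 1 := by rw [Finset.card_erase_of_mem he]; omega
    apply even_deg G (hsS.trans hS) hj hcard
    intro hac
    have h1 := cc_acyclic _ hac (notDiag G (hsS.trans hS))
    have h2 := cc_anti hsS
    omega
  obtain ⟨e, he, f, hf, hne⟩ := Finset.one_lt_card.1 (show 1 < T.card by omega)
  have key : ∀ x : V, x ∈ e → x ∈ f := by
    intro x hx
    by_contra hxf
    have h1 := hsub e he x
    have h2 := hsub f hf x
    rw [Finset.filter_erase, Finset.card_erase_of_mem (by simp [he, hx])] at h1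
    rw [Finset.filter_erase, Finset.erase_eq_of_notMem (by simp [hxf])] at h2
    have : 0 < (T.filter fun e => x ∈ e).card := Finset.card_pos.2 ⟨e, by simp [he, hx]⟩
    obtain ⟨a, ha⟩ := h1
    obtain ⟨b, hb⟩ := h2
    omega
  have hd := notDiag G hS e (hTS he)
  induction e with | h u v
  have huv : u ≠ v := by simpa using hd
  exact hne ((Sym2.mem_and_mem_iff huv).1 ⟨key u (by simp), key v (by simp)⟩).symm

lemma co_formula (G : SimpleGraph V) [DecidableRel G.Adj] {j : ℕ}
    (hj : ((j + 1 : ℕ) : ℕ∞) ≤ G.egirth) :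
    co G j = (-1) ^ j * ((G.edgeFinset.card.choose j : ℤ) - nc G (j + 1)) := by
  classical
  have hset : (G.edgeFinset.powerset.filter fun S => cc S + j = Fintype.card V) =
      G.edgeFinset.powersetCard j ∪
      (G.edgeFinset.powerset.filter fun S => S.card = j + 1 ∧ ¬ (gr S).IsAcyclic) := by
    ext S
    simp only [Finset.mem_filter, Finset.mem_powerset, Finset.mem_union, Finset.mem_powersetCard]
    constructor
    · rintro ⟨hS, hr⟩
      have h1 := cc_add_ge S
      have h2 : S.card < j + 2 := by
        by_contra h
        exact rank_big G hS hj (by omega) hr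
      by_cases h3 : S.card = j
      · exact Or.inl ⟨hS, h3⟩
      · refine Or.inr ⟨hS, by omega, fun hac => ?_⟩
        have := cc_acyclic S hac (notDiag G hS)
        omega
    · rintro (⟨hS, hc⟩ | ⟨hS, hc, hac⟩)
      · refine ⟨hS, ?_⟩
        rw [← hc]
        exact cc_acyclic S (acyclic_of_lt G hS hj (by omega)) (notDiag G hS)
      · refine ⟨hS, ?_⟩
        have h1 := cc_not_acyclic S hac
        obtain ⟨e, he⟩ := Finset.card_pos.1 (show 0 < S.card by omega)
        have hsub := (Finset.erase_subset e S)
        have hcard : (S.erase e).card = j := by rw [Finset.card_erase_of_mem he]; omega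
        have h2 := cc_acyclic (S.erase e)
          (acyclic_of_lt G (hsub.trans hS) hj (by omega)) (notDiag G (hsub.trans hS))
        have h3 := cc_anti hsub
        omega
  rw [co, hset, Finset.sum_union]
  · rw [Finset.sum_congr rfl (g := fun _ => (-1 : ℤ) ^ j),
      Finset.sum_congr (s₁ := Finset.filter _ _) rfl (g := fun _ => (-1 : ℤ) ^ (j + 1))]
    · rw [Finset.sum_const, Finset.sum_const, Finset.card_powersetCard, nc]
      simp only [nsmul_eq_mul]
      ring
    · intro S hS
      simp only [Finset.mem_filter] at hS
      rw [hS.2.1]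
    · intro S hS
      rw [(Finset.mem_powersetCard.1 hS).2]
  · rw [Finset.disjoint_left]
    intro S h1 h2
    simp only [Finset.mem_filter] at h2
    have := (Finset.mem_powersetCard.1 h1).2
    omega

lemma nc_zero (G : SimpleGraph V) [DecidableRel G.Adj] {j : ℕ}
    (hj : ((j + 1 : ℕ) : ℕ∞) ≤ G.egirth) : nc G j = 0 := by
  classical
  rw [nc, Finset.card_eq_zero, Finset.filter_eq_empty_iff]
  rintro S hS ⟨h1, h2⟩
  exact h2 (acyclic_of_lt G (by simpa using hS) hj (by omega))

lemma nc_pos (G : SimpleGraph V) [DecidableRel G.Adj] {j : ℕ}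
    (hj : (j : ℕ∞) = G.egirth) : 0 < nc G j := by
  classical
  have hac : ¬ G.IsAcyclic := by rw [← egirth_eq_top, ← hj]; simp
  obtain ⟨a, w, hw, hl⟩ := exists_egirth_eq_length.2 hac
  rw [← hj] at hl
  have hl : j = w.length := by exact_mod_cast hl
  rw [nc, Finset.card_pos]
  refine ⟨w.edges.toFinset, ?_⟩
  simp only [Finset.mem_filter, Finset.mem_powerset]
  refine ⟨?_, ?_, ?_⟩
  · intro e he
    simpa using w.edges_subset_edgeSet (by simpa using he)
  · rw [List.toFinset_card_of_nodup hw.edges_nodup, Walk.length_edges, hl]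
  · intro h
    have hed : ∀ e ∈ w.edges, e ∈ (gr w.edges.toFinset).edgeSet := by
      intro e he
      have := G.not_isDiag_of_mem_edgeSet (w.edges_subset_edgeSet he)
      simp [he, this]
    exact h _ (hw.transfer hed)

lemma tri_filter (G : SimpleGraph V) [DecidableRel G.Adj] {a b c : V}
    (hab : G.Adj a b) (hac : G.Adj a c) (hbc : G.Adj b c) :
    (G.edgeFinset.filter fun e => ∀ x ∈ e, x ∈ ({a, b, c} : Finset V)) =
      {s(a, b), s(a, c), s(b, c)} := by
  ext e
  induction e with | h u v
  simp only [Finset.mem_filter, mem_edgeFinset, mem_edgeSet, Sym2.mem_iff, Finset.mem_insert,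
    Finset.mem_singleton, forall_eq_or_imp, forall_eq, Sym2.eq_iff]
  have := hab.symm
  have := hac.symm
  have := hbc.symm
  constructor
  · rintro ⟨h, rfl | rfl | rfl, rfl | rfl | rfl⟩ <;> simp at h ⊢
  · rintro ((⟨rfl, rfl⟩ | ⟨rfl, rfl⟩) | (⟨rfl, rfl⟩ | ⟨rfl, rfl⟩) | (⟨rfl, rfl⟩ | ⟨rfl, rfl⟩)) <;>
      simp [*]

lemma tri_card {a b c : V} (hab : a ≠ b) (hac : a ≠ c) (hbc : b ≠ c) :
    ({s(a, b), s(a, c), s(b, c)} : Finset (Sym2 V)).card = 3 := by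
  rw [Finset.card_eq_three]
  refine ⟨_, _, _, ?_, ?_, ?_, rfl⟩ <;> simp [hab, hac, hbc, hab.symm, hac.symm, hbc.symm]

lemma nc_three (G : SimpleGraph V) [DecidableRel G.Adj] :
    nc G 3 = (G.cliqueFinset 3).card := by
  classical
  rw [nc]
  symm
  apply Finset.card_bij (fun t _ => G.edgeFinset.filter fun e => ∀ x ∈ e, x ∈ t)
  · intro t ht
    rw [mem_cliqueFinset_iff, is3Clique_iff] at ht
    obtain ⟨a, b, c, hab, hac, hbc, rfl⟩ := ht
    simp only [Finset.mem_filter, Finset.mem_powerset]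
    refine ⟨Finset.filter_subset _ _, ?_, ?_⟩
    · rw [tri_filter G hab hac hbc, tri_card hab.ne hac.ne hbc.ne]
    · rw [tri_filter G hab hac hbc]
      intro h
      refine h.cliqueFree (n := 3) le_rfl {a, b, c} (is3Clique_triple_iff.2 ?_)
      simp [hab.ne, hac.ne, hbc.ne]
  · have key : ∀ t ∈ G.cliqueFinset 3, ∀ x, x ∈ t ↔
        ∃ e ∈ (G.edgeFinset.filter fun e => ∀ x ∈ e, x ∈ t), x ∈ e := by
      intro t ht x
      rw [mem_cliqueFinset_iff, is3Clique_iff] at ht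
      obtain ⟨a, b, c, hab, hac, hbc, rfl⟩ := ht
      rw [tri_filter G hab hac hbc]
      simp
      tauto
    intro t ht t' ht' h
    ext x
    rw [key t ht, key t' ht']
    rw [h]
  · intro S hS
    simp only [Finset.mem_filter, Finset.mem_powerset] at hS
    obtain ⟨hS, hc, hac⟩ := hS
    obtain ⟨a, w, hw⟩ := exists_cycle hac
    have hl := (cycle_edges G hS (j := 3) (by exact_mod_cast three_le_egirth) hc.le w hw).2.1
    obtain ⟨t, ht⟩ := is3Clique_iff_exists_cycle_length_three.2 ⟨a, w, hw, hl⟩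
    rw [is3Clique_iff] at ht
    obtain ⟨a, b, c, hab, hac, hbc, rfl⟩ := ht
    have h1 := gr_le G hS hab
    have h2 := gr_le G hS hac
    have h3 := gr_le G hS hbc
    refine ⟨{a, b, c}, ?_, ?_⟩
    · rw [mem_cliqueFinset_iff, is3Clique_triple_iff]
      exact ⟨h1, h2, h3⟩
    · rw [tri_filter G h1 h2 h3]
      apply Finset.eq_of_subset_of_card_le
      · simp only [fromEdgeSet_adj, Finset.mem_coe] at hab hac hbc
        intro e he
        simp only [Finset.mem_insert, Finset.mem_singleton] at he
        rcases he with rfl | rfl | rfl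
        · exact hab.1
        · exact hac.1
        · exact hbc.1
      · rw [tri_card h1.ne h2.ne h3.ne, hc]

section two

variable {W : Type*} [Fintype W] [DecidableEq W]
    (G : SimpleGraph V) [DecidableRel G.Adj] (H : SimpleGraph W) [DecidableRel H.Adj]

lemma wpoly_eq (h : ∀ k : ℕ, G.numColorings k = H.numColorings k) : wpoly G = wpoly H := by
  apply Polynomial.eq_of_infinite_eval_eq
  refine (Set.infinite_range_of_injective (f := fun k : ℕ => (k : ℤ)) Nat.cast_injective).mono ?_
  rintro _ ⟨k, rfl⟩
  simp only [Set.mem_ofPred_eq]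
  rw [← whitney, ← whitney, h]

lemma co_zero : co G 0 = 1 := by
  have h : ((1 : ℕ) : ℕ∞) ≤ G.egirth := le_trans (by norm_num) three_le_egirth
  have h' : ((2 : ℕ) : ℕ∞) ≤ G.egirth := le_trans (by norm_num) three_le_egirth
  rw [co_formula G h, nc_zero G h']
  simp

lemma card_le (h : wpoly G = wpoly H) : Fintype.card V ≤ Fintype.card W := by
  by_contra! hlt
  have h1 := coeff_top H _ hlt
  have h2 := co_zero G
  rw [co_eq, if_pos (by simp), Nat.sub_zero, h, h1] at h2
  norm_num at h2

lemma egirth_ge (hco : ∀ j, co G j = co H j) (he : G.edgeFinset.card = H.edgeFinset.card) :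
    H.egirth ≤ G.egirth := by
  by_contra! hlt
  obtain ⟨g, hg⟩ := ENat.ne_top_iff_exists.1 hlt.ne_top
  have h3 : 3 ≤ g := by
    have := three_le_egirth (G := G)
    rw [← hg] at this
    exact_mod_cast this
  obtain ⟨j, rfl⟩ : ∃ j, g = j + 1 := ⟨g - 1, by omega⟩
  have hH : ((j + 1 + 1 : ℕ) : ℕ∞) ≤ H.egirth := by
    rw [← hg] at hlt
    push_cast at hlt ⊢
    exact Order.add_one_le_of_lt hlt
  have h1 := co_formula G hg.le
  have h2 := co_formula H (hg.le.trans hlt.le)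
  rw [hco, h2, nc_zero H hH, he] at h1
  have h4 := nc_pos G hg
  have h5 := mul_left_cancel₀ (pow_ne_zero j (by norm_num)) h1
  omega

end two

end ChromAux

theorem chromaticPolynomial_determines {V W : Type*} [Fintype V] [DecidableEq V]
    [Fintype W] [DecidableEq W]
    (G : SimpleGraph V) [DecidableRel G.Adj] (H : SimpleGraph W) [DecidableRel H.Adj]
    (hG : G.Connected) (hH : H.Connected)
    (hPoly : ∀ k : ℕ, G.numColorings k = H.numColorings k) :
    Fintype.card V = Fintype.card W ∧
    G.edgeFinset.card = H.edgeFinset.card ∧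
    (G.cliqueFinset 3).card = (H.cliqueFinset 3).card ∧
    (¬ G.IsAcyclic ↔ ¬ H.IsAcyclic) ∧
    (¬ G.IsAcyclic → G.girth = H.girth) := by
  have hw := ChromAux.wpoly_eq G H hPoly
  have hn : Fintype.card V = Fintype.card W :=
    le_antisymm (ChromAux.card_le G H hw) (ChromAux.card_le H G hw.symm)
  have hco : ∀ j, ChromAux.co G j = ChromAux.co H j := by
    intro j
    rw [ChromAux.co_eq, ChromAux.co_eq, hw, hn]
  have g2 : ((1 + 1 : ℕ) : ℕ∞) ≤ G.egirth :=
    le_trans (by norm_num) SimpleGraph.three_le_egirth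
  have h2 : ((1 + 1 : ℕ) : ℕ∞) ≤ H.egirth :=
    le_trans (by norm_num) SimpleGraph.three_le_egirth
  have g3 : ((2 + 1 : ℕ) : ℕ∞) ≤ G.egirth := by exact_mod_cast SimpleGraph.three_le_egirth
  have h3 : ((2 + 1 : ℕ) : ℕ∞) ≤ H.egirth := by exact_mod_cast SimpleGraph.three_le_egirth
  have he : G.edgeFinset.card = H.edgeFinset.card := by
    have := hco 1
    rw [ChromAux.co_formula G g2, ChromAux.co_formula H h2, ChromAux.nc_zero G g3,
      ChromAux.nc_zero H h3] at this
    simpa using this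
  have ht : (G.cliqueFinset 3).card = (H.cliqueFinset 3).card := by
    have := hco 2
    rw [ChromAux.co_formula G g3, ChromAux.co_formula H h3, ChromAux.nc_three,
      ChromAux.nc_three, he] at this
    simpa using this
  have hg : G.egirth = H.egirth :=
    le_antisymm (ChromAux.egirth_ge H G (fun j => (hco j).symm) he.symm)
      (ChromAux.egirth_ge G H hco he)
  refine ⟨hn, he, ht, ?_, fun _ => ?_⟩
  · rw [← SimpleGraph.egirth_eq_top, ← SimpleGraph.egirth_eq_top, hg]
  · rw [SimpleGraph.girth, SimpleGraph.girth, hg]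
end
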